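/- arXiv:math/0009183 — 3 statements merged into one kernel-verified Lean document; each statement's English description precedes it below -/
import Mathlib

section
/- Let V be a representation of the Yangian Y(gl_n). For any indices a, b, c_1,…,c_l, d_1,…,d_l ∈ {1,…,n} the following identity of End(V)-valued formal series in u^{−1} and v^{−1} holds: (u−v)[t_{ab}(u), t^{c_1⋯c_l}_{d_1⋯d_l}(v)] = Σ_{i=1}^l t_{c_i b}(u) · t^{c_1⋯ a ⋯ c_l}_{d_1⋯d_l}(v) − Σ_{i=1}^l t^{c_1⋯c_l}_{d_1⋯ b ⋯ d_l}(v) · t_{a d_i}(u), where in the i-th summand of the first sum the upper index c_i of the quantum minor is replaced by a, and in the i-th summand of the second sum the lower index d_i is replaced by b. -/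
/-- A representation of the Yangian `Y(gl_n)` on a complex vector space `V`:
a family of operators `T r i j` (`r ≥ 1`), with `T 0 i j = δ_{ij}·id`,
satisfying the defining relations
`[T^{(r+1)}_{ij}, T^{(s)}_{kl}] − [T^{(r)}_{ij}, T^{(s+1)}_{kl}]
  = T^{(r)}_{kj} T^{(s)}_{il} − T^{(s)}_{kj} T^{(r)}_{il}`. -/
def IsYangianRep (n : ℕ) {V : Type*} [AddCommGroup V] [Module ℂ V]
    (T : ℕ → Fin n → Fin n → (V →ₗ[ℂ] V)) : Prop :=
  (∀ i j : Fin n, T 0 i j = if i = j then LinearMap.id else 0) ∧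
  (∀ r s : ℕ, ∀ i j k l : Fin n,
    (T (r + 1) i j ∘ₗ T s k l - T s k l ∘ₗ T (r + 1) i j)
      - (T r i j ∘ₗ T (s + 1) k l - T (s + 1) k l ∘ₗ T r i j)
    = T r k j ∘ₗ T s i l - T s k j ∘ₗ T r i l)

/-- Coefficients of the series `f(u − c)`, where `f(u) = Σ_r f_r u^{−r}` has
coefficients `f : ℕ → End(V)`: substitution is performed coefficientwise via
`(u−c)^{−r} = Σ_m (binom (m−1) (m−r)) c^{m−r} u^{−m}`. -/
noncomputable def shiftSer {V : Type*} [AddCommGroup V] [Module ℂ V]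
    (c : ℂ) (f : ℕ → (V →ₗ[ℂ] V)) : ℕ → (V →ₗ[ℂ] V) :=
  fun m => ∑ r ∈ Finset.range (m + 1),
    (((m - 1).choose (m - r) : ℂ) * c ^ (m - r)) • f r

/-- Cauchy product of two `End(V)`-valued series in `u⁻¹`. -/
noncomputable def mulSer {V : Type*} [AddCommGroup V] [Module ℂ V]
    (f g : ℕ → (V →ₗ[ℂ] V)) : ℕ → (V →ₗ[ℂ] V) :=
  fun m => ∑ r ∈ Finset.range (m + 1), f r ∘ₗ g (m - r)

/-- Product of a list of `End(V)`-valued series in `u⁻¹` (in the given order). -/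
noncomputable def prodSer {V : Type*} [AddCommGroup V] [Module ℂ V] :
    List (ℕ → (V →ₗ[ℂ] V)) → ℕ → (V →ₗ[ℂ] V)
  | [] => fun m => if m = 0 then LinearMap.id else 0
  | f :: rest => mulSer f (prodSer rest)

/-- The quantum minor `t^{a_1⋯a_l}_{b_1⋯b_l}(u)
= Σ_{σ ∈ S_l} sgn σ · t_{a_{σ(1)} b_1}(u) t_{a_{σ(2)} b_2}(u−1) ⋯
t_{a_{σ(l)} b_l}(u−l+1)`, as an `End(V)`-valued series in `u⁻¹` given by its
coefficients. -/
noncomputable def qminorSer {n : ℕ} {V : Type*} [AddCommGroup V] [Module ℂ V]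
    (T : ℕ → Fin n → Fin n → (V →ₗ[ℂ] V)) (l : ℕ) (a b : Fin l → Fin n) :
    ℕ → (V →ₗ[ℂ] V) :=
  fun m => ∑ σ : Equiv.Perm (Fin l),
    (((Equiv.Perm.sign σ : ℤ) : ℂ)) •
      prodSer (List.ofFn fun s : Fin l =>
        shiftSer ((s : ℕ) : ℂ) fun r => T r (a (σ s)) (b s)) m

/-- ordered product of matrix entries. -/
def ywd {I B : Type*} [Ring B] (t : ℕ → I → I → B) :
    (l : ℕ) → ℕ → (Fin l → I) → (Fin l → I) → B
  | 0, _, _, _ => 1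
  | l + 1, s, c, d => t s (c 0) (d 0) * ywd t l (s + 1) (c ∘ Fin.succ) (d ∘ Fin.succ)

/-- abstract quantum minor. -/
def yqm {I B : Type*} [Ring B] (t : ℕ → I → I → B) (l s : ℕ) (c d : Fin l → I) : B :=
  ∑ σ : Equiv.Perm (Fin l), (Equiv.Perm.sign σ : ℤ) • ywd t l s (c ∘ σ) d

theorem yqm_upper {I B : Type*} [Ring B] (t : ℕ → I → I → B) (l s : ℕ) (c d : Fin l → I)
    (τ : Equiv.Perm (Fin l)) :
    yqm t l s (c ∘ τ) d = (Equiv.Perm.sign τ : ℤ) • yqm t l s c d := by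
  unfold yqm
  rw [Finset.smul_sum]
  refine Fintype.sum_equiv (Equiv.mulLeft τ) _ _ fun σ => ?_
  have : (Equiv.Perm.sign τ : ℤ) * (Equiv.Perm.sign τ : ℤ) = 1 := by
    rw [← Units.val_mul, Int.units_mul_self]; rfl
  simp only [Equiv.coe_mulLeft, Equiv.Perm.sign_mul, smul_smul, Units.val_mul, ← mul_assoc, this,
    one_mul]
  rfl

theorem ywd_adj {I B : Type*} [Ring B] (t : ℕ → I → I → B)
    (h2 : ∀ s i j k l, t s i j * t (s+1) k l - t (s+1) k l * t s i j
      = t s k j * t (s+1) i l - t (s+1) k j * t s i l) (l : ℕ) :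
    ∀ (s : ℕ) (c d : Fin (l+1) → I) (i : Fin l),
      ywd t (l+1) s c d - ywd t (l+1) s (c ∘ Equiv.swap i.castSucc i.succ) d
      + (ywd t (l+1) s c (d ∘ Equiv.swap i.castSucc i.succ)
        - ywd t (l+1) s (c ∘ Equiv.swap i.castSucc i.succ)
            (d ∘ Equiv.swap i.castSucc i.succ)) = 0 := by
  induction l with
  | zero => intro s c d i; exact i.elim0
  | succ l ih =>
    intro s c d i
    refine Fin.cases ?_ (fun i => ?_) i
    · have e1 : ∀ f : Fin (l+2) → I,
        (f ∘ Equiv.swap (Fin.castSucc (0 : Fin (l+1))) (Fin.succ 0)) ∘ Fin.succ ∘ Fin.succ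
          = f ∘ Fin.succ ∘ Fin.succ := by
        intro f; funext x
        simp only [Function.comp]
        rw [Equiv.swap_apply_of_ne_of_ne]
        · simp [Fin.ext_iff]
        · simp [Fin.ext_iff]
      have e0 : ∀ f : Fin (l+2) → I,
        (f ∘ Equiv.swap (Fin.castSucc (0 : Fin (l+1))) (Fin.succ 0)) 0 = f (Fin.succ 0) := by
        intro f
        have : (0 : Fin (l+2)) = Fin.castSucc (0 : Fin (l+1)) := rfl
        simp only [Function.comp]; rw [this, Equiv.swap_apply_left]
      have e2 : ∀ f : Fin (l+2) → I,
        (f ∘ Equiv.swap (Fin.castSucc (0 : Fin (l+1))) (Fin.succ 0)) (Fin.succ 0) = f 0 := by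
        intro f
        simp only [Function.comp]; rw [Equiv.swap_apply_right]; rfl
      have key : ∀ c d : Fin (l+2) → I, ywd t (l+2) s c d = t s (c 0) (d 0) *
          t (s+1) (c (Fin.succ 0)) (d (Fin.succ 0)) *
          ywd t l (s+1+1) (c ∘ Fin.succ ∘ Fin.succ) (d ∘ Fin.succ ∘ Fin.succ) := by
        intro c d
        rw [mul_assoc]; rfl
      simp only [key, e1, e0, e2]
      rw [← sub_mul, ← sub_mul, ← add_mul]
      have ha := h2 s (c 0) (d 0) (c (Fin.succ 0)) (d (Fin.succ 0))
      have hb := h2 s (c 0) (d (Fin.succ 0)) (c (Fin.succ 0)) (d 0)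
      have : ∀ p q r x y z u v : B, p - q = r - x → y - x = v - q → p - r + (y - v) = 0 := by
        intro p q r x y z u v h1 h2
        have h3 : p = r - x + q := by rw [← h1]; abel
        have h4 : y = v - q + x := by rw [← h2]; abel
        rw [h3, h4]; abel
      rw [this _ _ _ _ _ 0 0 _ ha hb, zero_mul]
    · have e0 : ∀ f : Fin (l+2) → I,
        (f ∘ Equiv.swap (Fin.castSucc (Fin.succ i)) (Fin.succ (Fin.succ i))) 0 = f 0 := by
        intro f
        simp only [Function.comp]
        rw [Equiv.swap_apply_of_ne_of_ne]
        · simp [Fin.ext_iff]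
        · simp [Fin.ext_iff]
      have e1 : ∀ f : Fin (l+2) → I,
        (f ∘ Equiv.swap (Fin.castSucc (Fin.succ i)) (Fin.succ (Fin.succ i))) ∘ Fin.succ
          = (f ∘ Fin.succ) ∘ Equiv.swap (Fin.castSucc i) (Fin.succ i) := by
        intro f; funext x
        simp only [Function.comp]
        rw [← Fin.succ_castSucc, (Fin.succ_injective _).swap_apply]
      have key : ∀ c d : Fin (l+2) → I, ywd t (l+2) s c d = t s (c 0) (d 0) *
          ywd t (l+1) (s+1) (c ∘ Fin.succ) (d ∘ Fin.succ) := by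
        intro c d; rfl
      simp only [key, e1, e0]
      rw [← mul_sub, ← mul_sub, ← mul_add, ih, mul_zero]

theorem yqm_lower_adj {I B : Type*} [Ring B] (htf : ∀ (n : ℕ) (x : B), n ≠ 0 → n • x = 0 → x = 0)
    (t : ℕ → I → I → B)
    (h2 : ∀ s i j k l, t s i j * t (s+1) k l - t (s+1) k l * t s i j
      = t s k j * t (s+1) i l - t (s+1) k j * t s i l) (l s : ℕ) (c d : Fin (l+1) → I) (i : Fin l) :
    yqm t (l+1) s c (d ∘ Equiv.swap i.castSucc i.succ) = - yqm t (l+1) s c d := by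
  have hne : i.castSucc ≠ i.succ := by simp [Fin.ext_iff]
  have hs : ∀ d, yqm t (l+1) s c d = ∑ σ : Equiv.Perm (Fin (l+1)), (Equiv.Perm.sign σ : ℤ) •
      - ywd t (l+1) s ((c ∘ σ) ∘ Equiv.swap i.castSucc i.succ) d := by
    intro d
    refine Fintype.sum_equiv (Equiv.mulRight (Equiv.swap i.castSucc i.succ)) _ _ fun σ => ?_
    rw [Equiv.coe_mulRight, Equiv.Perm.sign_mul, Equiv.Perm.sign_swap hne]
    have : (c ∘ ⇑(σ * Equiv.swap i.castSucc i.succ)) ∘ Equiv.swap i.castSucc i.succ = c ∘ σ := by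
      funext x; simp
    rw [this]
    simp
  rw [eq_neg_iff_add_eq_zero]
  refine htf 2 _ two_ne_zero ?_
  have : (2 : ℕ) • (yqm t (l+1) s c (d ∘ Equiv.swap i.castSucc i.succ) + yqm t (l+1) s c d)
    = (yqm t (l+1) s c d + yqm t (l+1) s c d) +
      (yqm t (l+1) s c (d ∘ Equiv.swap i.castSucc i.succ)
        + yqm t (l+1) s c (d ∘ Equiv.swap i.castSucc i.succ)) := by rw [two_nsmul]; abel
  rw [this]
  nth_rewrite 2 [hs d]
  nth_rewrite 2 [hs (d ∘ _)]
  unfold yqm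
  rw [← Finset.sum_add_distrib, ← Finset.sum_add_distrib, ← Finset.sum_add_distrib]
  refine Finset.sum_eq_zero fun σ _ => ?_
  rw [← smul_add, ← smul_add, ← smul_add]
  simp only [← sub_eq_add_neg]
  rw [ywd_adj t h2, smul_zero]

theorem yqm_lower {I B : Type*} [Ring B] (htf : ∀ (n : ℕ) (x : B), n ≠ 0 → n • x = 0 → x = 0)
    (t : ℕ → I → I → B)
    (h2 : ∀ s i j k l, t s i j * t (s+1) k l - t (s+1) k l * t s i j
      = t s k j * t (s+1) i l - t (s+1) k j * t s i l) (l s : ℕ) (c : Fin (l+1) → I)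
      (τ : Equiv.Perm (Fin (l+1))) :
    ∀ d : Fin (l+1) → I,
    yqm t (l+1) s c (d ∘ τ) = (Equiv.Perm.sign τ : ℤ) • yqm t (l+1) s c d := by
  have hm : τ ∈ Submonoid.closure (Set.range fun i : Fin l => Equiv.swap i.castSucc i.succ) := by
    rw [Equiv.Perm.mclosure_swap_castSucc_succ]; trivial
  induction hm using Submonoid.closure_induction with
  | mem x hx =>
    obtain ⟨i, rfl⟩ := hx
    intro d
    have hne : i.castSucc ≠ i.succ := by simp [Fin.ext_iff]
    simp only []
    rw [yqm_lower_adj htf t h2, Equiv.Perm.sign_swap hne]; simp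
  | one => intro d; simp
  | mul x y _ _ hx hy =>
    intro d
    rw [Equiv.Perm.coe_mul, ← Function.comp_assoc, hy, hx, Equiv.Perm.sign_mul, smul_smul, mul_comm]
    rfl

/-- half-symmetrised word. -/
def yW {I B : Type*} [Ring B] (t : ℕ → I → I → B) (l s : ℕ) (c d : Fin (l+1) → I) : B :=
  t s (c 0) (d 0) * yqm t l (s+1) (c ∘ Fin.succ) (d ∘ Fin.succ)

theorem yqm_avg {I B : Type*} [Ring B] (t : ℕ → I → I → B) (l s : ℕ) (c d : Fin (l+1) → I) :
    l.factorial • yqm t (l+1) s c d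
      = ∑ σ : Equiv.Perm (Fin (l+1)), (Equiv.Perm.sign σ : ℤ) • yW t l s (c ∘ σ) d := by
  have h : ∀ τ : Equiv.Perm (Fin l), yqm t (l+1) s c d =
      ∑ σ : Equiv.Perm (Fin (l+1)), (Equiv.Perm.sign σ : ℤ) • (t s ((c ∘ σ) 0) (d 0) *
        ((Equiv.Perm.sign τ : ℤ) • ywd t l (s+1) ((c ∘ σ) ∘ Fin.succ ∘ τ) (d ∘ Fin.succ))) := by
    intro τ
    unfold yqm
    symm
    refine Fintype.sum_equiv (Equiv.mulRight (Equiv.Perm.decomposeFin.symm (0, τ))) _ _ fun σ => ?_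
    rw [Equiv.coe_mulRight, Equiv.Perm.sign_mul, Equiv.Perm.decomposeFin.symm_sign]
    simp only [ywd, if_true, one_mul, Units.val_mul, mul_smul, mul_smul_comm]
    congr 3
  simp only [yW]
  have hc : l.factorial • yqm t (l+1) s c d = ∑ τ : Equiv.Perm (Fin l), yqm t (l+1) s c d := by
    simp [Fintype.card_perm]
  rw [hc, Finset.sum_congr rfl fun τ _ => h τ, Finset.sum_comm]
  refine Finset.sum_congr rfl fun σ _ => ?_
  rw [← Finset.smul_sum, ← Finset.mul_sum]
  rfl

theorem yW_comm {I B Z : Type*} [Ring B] [CommRing Z] [Algebra Z B] (t : ℕ → I → I → B)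
    (g : I → I → B) (K e : Z) (l s : ℕ)
    (h1 : ∀ i j k m, K • (g i j * t s k m - t s k m * g i j)
      = e • (g k j * t s i m - t s k j * g i m))
    (h3 : ∀ a b (c d : Fin l → I), (K + e) • (g a b * yqm t l (s+1) c d - yqm t l (s+1) c d * g a b)
      = e • (∑ i, g (c i) b * yqm t l (s+1) (Function.update c i a) d
        - ∑ i, yqm t l (s+1) c (Function.update d i b) * g a (d i)))
    (a b : I) (c d : Fin (l+1) → I) :
    (K + e) • K • (g a b * yW t l s c d - yW t l s c d * g a b)
     = ((K + e) * e) • (g (c 0) b * yW t l s (Function.update c 0 a) d)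
      - ((K + e) * e) • (yW t l s c (Function.update d 0 b) * g a (d 0))
      + (K * e) • (∑ i : Fin l, g (c i.succ) b * yW t l s (Function.update c i.succ a) d)
      - (e * e) • (∑ i : Fin l, g (c 0) b *
          yW t l s (Function.update c 0 a ∘ Equiv.swap 0 i.succ) d)
      + (e * e) • (∑ i : Fin l,
          yW t l s c (Function.update d i.succ b ∘ Equiv.swap 0 i.succ) * g a (d i.succ))
      - (K * e) • (∑ i : Fin l, yW t l s c (Function.update d i.succ b) * g a (d i.succ)) := by
  have u0 : ∀ (f : Fin (l+1) → I) x, Function.update f 0 x ∘ Fin.succ = f ∘ Fin.succ := by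
    intro f x; funext y; simp [Function.update]
  have us : ∀ (f : Fin (l+1) → I) i x, Function.update f (Fin.succ i) x ∘ Fin.succ
      = Function.update (f ∘ Fin.succ) i x := by
    intro f i x
    rw [Function.update_comp_eq_of_injective _ (Fin.succ_injective _)]
  have us0 : ∀ (f : Fin (l+1) → I) i x, Function.update f (Fin.succ i) x 0 = f 0 := by
    intro f i x; rw [Function.update_of_ne]; exact (Fin.succ_ne_zero i).symm
  have uw : ∀ (f : Fin (l+1) → I) i x, (Function.update f 0 x ∘ Equiv.swap 0 (Fin.succ i))
      = Function.update (Function.update f 0 (f i.succ)) i.succ x := by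
    intro f i x; funext y
    refine Fin.cases ?_ (fun y => ?_) y
    · simp [us0]
    · by_cases h : y = i
      · subst h; simp
      · have : y.succ ≠ i.succ := by simpa using h
        simp [Function.update_of_ne, this, Equiv.swap_apply_of_ne_of_ne]
  have uw2 : ∀ (f : Fin (l+1) → I) i x, (Function.update f i.succ x ∘ Equiv.swap 0 (Fin.succ i))
      = Function.update (Function.update f 0 x) i.succ (f 0) := by
    intro f i x; funext y
    refine Fin.cases ?_ (fun y => ?_) y
    · simp [us0]
    · by_cases h : y = i
      · subst h; simp [us0]
      · have : y.succ ≠ i.succ := by simpa using h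
        simp [Function.update_of_ne, this, Equiv.swap_apply_of_ne_of_ne]
  have H1 := congrArg (· * yqm t l (s+1) (c ∘ Fin.succ) (d ∘ Fin.succ)) (h1 a b (c 0) (d 0))
  have H2 := congrArg (t s (c 0) (d 0) * ·) (h3 a b (c ∘ Fin.succ) (d ∘ Fin.succ))
  have H3 := congrArg (t s (c 0) b * ·) (h3 a (d 0) (c ∘ Fin.succ) (d ∘ Fin.succ))
  have H4 : ∑ i : Fin l, K • (g (c i.succ) b * t s (c 0) (d 0) - t s (c 0) (d 0) * g (c i.succ) b)
        * yqm t l (s+1) (Function.update (c ∘ Fin.succ) i a) (d ∘ Fin.succ)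
      = ∑ i : Fin l, e • (g (c 0) b * t s (c i.succ) (d 0) - t s (c 0) b * g (c i.succ) (d 0))
        * yqm t l (s+1) (Function.update (c ∘ Fin.succ) i a) (d ∘ Fin.succ) := by
    refine Finset.sum_congr rfl fun i _ => ?_
    rw [h1]
  simp only [yW, uw, uw2, u0, us, us0, Function.update_self]
  simp only [mul_sub, sub_mul, smul_sub, mul_smul_comm, smul_mul_assoc, mul_assoc, Finset.mul_sum,
    Finset.sum_sub_distrib, ← Finset.smul_sum, Function.comp_apply] at H1 H2 H3 H4 ⊢
  linear_combination (norm := module) (K + e) • H1 + K • H2 - e • H3 - e • H4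

theorem yqm_comm {I B Z : Type*} [Ring B] [CommRing Z] [Algebra Z B]
    (htf : ∀ (n : ℕ) (x : B), n ≠ 0 → n • x = 0 → x = 0)
    (t : ℕ → I → I → B) (g : I → I → B) (D e : Z)
    (hreg : ∀ (s : ℕ) (x : B), (D + s * e) • x = 0 → x = 0)
    (h1 : ∀ s i j k m, (D + (s : ℕ) * e) • (g i j * t s k m - t s k m * g i j)
      = e • (g k j * t s i m - t s k j * g i m))
    (h2 : ∀ s i j k l, t s i j * t (s+1) k l - t (s+1) k l * t s i j
      = t s k j * t (s+1) i l - t (s+1) k j * t s i l) (l : ℕ) :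
    ∀ (s : ℕ) (a b : I) (c d : Fin l → I),
      (D + s * e) • (g a b * yqm t l s c d - yqm t l s c d * g a b)
      = e • (∑ i, g (c i) b * yqm t l s (Function.update c i a) d
        - ∑ i, yqm t l s c (Function.update d i b) * g a (d i)) := by
  induction l with
  | zero => intro s a b c d; simp [yqm, ywd]
  | succ l ih =>
    intro s a b c d
    set K : Z := D + s * e with hK
    have hK' : D + ((s + 1 : ℕ) : Z) * e = K + e := by rw [hK]; push_cast; ring
    have hr := hreg (s+1)
    rw [hK'] at hr
    rw [← sub_eq_zero]
    apply hr
    apply htf l.factorial _ (Nat.factorial_ne_zero l)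
    have ih' := ih (s+1)
    rw [hK'] at ih'
    have hp := fun σ : Equiv.Perm (Fin (l+1)) =>
      yW_comm t g K e l s (h1 s) ih' a b (c ∘ σ) d
    have hsum := Finset.sum_congr (rfl : (Finset.univ : Finset (Equiv.Perm (Fin (l+1)))) = _)
      fun σ _ => congrArg ((Equiv.Perm.sign σ : ℤ) • ·) (hp σ)
    -- the upper sum
    have hU : l.factorial • ∑ i, g (c i) b * yqm t (l+1) s (Function.update c i a) d
        = ∑ σ : Equiv.Perm (Fin (l+1)), (Equiv.Perm.sign σ : ℤ) •
          (g ((c ∘ σ) 0) b * yW t l s (Function.update (c ∘ σ) 0 a) d)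
        + ∑ σ : Equiv.Perm (Fin (l+1)), (Equiv.Perm.sign σ : ℤ) •
          ∑ i : Fin l, (g ((c ∘ σ) i.succ) b * yW t l s (Function.update (c ∘ σ) i.succ a) d) := by
      rw [Finset.smul_sum]
      simp only [← mul_smul_comm (l.factorial), yqm_avg, Finset.mul_sum]
      rw [Finset.sum_comm, ← Finset.sum_add_distrib]
      refine Finset.sum_congr rfl fun σ _ => ?_
      rw [← smul_add, ← Fin.sum_univ_succ (fun j => g ((c ∘ σ) j) b *
        yW t l s (Function.update (c ∘ σ) j a) d), Finset.smul_sum]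
      symm
      refine Fintype.sum_equiv σ _ _ fun j => ?_
      rw [mul_smul_comm, Function.update_comp_equiv, Equiv.symm_apply_apply]
      rfl
    have hS : ∑ σ : Equiv.Perm (Fin (l+1)), (Equiv.Perm.sign σ : ℤ) •
          ∑ i : Fin l, (g ((c ∘ σ) 0) b *
            yW t l s (Function.update (c ∘ σ) 0 a ∘ Equiv.swap 0 i.succ) d)
        = - ∑ σ : Equiv.Perm (Fin (l+1)), (Equiv.Perm.sign σ : ℤ) •
          ∑ i : Fin l, (g ((c ∘ σ) i.succ) b * yW t l s (Function.update (c ∘ σ) i.succ a) d) := by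
      simp only [Finset.smul_sum]
      rw [Finset.sum_comm, Finset.sum_comm (s := (Finset.univ : Finset (Equiv.Perm (Fin (l+1))))),
        ← Finset.sum_neg_distrib]
      refine Finset.sum_congr rfl fun i _ => ?_
      rw [← Finset.sum_neg_distrib]
      refine Fintype.sum_equiv (Equiv.mulRight (Equiv.swap 0 i.succ)) _ _ fun σ => ?_
      rw [Equiv.coe_mulRight, Equiv.Perm.sign_mul,
        Equiv.Perm.sign_swap (Fin.succ_ne_zero i).symm, Function.update_comp_equiv]
      simp [Function.comp_assoc]
    have hL0 : ∀ d', l.factorial • yqm t (l+1) s c d'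
        = ∑ σ : Equiv.Perm (Fin (l+1)), (Equiv.Perm.sign σ : ℤ) • yW t l s (c ∘ σ) d' :=
      fun d' => yqm_avg t l s c d'
    have hL2 : ∀ i : Fin l,
        yqm t (l+1) s c (Function.update d i.succ b ∘ Equiv.swap 0 i.succ)
        = - yqm t (l+1) s c (Function.update d i.succ b) := by
      intro i
      rw [yqm_lower htf t h2, Equiv.Perm.sign_swap (Fin.succ_ne_zero i).symm]; simp
    have hX : ∀ (z : Z) (f : Equiv.Perm (Fin (l+1)) → B),
        ∑ σ : Equiv.Perm (Fin (l+1)), (Equiv.Perm.sign σ : ℤ) • z • f σ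
        = z • ∑ σ : Equiv.Perm (Fin (l+1)), (Equiv.Perm.sign σ : ℤ) • f σ := by
      intro z f
      rw [Finset.smul_sum]
      exact Finset.sum_congr rfl fun σ _ => smul_comm _ _ _
    have hY : ∀ (d' : Fin (l+1) → I) (x : B),
        ∑ σ : Equiv.Perm (Fin (l+1)), (Equiv.Perm.sign σ : ℤ) • (yW t l s (c ∘ σ) d' * x)
        = l.factorial • (yqm t (l+1) s c d' * x) := by
      intro d' x
      rw [← smul_mul_assoc, hL0, Finset.sum_mul]
      exact Finset.sum_congr rfl fun σ _ => (smul_mul_assoc _ _ _).symm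
    have hY' : ∀ (d' : Fin (l+1) → I) (x : B),
        ∑ σ : Equiv.Perm (Fin (l+1)), (Equiv.Perm.sign σ : ℤ) • (x * yW t l s (c ∘ σ) d')
        = l.factorial • (x * yqm t (l+1) s c d') := by
      intro d' x
      rw [← mul_smul_comm, hL0, Finset.mul_sum]
      exact Finset.sum_congr rfl fun σ _ => (mul_smul_comm _ _ _).symm
    have hYs : ∀ (d' : Fin l → Fin (l+1) → I) (x : Fin l → B),
        ∑ σ : Equiv.Perm (Fin (l+1)), (Equiv.Perm.sign σ : ℤ) •
          ∑ i, (yW t l s (c ∘ σ) (d' i) * x i)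
        = l.factorial • ∑ i, (yqm t (l+1) s c (d' i) * x i) := by
      intro d' x
      simp only [Finset.smul_sum]
      rw [Finset.sum_comm]
      exact Finset.sum_congr rfl fun i _ => hY _ _
    simp only [smul_add, smul_sub (_ : ℤ), Finset.sum_add_distrib, Finset.sum_sub_distrib, hX,
      hS, hY, hY', hYs, hL2, neg_mul, Finset.sum_neg_distrib] at hsum
    rw [Fin.sum_univ_succ (fun i => yqm t (l+1) s c (Function.update d i b) * g a (d i))]
    set SU := ∑ i, g (c i) b * yqm t (l+1) s (Function.update c i a) d
    linear_combination (norm := module) hsum - ((K + e) * e) • hU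

theorem yqm_comm' {I B : Type*} [Ring B]
    (htf : ∀ (n : ℕ) (x : B), n ≠ 0 → n • x = 0 → x = 0)
    (t : ℕ → I → I → B) (g : I → I → B) (D e : B) (hD : ∀ x, D * x = x * D)
    (he : ∀ x, e * x = x * e)
    (hreg : ∀ (s : ℕ) (x : B), (D + s * e) * x = 0 → x = 0)
    (h1 : ∀ s i j k m, (D + (s : ℕ) * e) * (g i j * t s k m - t s k m * g i j)
      = e * (g k j * t s i m - t s k j * g i m))
    (h2 : ∀ s i j k l, t s i j * t (s+1) k l - t (s+1) k l * t s i j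
      = t s k j * t (s+1) i l - t (s+1) k j * t s i l) (l : ℕ)
    (a b : I) (c d : Fin l → I) :
      D * (g a b * yqm t l 0 c d - yqm t l 0 c d * g a b)
      = e * (∑ i, g (c i) b * yqm t l 0 (Function.update c i a) d
        - ∑ i, yqm t l 0 c (Function.update d i b) * g a (d i)) := by
  let inst : Algebra (Subring.center B) B :=
    RingHom.toAlgebra' (Subring.center B).subtype
      (fun c x => ((Subring.mem_center_iff.1 c.2) x).symm)
  let D' : Subring.center B := ⟨D, Subring.mem_center_iff.2 fun x => (hD x).symm⟩
  let e' : Subring.center B := ⟨e, Subring.mem_center_iff.2 fun x => (he x).symm⟩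
  have hs : ∀ (s : ℕ) (x : B), (D' + (s : Subring.center B) * e') • x = (D + s * e) * x := by
    intro s x
    rw [Algebra.smul_def]
    congr 1
  have hs' : ∀ (x : B), e' • x = e * x := fun x => Algebra.smul_def _ _
  have := yqm_comm (Z := Subring.center B) htf t g D' e'
    (fun s x h => hreg s x (by rw [← hs]; exact h))
    (fun s i j k m => by rw [hs, hs']; exact h1 s i j k m) h2 l 0 a b c d
  rw [hs, hs'] at this
  simpa using this

section Conc

variable {V : Type*} [AddCommGroup V] [Module ℂ V]

theorem shiftSer_zero' (c : ℂ) (f : ℕ → (V →ₗ[ℂ] V)) : shiftSer c f 0 = f 0 := by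
  simp [shiftSer]

theorem shiftSer_c0 (f : ℕ → (V →ₗ[ℂ] V)) : shiftSer 0 f = f := by
  funext m
  unfold shiftSer
  rw [Finset.sum_range_succ, Finset.sum_eq_zero]
  · simp
  · intro r hr
    have : m - r ≠ 0 := by have := Finset.mem_range.1 hr; omega
    simp [this]

theorem shiftSer_rec (c : ℂ) (f : ℕ → (V →ₗ[ℂ] V)) (h : f 0 = 0) (m : ℕ) :
    shiftSer c f (m+1) = c • shiftSer c f m + shiftSer c (fun r => f (r+1)) m := by
  cases m with
  | zero => simp [shiftSer, Finset.sum_range_succ, h]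
  | succ k =>
    unfold shiftSer
    rw [Finset.sum_range_succ' _ (k+1+1),
      Finset.sum_range_succ' (fun r => (((k + 1 - 1).choose (k + 1 - r) : ℂ)
        * c ^ (k + 1 - r)) • f r) (k+1), h, smul_zero, smul_zero,
      add_zero, add_zero, Finset.sum_range_succ _ (k+1), Finset.sum_range_succ _ (k+1), ← add_assoc,
      Finset.smul_sum, ← Finset.sum_add_distrib]
    congr 1
    · refine Finset.sum_congr rfl fun r hr => ?_
      have hr := Finset.mem_range.1 hr
      obtain ⟨j, rfl⟩ : ∃ j, k = r + j := ⟨k - r, by omega⟩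
      have e1 : r + j + 1 + 1 - 1 = (r + j) + 1 := by omega
      have e2 : r + j + 1 + 1 - (r + 1) = j + 1 := by omega
      have e3 : r + j + 1 - 1 = r + j := by omega
      have e4 : r + j + 1 - (r + 1) = j := by omega
      have e5 : r + j + 1 - r = j + 1 := by omega
      rw [e1, e2, e3, e4, e5, Nat.choose_succ_succ, smul_smul, ← add_smul]
      congr 1
      push_cast
      ring
    · simp

theorem shiftSer_sub (c : ℂ) (f g : ℕ → (V →ₗ[ℂ] V)) (m : ℕ) :
    shiftSer c (fun r => f r - g r) m = shiftSer c f m - shiftSer c g m := by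
  simp [shiftSer, smul_sub]

theorem shiftSer_mulr (c : ℂ) (f : ℕ → Module.End ℂ V) (x : Module.End ℂ V) (m : ℕ) :
    shiftSer c (fun r => f r * x) m = (shiftSer c f m : Module.End ℂ V) * x := by
  simp only [shiftSer]
  rw [Finset.sum_mul]
  exact Finset.sum_congr rfl fun r _ => (smul_mul_assoc _ _ _).symm

theorem shiftSer_mull (c : ℂ) (f : ℕ → Module.End ℂ V) (x : Module.End ℂ V) (m : ℕ) :
    shiftSer c (fun r => x * f r) m = x * (shiftSer c f m : Module.End ℂ V) := by
  simp only [shiftSer]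
  rw [Finset.mul_sum]
  exact Finset.sum_congr rfl fun r _ => (mul_smul_comm _ _ _).symm

/-- double shift. -/
noncomputable def yLL (r s : ℂ) (F : ℕ → ℕ → Module.End ℂ V) (k j : ℕ) : Module.End ℂ V :=
  shiftSer r (fun p => shiftSer s (F p) j) k

theorem yLL_rel (r s : ℂ) (F G : ℕ → ℕ → Module.End ℂ V) (h0 : ∀ q, F 0 q = 0)
    (h0' : ∀ p, F p 0 = 0) (hG : ∀ p q, F (p+1) q - F p (q+1) = G p q) (k j : ℕ) :
    yLL r s F (k+1) j - yLL r s F k (j+1) + (s - r) • yLL r s F k j = yLL r s G k j := by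
  have e1 : yLL r s F (k+1) j = r • yLL r s F k j + yLL r s (fun p q => F (p+1) q) k j := by
    unfold yLL
    rw [shiftSer_rec]
    have : F 0 = fun _ => 0 := funext h0
    rw [this]; simp [shiftSer]
  have e2 : yLL r s F k (j+1) = s • yLL r s F k j + yLL r s (fun p q => F p (q+1)) k j := by
    unfold yLL
    have : ∀ p, shiftSer s (F p) (j+1) = s • shiftSer s (F p) j
      + shiftSer s (fun q => F p (q+1)) j := fun p => shiftSer_rec s _ (h0' p) j
    simp only [this]
    simp only [shiftSer, smul_add, Finset.sum_add_distrib]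
    congr 1
    rw [Finset.smul_sum]
    exact Finset.sum_congr rfl fun r _ => smul_comm _ _ _
  have e3 : yLL r s G k j = yLL r s (fun p q => F (p+1) q) k j
      - yLL r s (fun p q => F p (q+1)) k j := by
    unfold yLL
    rw [← shiftSer_sub]
    congr 1; funext p
    rw [← shiftSer_sub]
    congr 1; funext q
    rw [hG]
  rw [e1, e2, e3]
  module

theorem yshift_rel {n : ℕ} (T : ℕ → Fin n → Fin n → Module.End ℂ V)
    (hT : IsYangianRep n T) (r s : ℂ) (i j k l : Fin n) (p q : ℕ) :
    let S : ℂ → Fin n → Fin n → ℕ → Module.End ℂ V := fun c i j => shiftSer c fun m => T m i j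
    let F : ℕ → ℕ → Module.End ℂ V := fun p q => S r i j p * S s k l q - S s k l q * S r i j p
    F 0 q = 0 ∧ F p 0 = 0 ∧
    F (p+1) q - F p (q+1) + (s - r) • F p q
      = S r k j p * S s i l q - S s k j q * S r i l p := by
  intro S F
  obtain ⟨hT0, hT1⟩ := hT
  have hz : ∀ i j (x : Module.End ℂ V), T 0 i j * x - x * T 0 i j = 0 := by
    intro i j x
    rw [hT0]
    split_ifs
    · exact sub_eq_zero.2 ((one_mul x).trans (mul_one x).symm)
    · rw [zero_mul, mul_zero, sub_zero]
  have S0 : ∀ c i j, S c i j 0 = T 0 i j := fun c i j => shiftSer_zero' _ _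
  have hz' : ∀ i j (x : Module.End ℂ V), x * T 0 i j - T 0 i j * x = 0 := by
    intro i j x
    rw [← neg_sub, hz, neg_zero]
  refine ⟨?_, ?_, ?_⟩
  · simp only [F, S0, hz]
  · simp only [F, S0, hz']
  · have e : ∀ i j k l i' j' k' l' p q,
      yLL r s (fun p q => T p i j * T q k l - T q k' l' * T p i' j') p q
        = S r i j p * S s k l q - S s k' l' q * S r i' j' p := by
      intro i j k l i' j' k' l' p q
      unfold yLL
      simp only [shiftSer_sub, shiftSer_mulr, shiftSer_mull]
      rfl
    have := yLL_rel r s (fun p q => T p i j * T q k l - T q k l * T p i j)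
      (fun p q => T p k j * T q i l - T q k j * T p i l)
      (fun q => hz _ _ _) (fun p => hz' _ _ _) (fun p q => hT1 p q i j k l) p q
    simp only [e] at this
    exact this

open PowerSeries

/-- shifted series. -/
noncomputable def yτ {n : ℕ} (T : ℕ → Fin n → Fin n → Module.End ℂ V) (s : ℕ) (i j : Fin n) :
    PowerSeries (Module.End ℂ V) := PowerSeries.mk (shiftSer (s : ℂ) fun m => T m i j)

theorem ydiag {E : Type*} [AddCommGroup E] (F G : ℕ → ℕ → E) (h0 : ∀ q, F 0 q = 0)
    (h0' : ∀ p, F p 0 = 0) (hG : ∀ p q, F (p+1) q - F p (q+1) + F p q = G p q) (m : ℕ) :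
    ∑ x ∈ Finset.HasAntidiagonal.antidiagonal m, F x.1 x.2 = ∑ x ∈ Finset.HasAntidiagonal.antidiagonal m, G x.1 x.2 := by
  have e1 := Finset.Nat.sum_antidiagonal_succ (n := m) (f := fun x => F x.1 x.2)
  have e2 := Finset.Nat.sum_antidiagonal_succ' (n := m) (f := fun x => F x.1 x.2)
  simp only [h0, h0', zero_add] at e1 e2
  simp only [← hG, Finset.sum_add_distrib, Finset.sum_sub_distrib]
  rw [← e1, ← e2, sub_self, zero_add]

theorem yτ_rel {n : ℕ} (T : ℕ → Fin n → Fin n → Module.End ℂ V)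
    (hT : IsYangianRep n T) (s : ℕ) (i j k l : Fin n) :
    yτ T s i j * yτ T (s+1) k l - yτ T (s+1) k l * yτ T s i j
      = yτ T s k j * yτ T (s+1) i l - yτ T (s+1) k j * yτ T s i l := by
  have hsw : ∀ (m : ℕ) (f g : PowerSeries (Module.End ℂ V)), coeff m (f * g)
      = ∑ x ∈ Finset.HasAntidiagonal.antidiagonal m, coeff x.2 f * coeff x.1 g := by
    intro m f g
    rw [coeff_mul, ← Finset.Nat.sum_antidiagonal_swap]
    rfl
  ext1 m
  simp only [map_sub]
  rw [hsw m (yτ T (s+1) k l), hsw m (yτ T (s+1) k j), coeff_mul, coeff_mul,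
    ← Finset.sum_sub_distrib, ← Finset.sum_sub_distrib]
  have h := fun p q => yshift_rel T hT (s : ℂ) ((s+1 : ℕ) : ℂ) i j k l p q
  have hc : (((s+1 : ℕ) : ℂ) - s) = 1 := by push_cast; ring
  simp only [hc, one_smul] at h
  simp only [yτ, coeff_mk]
  exact ydiag (E := Module.End ℂ V) (fun p q => (shiftSer (s : ℂ) (fun m => T m i j) p
      : Module.End ℂ V) * shiftSer ((s+1 : ℕ) : ℂ) (fun m => T m k l) q
      - (shiftSer ((s+1 : ℕ) : ℂ) (fun m => T m k l) q : Module.End ℂ V)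
        * shiftSer (s : ℂ) (fun m => T m i j) p)
    (fun p q => (shiftSer (s : ℂ) (fun m => T m k j) p
      : Module.End ℂ V) * shiftSer ((s+1 : ℕ) : ℂ) (fun m => T m i l) q
      - (shiftSer ((s+1 : ℕ) : ℂ) (fun m => T m k j) q : Module.End ℂ V)
        * shiftSer (s : ℂ) (fun m => T m i l) p)
    (fun q => (h 0 q).1) (fun p => (h p 0).2.1) (fun p q => (h p q).2.2) m

/-- the generating series in the first variable. -/
noncomputable def yg {n : ℕ} (T : ℕ → Fin n → Fin n → Module.End ℂ V) (i j : Fin n) :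
    PowerSeries (PowerSeries (Module.End ℂ V)) := PowerSeries.mk fun m => C (T m i j)

theorem prodSer_eq (L : List (ℕ → Module.End ℂ V)) :
    (PowerSeries.mk (prodSer L) : PowerSeries (Module.End ℂ V)) = (L.map PowerSeries.mk).prod := by
  induction L with
  | nil =>
    ext1 m
    simp only [prodSer, List.map_nil, List.prod_nil, coeff_mk, coeff_one]
    rfl
  | cons f L ih =>
    rw [List.map_cons, List.prod_cons, ← ih]
    ext1 m
    rw [coeff_mul, Finset.Nat.sum_antidiagonal_eq_sum_range_succ_mk]
    simp only [prodSer, coeff_mk, mulSer]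
    rfl

theorem ywd_eq {n : ℕ} (T : ℕ → Fin n → Fin n → Module.End ℂ V) (l : ℕ) :
    ∀ (s : ℕ) (c d : Fin l → Fin n), ywd (yτ T) l s c d
      = (List.ofFn fun x : Fin l => yτ T (s + x) (c x) (d x)).prod := by
  induction l with
  | zero => intro s c d; simp [ywd]
  | succ l ih =>
    intro s c d
    rw [List.ofFn_succ, List.prod_cons, ywd, ih]
    simp [add_assoc, add_comm 1]

theorem yqm_eq {n : ℕ} (T : ℕ → Fin n → Fin n → Module.End ℂ V) (l : ℕ) (c d : Fin l → Fin n) :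
    yqm (yτ T) l 0 c d = PowerSeries.mk (qminorSer T l c d) := by
  ext1 m
  unfold yqm qminorSer
  rw [map_sum, coeff_mk]
  refine Finset.sum_congr rfl fun σ _ => ?_
  rw [ywd_eq, map_zsmul, Int.cast_smul_eq_zsmul]
  congr 1
  have := congrArg (coeff m) (prodSer_eq (List.ofFn fun s : Fin l =>
        shiftSer ((s : ℕ) : ℂ) fun r => T r (c (σ s)) (d s)))
  rw [coeff_mk, List.map_ofFn] at this
  rw [this]
  simp only [zero_add]
  rfl

theorem ywd_C {I B : Type*} [Ring B] (t : ℕ → I → I → B) (l : ℕ) :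
    ∀ (s : ℕ) (c d : Fin l → I), ywd (fun s i j => (C (t s i j) : PowerSeries B)) l s c d
      = C (ywd t l s c d) := by
  induction l with
  | zero => intro s c d; simp [ywd]
  | succ l ih => intro s c d; simp [ywd, ih]

theorem yqm_C {I B : Type*} [Ring B] (t : ℕ → I → I → B) (l : ℕ)
    (s : ℕ) (c d : Fin l → I) : yqm (fun s i j => (C (t s i j) : PowerSeries B)) l s c d
      = C (yqm t l s c d) := by
  unfold yqm
  simp only [ywd_C, map_sum, map_zsmul]

theorem ytf (n : ℕ) (x : PowerSeries (PowerSeries (Module.End ℂ V))) (hn : n ≠ 0)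
    (h : n • x = 0) : x = 0 := by
  ext p q : 2
  have := congrArg (fun y => coeff q (coeff p y)) h
  simp only [map_nsmul, map_zero] at this
  rw [← Nat.cast_smul_eq_nsmul ℂ] at this
  rcases smul_eq_zero.1 this with h | h
  · exact absurd (Nat.cast_eq_zero.1 h) hn
  · simpa using h

theorem yD00 {E : Type*} [Ring E] (x : PowerSeries (PowerSeries E)) (s : ℕ) :
    coeff 0 ((C X - X + (s : PowerSeries (PowerSeries E)) * (X * C X)) * x) = X * coeff 0 x := by
  have : (s : PowerSeries (PowerSeries E)) * (X * C X) = X * ((s : PowerSeries (PowerSeries E)) * C X) := by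
    rw [← mul_assoc, (Nat.cast_commute s _).eq, mul_assoc]
  rw [this, add_mul, sub_mul, mul_assoc]
  simp [coeff_C_mul, coeff_zero_X_mul]

theorem yD0s {E : Type*} [Ring E] (x : PowerSeries (PowerSeries E)) (s p : ℕ) :
    coeff (p+1) ((C X - X + (s : PowerSeries (PowerSeries E)) * (X * C X)) * x) = X * coeff (p+1) x - coeff p x
      + (s : PowerSeries E) * (X * coeff p x) := by
  have : (s : PowerSeries (PowerSeries E)) * (X * C X) = X * C ((s : PowerSeries E) * X) := by
    rw [← mul_assoc, (Nat.cast_commute s _).eq, mul_assoc]; simp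
  rw [this, add_mul, sub_mul, mul_assoc]
  simp only [map_add, map_sub, coeff_C_mul, coeff_succ_X_mul, mul_assoc]

theorem yDreg {E : Type*} [Ring E] (s : ℕ) (x : PowerSeries (PowerSeries E))
    (h : (C X - X + (s : PowerSeries (PowerSeries E)) * (X * C X)) * x = 0) : x = 0 := by
  have hX : ∀ y : PowerSeries E, X * y = 0 → y = 0 := by
    intro y hy
    ext1 q
    have := congrArg (coeff (q+1)) hy
    simpa [coeff_succ_X_mul] using this
  ext1 p
  rw [map_zero]
  induction p with
  | zero =>
    apply hX
    rw [← yD00 x s, h, map_zero]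
  | succ p ih =>
    apply hX
    have := yD0s x s p
    rw [h, ih] at this
    simpa using this.symm

theorem yX_comm {E : Type*} [Ring E] (x : PowerSeries (PowerSeries E)) :
    (X : PowerSeries (PowerSeries E)) * x = x * X := (commute_X x).eq.symm

theorem yCX_comm {E : Type*} [Ring E] (x : PowerSeries (PowerSeries E)) :
    (C X : PowerSeries (PowerSeries E)) * x = x * C X := by
  ext1 p
  rw [coeff_C_mul, coeff_mul_C, (commute_X _).eq]

theorem yh1 {n : ℕ} (T : ℕ → Fin n → Fin n → Module.End ℂ V)
    (hT : IsYangianRep n T) (s : ℕ) (i j k m : Fin n) :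
    (C X - X + (s : PowerSeries (PowerSeries (Module.End ℂ V))) * (X * C X)) * (yg T i j * C (yτ T s k m) - C (yτ T s k m) * yg T i j)
      = (X * C X) * (yg T k j * C (yτ T s i m) - C (yτ T s k j) * yg T i m) := by
  have h := fun p q => yshift_rel T hT 0 (s : ℂ) i j k m p q
  simp only [shiftSer_c0, sub_zero] at h
  rw [mul_assoc X]
  ext p q : 2
  cases p with
  | zero =>
    rw [yD00, coeff_zero_X_mul]
    cases q with
    | zero => simp
    | succ q =>
      rw [coeff_succ_X_mul]
      simp only [map_sub, coeff_mul_C, coeff_C_mul, yg, yτ, coeff_mk]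
      rw [map_zero]
      exact (h 0 q).1
  | succ p =>
    rw [yD0s, coeff_succ_X_mul, coeff_C_mul, ← nsmul_eq_mul, map_add, map_sub, map_nsmul]
    cases q with
    | zero =>
      simp only [coeff_zero_X_mul]
      simp only [map_sub, coeff_mul_C, coeff_C_mul, yg, yτ, coeff_mk]
      rw [(h p 0).2.1]
      simp
    | succ q =>
      simp only [coeff_succ_X_mul]
      simp only [map_sub, coeff_mul_C, coeff_C_mul, yg, yτ, coeff_mk]
      rw [← (h p q).2.2, Nat.cast_smul_eq_nsmul]

end Conc

/-- The identity
`(u−v)[t_{ab}(u), t^{c_1⋯c_l}_{d_1⋯d_l}(v)]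
  = Σ_i t_{c_i b}(u) t^{c_1⋯a⋯c_l}_{d_1⋯d_l}(v)
    − Σ_i t^{c_1⋯c_l}_{d_1⋯b⋯d_l}(v) t_{a d_i}(u)`
of `End(V)`-valued formal series in `u⁻¹` and `v⁻¹`:  the first two conjuncts
state that the coefficients of the left-hand side at the non-negative powers
`u^1 v^{-q}` and `u^{-p} v^1` vanish, and the third conjunct identifies the
coefficients at `u^{-p} v^{-q}` for all `p, q ≥ 0`. -/
theorem tser_qminor_commutator_identity
    (n : ℕ) {V : Type*} [AddCommGroup V] [Module ℂ V]
    (T : ℕ → Fin n → Fin n → (V →ₗ[ℂ] V)) (hT : IsYangianRep n T)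
    (a b : Fin n) (l : ℕ) (c d : Fin l → Fin n) :
    (∀ q : ℕ, T 0 a b ∘ₗ qminorSer T l c d q - qminorSer T l c d q ∘ₗ T 0 a b = 0) ∧
    (∀ p : ℕ, T p a b ∘ₗ qminorSer T l c d 0 - qminorSer T l c d 0 ∘ₗ T p a b = 0) ∧
    (∀ p q : ℕ,
      (T (p + 1) a b ∘ₗ qminorSer T l c d q - qminorSer T l c d q ∘ₗ T (p + 1) a b)
        - (T p a b ∘ₗ qminorSer T l c d (q + 1) - qminorSer T l c d (q + 1) ∘ₗ T p a b)
      = (∑ i : Fin l, T p (c i) b ∘ₗ qminorSer T l (Function.update c i a) d q)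
        - ∑ i : Fin l, qminorSer T l c (Function.update d i b) q ∘ₗ T p a (d i)) := by
  have key := yqm_comm' (B := PowerSeries (PowerSeries (Module.End ℂ V))) ytf
    (fun s i j => PowerSeries.C (yτ T s i j)) (yg T)
    (PowerSeries.C PowerSeries.X - PowerSeries.X) (PowerSeries.X * PowerSeries.C PowerSeries.X)
    (fun x => by rw [sub_mul, mul_sub, yX_comm, yCX_comm])
    (fun x => by rw [mul_assoc, yCX_comm, ← mul_assoc, yX_comm, mul_assoc])
    yDreg (yh1 T hT)
    (fun s i j k m => by
      simp only [← map_mul, ← map_sub]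
      rw [yτ_rel T hT]) l a b c d
  simp only [yqm_C, yqm_eq] at key
  rw [mul_assoc PowerSeries.X] at key
  have h0 := congrArg (PowerSeries.coeff 0) key
  have hs := fun p => congrArg (PowerSeries.coeff (p+1)) key
  have d0 := yD00 (yg T a b * PowerSeries.C (PowerSeries.mk (qminorSer T l c d)) -
    PowerSeries.C (PowerSeries.mk (qminorSer T l c d)) * yg T a b) 0
  have ds := yD0s (yg T a b * PowerSeries.C (PowerSeries.mk (qminorSer T l c d)) -
    PowerSeries.C (PowerSeries.mk (qminorSer T l c d)) * yg T a b) 0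
  simp only [Nat.cast_zero, zero_mul, add_zero] at d0 ds
  rw [d0, PowerSeries.coeff_zero_X_mul] at h0
  simp only [ds, PowerSeries.coeff_succ_X_mul, PowerSeries.coeff_C_mul] at hs
  refine ⟨fun q => ?_, fun p => ?_, fun p q => ?_⟩
  · have := congrArg (PowerSeries.coeff (q+1)) h0
    rw [PowerSeries.coeff_succ_X_mul] at this
    simp only [map_sub, PowerSeries.coeff_mul_C, PowerSeries.coeff_C_mul, yg, PowerSeries.coeff_mk,
      map_zero] at this
    exact this
  · have := congrArg (PowerSeries.coeff 0) (hs p)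
    rw [map_sub, PowerSeries.coeff_zero_X_mul, PowerSeries.coeff_zero_X_mul, zero_sub,
      neg_eq_zero] at this
    simp only [map_sub, PowerSeries.coeff_mul_C, PowerSeries.coeff_C_mul, yg,
      PowerSeries.coeff_mk] at this
    exact this
  · have := congrArg (PowerSeries.coeff (q+1)) (hs p)
    rw [map_sub, PowerSeries.coeff_succ_X_mul, PowerSeries.coeff_succ_X_mul] at this
    simp only [map_sub, map_sum, PowerSeries.coeff_mul_C, PowerSeries.coeff_C_mul, yg,
      PowerSeries.coeff_mk] at this
    exact this
end

section
/- Let V be a representation of the Yangian Y(gl_n) with T_{ij}^{(r)} = 0 for all r ≥ 3, and let 1 ≤ a < n−1. Then: (i) for every integer k ≥ 1 and every complex number v, [T_{n−1,n}^{(1)}, 𝒯_{na}(v,k)] = −k · 𝒯_{na}(v,k−1) · T^{a+1⋯n}_{a⋯n−2,n}(v+k−1) as an identity in End(V) (equivalently, as End(V)-valued polynomials in v); and (ii) T^{a+1⋯n}_{a⋯n−2,n}(u) · T^{a+1⋯n−1}_{a+1⋯n−1}(u) = τ_{n−1,a}(u) · T^{a+1⋯n}_{a+1⋯n}(u) + τ_{na}(u)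 · T^{a+1⋯n−1}_{a+1⋯n−2,n}(u) as End(V)-valued polynomials in u. -/
/-- The polynomial operator `T_{ij}(u) = u² δ_{ij}·id + u T^{(1)}_{ij} + T^{(2)}_{ij}`
(in a representation with `T^{(r)} = 0` for `r ≥ 3`). -/
noncomputable def Tpoly {n : ℕ} {V : Type*} [AddCommGroup V] [Module ℂ V]
    (T : ℕ → Fin n → Fin n → (V →ₗ[ℂ] V)) (i j : Fin n) (u : ℂ) : V →ₗ[ℂ] V :=
  u ^ 2 • (if i = j then (LinearMap.id : V →ₗ[ℂ] V) else 0) + u • T 1 i j + T 2 i j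

/-- The polynomial quantum minor `T^{a_1⋯a_l}_{b_1⋯b_l}(u)
= Σ_{σ ∈ S_l} sgn σ · T_{a_{σ(1)} b_1}(u) T_{a_{σ(2)} b_2}(u−1) ⋯
T_{a_{σ(l)} b_l}(u−l+1)`. -/
noncomputable def TqminorPoly {n : ℕ} {V : Type*} [AddCommGroup V] [Module ℂ V]
    (T : ℕ → Fin n → Fin n → (V →ₗ[ℂ] V)) (l : ℕ) (a b : Fin l → Fin n)
    (u : ℂ) : V →ₗ[ℂ] V :=
  ∑ σ : Equiv.Perm (Fin l),
    (((Equiv.Perm.sign σ : ℤ) : ℂ)) •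
      (List.ofFn fun s : Fin l =>
        Tpoly T (a (σ s)) (b s) (u - ((s : ℕ) : ℂ))).foldr (· ∘ₗ ·) LinearMap.id

/-- The sequence of `0`-indexed row (or column) indices `off, off+1, …, off+l-1`. -/
def idxSeq (n off l : ℕ) (h : off + l ≤ n) : Fin l → Fin n :=
  fun s => ⟨off + s.1, by have := s.isLt; omega⟩

/-- The sequence of `0`-indexed indices `off, off+1, …, off+l-2, n-1`
(the last index replaced by `n-1`). -/
def idxSeqLast (n off l : ℕ) (h : off + l ≤ n) (hn : 1 ≤ n) : Fin l → Fin n :=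
  fun s => if s.1 = l - 1 then ⟨n - 1, by omega⟩
    else ⟨off + s.1, by have := s.isLt; omega⟩

/-- The lowering operator `τ_{ra}(v) = T^{a+1⋯r}_{a⋯r−1}(v)`
(`1 ≤ a < r ≤ n`, indices in `1, …, n` as in the paper). -/
noncomputable def tauPoly {n : ℕ} {V : Type*} [AddCommGroup V] [Module ℂ V]
    (T : ℕ → Fin n → Fin n → (V →ₗ[ℂ] V)) (r a : ℕ)
    (ha : 1 ≤ a) (har : a < r) (hr : r ≤ n) (v : ℂ) : V →ₗ[ℂ] V :=
  TqminorPoly T (r - a) (idxSeq n a (r - a) (by omega))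
    (idxSeq n (a - 1) (r - a) (by omega)) v

/-- The product of lowering operators
`𝒯_{ra}(v, k) = τ_{ra}(v+k−1) ⋯ τ_{ra}(v+1) τ_{ra}(v)`
(the identity operator when `k = 0`). -/
noncomputable def TTPoly {n : ℕ} {V : Type*} [AddCommGroup V] [Module ℂ V]
    (T : ℕ → Fin n → Fin n → (V →ₗ[ℂ] V)) (r a : ℕ)
    (ha : 1 ≤ a) (har : a < r) (hr : r ≤ n) (v : ℂ) : ℕ → (V →ₗ[ℂ] V)
  | 0 => LinearMap.id
  | k + 1 => tauPoly T r a ha har hr (v + (k : ℂ)) ∘ₗ TTPoly T r a ha har hr v k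


set_option linter.unusedSectionVars false

namespace QM

/-- Contraction-style creation operator on functions of row lists. -/
def Psi {I R : Type*} [Ring R] : (I → R) → (List I → R) → List I → R
  | _, _, [] => 0
  | τ, F, a :: A => τ a * F A - Psi τ (fun A' => F (a :: A')) A

section basic
variable {I R : Type*} [Ring R]

theorem Psi_nil (τ : I → R) (F : List I → R) : Psi τ F [] = 0 := rfl

theorem Psi_cons (τ : I → R) (F : List I → R) (a : I) (A : List I) :
    Psi τ F (a :: A) = τ a * F A - Psi τ (fun A' => F (a :: A')) A := rfl

theorem Psi_add (τ : I → R) (F G : List I → R) (A : List I) :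
    Psi τ (fun A' => F A' + G A') A = Psi τ F A + Psi τ G A := by
  induction A generalizing F G with
  | nil => simp [Psi_nil]
  | cons a A ih => simp only [Psi_cons, ih]; noncomm_ring

theorem Psi_neg (τ : I → R) (F : List I → R) (A : List I) :
    Psi τ (fun A' => - F A') A = - Psi τ F A := by
  induction A generalizing F with
  | nil => simp [Psi_nil]
  | cons a A ih => simp only [Psi_cons, ih]; noncomm_ring

theorem Psi_sub (τ : I → R) (F G : List I → R) (A : List I) :
    Psi τ (fun A' => F A' - G A') A = Psi τ F A - Psi τ G A := by
  simp only [sub_eq_add_neg, Psi_add, Psi_neg]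

theorem Psi_zero (τ : I → R) (A : List I) : Psi τ (fun _ => 0) A = 0 := by
  induction A with
  | nil => rfl
  | cons a A ih => simp [Psi_cons, ih]

theorem Psi_mul_right (τ : I → R) (F : List I → R) (r : R) (A : List I) :
    Psi τ (fun A' => F A' * r) A = Psi τ F A * r := by
  induction A generalizing F with
  | nil => simp [Psi_nil]
  | cons a A ih => simp only [Psi_cons, ih]; noncomm_ring

theorem Psi_left_add (τ σ : I → R) (F : List I → R) (A : List I) :
    Psi (fun i => τ i + σ i) F A = Psi τ F A + Psi σ F A := by
  induction A generalizing F with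
  | nil => simp [Psi_nil]
  | cons a A ih => simp only [Psi_cons, ih]; noncomm_ring

theorem Psi_left_sub (τ σ : I → R) (F : List I → R) (A : List I) :
    Psi (fun i => τ i - σ i) F A = Psi τ F A - Psi σ F A := by
  induction A generalizing F with
  | nil => simp [Psi_nil]
  | cons a A ih => simp only [Psi_cons, ih]; noncomm_ring

theorem Psi_left_zero (F : List I → R) (A : List I) :
    Psi (fun _ => (0 : R)) F A = 0 := by
  induction A generalizing F with
  | nil => rfl
  | cons a A ih => simp [Psi_cons, ih]

theorem Psi_left_mul (τ : I → R) (r : R) (F : List I → R) (A : List I) :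
    Psi (fun i => r * τ i) F A = r * Psi τ F A := by
  induction A generalizing F with
  | nil => simp [Psi_nil]
  | cons a A ih => simp only [Psi_cons, ih]; noncomm_ring

theorem Psi_mid (τ : I → R) (r : R) (F : List I → R) (A : List I) :
    Psi (fun i => τ i * r) F A = Psi τ (fun A' => r * F A') A := by
  induction A generalizing F with
  | nil => simp [Psi_nil]
  | cons a A ih => simp only [Psi_cons, ih]; noncomm_ring

theorem Psi_smul [Algebra ℂ R] (τ : I → R) (c : ℂ) (F : List I → R) (A : List I) :
    Psi τ (fun A' => c • F A') A = c • Psi τ F A := by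
  induction A generalizing F with
  | nil => simp [Psi_nil]
  | cons a A ih => simp only [Psi_cons, ih, mul_smul_comm, smul_sub]

theorem Psi_left_smul [Algebra ℂ R] (τ : I → R) (c : ℂ) (F : List I → R) (A : List I) :
    Psi (fun i => c • τ i) F A = c • Psi τ F A := by
  induction A generalizing F with
  | nil => simp [Psi_nil]
  | cons a A ih => simp only [Psi_cons, ih, smul_mul_assoc, smul_sub]

theorem Psi_congr (τ σ : I → R) (F G : List I → R) (A : List I)
    (hτ : ∀ i ∈ A, τ i = σ i) (h : ∀ A', A' ⊆ A → F A' = G A') :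
    Psi τ F A = Psi σ G A := by
  induction A generalizing F G with
  | nil => rfl
  | cons a A ih =>
    rw [Psi_cons, Psi_cons, hτ a (by simp), h A (by simp),
      ih (fun A' => F (a :: A')) (fun A' => G (a :: A'))
        (fun i hi => hτ i (by simp [hi]))]
    intro A' hA'
    exact h _ (List.cons_subset_cons a hA')

theorem Psi_fubini (τ : I → R) (H : I → List I → R) (G : List I → R) (A B : List I) :
    Psi (fun i => Psi τ (H i) B) G A = Psi τ (fun B' => Psi (fun i => H i B') G A) B := by
  induction B generalizing H with
  | nil => simp only [Psi_nil]; exact Psi_left_zero G A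
  | cons b B ih =>
    simp only [Psi_cons]
    rw [Psi_left_sub, Psi_left_mul, ih (fun i A' => H i (b :: A'))]

/-- antisymmetry under adjacent swaps -/
def Alt {I : Type*} (F : List I → R) : Prop :=
  ∀ X a b Y, F (X ++ a :: b :: Y) = - F (X ++ b :: a :: Y)

theorem Alt.psi {F : List I → R} (hF : Alt F) (τ : I → R) : Alt (Psi τ F) := by
  intro X
  induction X generalizing F with
  | nil =>
    intro a b Y
    have h : (fun A' => F (a :: b :: A')) = fun A' => - F (b :: a :: A') := by
      funext A'; exact hF [] a b A'
    simp only [List.nil_append, Psi_cons, h, Psi_neg]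
    noncomm_ring
  | cons x X ih =>
    intro a b Y
    have h1 : Alt (fun A' => F (x :: A')) := fun X' a' b' Y' => hF (x :: X') a' b' Y'
    simp only [List.cons_append, Psi_cons]
    rw [ih h1 a b Y, hF X a b Y]
    noncomm_ring

theorem eq_zero_of_eq_neg [Algebra ℂ R] {x : R} (h : x = -x) : x = 0 := by
  have h2 : (2 : ℂ) • x = 0 := by
    rw [two_smul]; nth_rewrite 1 [h]; simp
  have := congrArg (fun y => (2⁻¹ : ℂ) • y) h2
  simpa [smul_smul] using this

theorem Alt.dup [Algebra ℂ R] {F : List I → R} (hF : Alt F) (k : I) (X Y : List I) :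
    F (k :: (X ++ k :: Y)) = 0 := by
  suffices h : ∀ P, F (P ++ k :: (X ++ k :: Y)) = 0 from h []
  induction X with
  | nil => intro P; exact eq_zero_of_eq_neg (hF P k k Y)
  | cons x X ih =>
    intro P
    rw [List.cons_append, hF]
    have := ih (P ++ [x])
    simp only [List.append_assoc, List.cons_append, List.nil_append] at this
    rw [this, neg_zero]

theorem Alt.mem [Algebra ℂ R] {F : List I → R} (hF : Alt F) (k : I) (A : List I) (h : k ∈ A) :
    F (k :: A) = 0 := by
  obtain ⟨X, Y, rfl⟩ := List.append_of_mem h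
  exact hF.dup k X Y

theorem Alt.move {F : List I → R} (hF : Alt F) (k : I) (P X Y : List I) :
    F (P ++ (X ++ k :: Y)) = (-1) ^ X.length * F (P ++ (k :: (X ++ Y))) := by
  induction X generalizing P with
  | nil => simp
  | cons x X ih =>
    have := ih (P ++ [x])
    simp only [List.append_assoc, List.cons_append, List.nil_append] at this
    rw [List.cons_append, this, hF P x k]
    simp [pow_succ]

end basic

section yang
variable {I J R : Type*} [Ring R] [Algebra ℂ R]

/-- RTT relation -/
def RTT (t : I → J → ℂ → R) : Prop := ∀ i j k l u v,
  (u - v) • (t i j u * t k l v - t k l v * t i j u) = t k j u * t i l v - t k j v * t i l u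

/-- quantum minor with columns `B`, as function of the row list -/
def M (t : I → J → ℂ → R) : List J → ℂ → List I → R
  | [], _ => fun A => match A with
    | [] => 1
    | _ :: _ => 0
  | c :: B, u => Psi (fun i => t i c u) (M t B (u - 1))

/-- replacement sum `Σ_s M_{B[s := b]} h(B_s)` -/
def S (t : I → J → ℂ → R) (b : J) (h : J → R) : List J → ℂ → List I → R
  | [], _ => fun _ => 0
  | c :: B, u => fun A => M t (b :: B) u A * h c + Psi (fun i => t i c u) (S t b h B (u - 1)) A

variable {t : I → J → ℂ → R}

theorem M_nil_cons (u : ℂ) (a : I) (A : List I) : M t [] u (a :: A) = 0 := rfl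

theorem M_cons (c : J) (B : List J) (u : ℂ) (A : List I) :
    M t (c :: B) u A = Psi (fun i => t i c u) (M t B (u - 1)) A := rfl

theorem S_cons (b : J) (h : J → R) (c : J) (B : List J) (u : ℂ) (A : List I) :
    S t b h (c :: B) u A =
      M t (b :: B) u A * h c + Psi (fun i => t i c u) (S t b h B (u - 1)) A := rfl

theorem M_alt_rows (B : List J) (u : ℂ) : Alt (M t B u) := by
  induction B generalizing u with
  | nil => intro X a b Y; cases X <;> simp [M_nil_cons]
  | cons c B ih => exact (ih _).psi _

theorem L1 (ht : RTT t) (k : I) (b c : J) (u v : ℂ) (F : List I → R) (A : List I) :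
    (u - v) • (t k b u * Psi (fun i => t i c v) F A
        - Psi (fun i => t i c v) (fun A' => t k b u * F A') A)
      = Psi (fun i => t i b u) (fun A' => t k c v * F A') A
        - Psi (fun i => t i b v) (fun A' => t k c u * F A') A := by
  rw [← Psi_left_mul, ← Psi_mid, ← Psi_mid, ← Psi_mid, ← Psi_left_sub, ← Psi_left_sub,
    ← Psi_left_smul]
  congr 1
  funext i
  exact ht k b i c u v

theorem L1' (ht : RTT t) (k : I) (b c : J) (u v : ℂ) (F : List I → R) (A : List I) :
    (u - v) • (Psi (fun i => t i b u) (fun A' => t k c v * F A') A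
        - t k c v * Psi (fun i => t i b u) F A)
      = t k b u * Psi (fun i => t i c v) F A - t k b v * Psi (fun i => t i c u) F A := by
  rw [← Psi_left_mul, ← Psi_mid, ← Psi_left_mul, ← Psi_left_mul, ← Psi_left_sub, ← Psi_left_sub,
    ← Psi_left_smul]
  congr 1
  funext i
  exact ht i b k c u v

theorem anti (ht : RTT t) (b c : J) (u v : ℂ) (F : List I → R) (A : List I) :
    (u - v) • (Psi (fun i => t i b u) (Psi (fun i => t i c v) F) A
        + Psi (fun i => t i c v) (Psi (fun i => t i b u) F) A)
      = Psi (fun i => t i b v) (Psi (fun i => t i c u) F) A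
        - Psi (fun i => t i b u) (Psi (fun i => t i c v) F) A := by
  induction A generalizing F with
  | nil => simp [Psi_nil]
  | cons a A ih =>
    have h1 := L1 ht a b c u v F A
    have h2 := L1' ht a b c u v F A
    have h3 := ih (fun A' => F (a :: A'))
    simp only [Psi_cons, Psi_sub]
    linear_combination (norm := module) h1 - h2 + h3

theorem anti1 (ht : RTT t) (b c : J) (u : ℂ) (F : List I → R) (A : List I) :
    Psi (fun i => t i b u) (Psi (fun i => t i c (u - 1)) F) A
      = - Psi (fun i => t i c u) (Psi (fun i => t i b (u - 1)) F) A := by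
  have h1 := anti ht b c u (u - 1) F A
  have h2 := anti ht c b u (u - 1) F A
  rw [sub_sub_cancel] at h1 h2
  linear_combination (norm := module) (2⁻¹ : ℂ) • h1 + (2⁻¹ : ℂ) • h2

theorem M_alt_cols (ht : RTT t) (u : ℂ) (A : List I) : Alt (fun B => M t B u A) := by
  intro X
  induction X generalizing u A with
  | nil => intro a b Y; exact anti1 ht a b u _ A
  | cons x X ih =>
    intro a b Y
    simp only [List.cons_append, M_cons]
    rw [← Psi_neg]
    congr 1
    funext A'
    exact ih (u - 1) A' a b Y

theorem S_anti (ht : RTT t) (h : J → R) (b c : J) (B : List J) (v : ℂ) (A : List I) :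
    Psi (fun i => t i b v) (S t c h B (v - 1)) A
      = - Psi (fun i => t i c v) (S t b h B (v - 1)) A := by
  induction B generalizing v A with
  | nil =>
    have : ∀ b, S t b h [] (v - 1) = fun _ : List I => (0 : R) := fun _ => rfl
    simp only [this, Psi_zero, neg_zero]
  | cons e B ih =>
    have key : ∀ b c, Psi (fun i => t i b v) (S t c h (e :: B) (v - 1)) A
        = M t (b :: c :: B) v A * h e
          - Psi (fun i => t i e v) (Psi (fun i => t i b (v - 1)) (S t c h B (v - 1 - 1))) A := by
      intro b c
      have : S t c h (e :: B) (v - 1) = fun A => M t (c :: B) (v - 1) A * h e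
          + Psi (fun i => t i e (v - 1)) (S t c h B (v - 1 - 1)) A := rfl
      rw [this, Psi_add, Psi_mul_right, anti1 ht b e]
      exact (sub_eq_add_neg _ _).symm
    rw [key, key]
    have h1 : M t (b :: c :: B) v A = - M t (c :: b :: B) v A := M_alt_cols ht v A [] b c B
    have h2 : (Psi (fun i => t i b (v - 1)) (S t c h B (v - 1 - 1)))
      = fun A' => - (Psi (fun i => t i c (v - 1)) (S t b h B (v - 1 - 1))) A' := by
      funext A'; exact ih (v - 1) A'
    rw [h1, h2, Psi_neg]
    noncomm_ring

theorem S_mem (ht : RTT t) (h : J → R) (b : J) (B : List J) (hb : b ∈ B) (v : ℂ) (A : List I) :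
    S t b h B v A = M t B v A * h b := by
  induction B generalizing v A with
  | nil => simp at hb
  | cons c B ih =>
    rw [S_cons]
    by_cases hbc : b = c
    · subst hbc
      rw [eq_zero_of_eq_neg (S_anti ht h b b B v A), add_zero]
    · have hb' : b ∈ B := by simpa [hbc] using hb
      have h1 : M t (b :: B) v A = 0 := (M_alt_cols ht v A).mem b B hb'
      have h2 : S t b h B (v - 1) = fun A : List I => M t B (v - 1) A * h b := by
        funext A; exact ih hb' _ A
      rw [h1, h2, Psi_mul_right, zero_mul, zero_add, M_cons]

theorem S_zero (h : J → R) (b : J) (B : List J) (hB : ∀ e ∈ B, h e = 0) (v : ℂ) (A : List I) :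
    S t b h B v A = 0 := by
  induction B generalizing v A with
  | nil => rfl
  | cons c B ih =>
    have h2 : S t b h B (v - 1) = fun A : List I => 0 := by
      funext A; exact ih (fun e he => hB e (by simp [he])) _ A
    rw [S_cons, h2, Psi_zero, hB c (by simp)]; simp

theorem S_add (h h' : J → R) (b : J) (B : List J) (v : ℂ) (A : List I) :
    S t b (fun e => h e + h' e) B v A = S t b h B v A + S t b h' B v A := by
  induction B generalizing v A with
  | nil => simp [S]
  | cons c B ih =>
    have h2 : S t b (fun e => h e + h' e) B (v - 1)
        = fun A : List I => S t b h B (v - 1) A + S t b h' B (v - 1) A := by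
      funext A; exact ih _ A
    simp only [S_cons, h2, Psi_add]; noncomm_ring

theorem S_smul (h : J → R) (x : ℂ) (b : J) (B : List J) (v : ℂ) (A : List I) :
    S t b (fun e => x • h e) B v A = x • S t b h B v A := by
  induction B generalizing v A with
  | nil => simp [S]
  | cons c B ih =>
    have h2 : S t b (fun e => x • h e) B (v - 1)
        = fun A : List I => x • S t b h B (v - 1) A := by
      funext A; exact ih _ A
    simp only [S_cons, h2, Psi_smul, mul_smul_comm, smul_add]

theorem S_psi (h : I → J → R) (G : List I → R) (b : J) (B : List J) (v : ℂ) (A C : List I) :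
    Psi (fun i => S t b (h i) B v A) G C = S t b (fun e => Psi (fun i => h i e) G C) B v A := by
  induction B generalizing v A with
  | nil => exact Psi_left_zero G C
  | cons c B ih =>
    have h2 : S t b (fun e => Psi (fun i => h i e) G C) B (v - 1)
        = fun A : List I => Psi (fun i => S t b (h i) B (v - 1) A) G C := by
      funext A; exact (ih _ A).symm
    simp only [S_cons, h2]
    rw [Psi_left_add, Psi_left_mul, Psi_fubini]

/-- commutation of a generator with a quantum minor -/
theorem R2 (ht : RTT t) (k : I) (b : J) (B : List J) (u v : ℂ)
    (hd : ∀ j : ℕ, u - v + (j + 1) ≠ 0) (A : List I) :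
    (u - v) • (t k b u * M t B v A - M t B v A * t k b u)
      = Psi (fun i => t i b u) (fun A' => M t B v (k :: A')) A
        - S t b (fun e => t k e u) B v A := by
  induction B generalizing b v A with
  | nil =>
    have h1 : (fun A' => M t ([] : List J) v (k :: A')) = fun _ => 0 := by
      funext A'; rfl
    rw [h1, Psi_zero]
    cases A <;> simp [M, S]
  | cons c B ih =>
    have hd1 : ∀ j : ℕ, u - (v - 1) + (j + 1) ≠ 0 := by
      intro j; have := hd (j + 1); push_cast at this; intro h; apply this; linear_combination h
    have hne : u - (v - 1) ≠ 0 := by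
      have := hd 0; intro h; apply this; push_cast; linear_combination h
    -- the inductive hypothesis, pushed through a `Psi`
    have IH : ∀ (b e : J),
        (u - (v - 1)) • (Psi (fun i => t i e v) (fun A' => t k b u * M t B (v - 1) A') A
            - Psi (fun i => t i e v) (M t B (v - 1)) A * t k b u)
          = Psi (fun i => t i e v)
              (Psi (fun i => t i b u) (fun A' => M t B (v - 1) (k :: A'))) A
            - Psi (fun i => t i e v) (S t b (fun e => t k e u) B (v - 1)) A := by
      intro b e
      rw [← Psi_mul_right, ← Psi_sub, ← Psi_smul, ← Psi_sub]
      congr 1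
      funext A'
      exact ih b (v - 1) hd1 A'
    have e1 := IH b c
    have e2 := IH c b
    have e3 := L1 ht k b c u v (M t B (v - 1)) A
    have e4 := anti ht b c u v (fun A' => M t B (v - 1) (k :: A')) A
    have e5 := S_anti ht (fun e => t k e u) b c B v A
    have e6 : (fun A' => M t (c :: B) v (k :: A')) = fun A' => t k c v * M t B (v - 1) A'
        - Psi (fun i => t i c v) (fun A' => M t B (v - 1) (k :: A')) A' := by
      funext A'; rfl
    rw [e6, Psi_sub, S_cons, M_cons, M_cons]
    have : ∀ x y : R, (u - (v - 1)) • (x - y) = 0 → x = y := by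
      intro x y h
      rcases smul_eq_zero.1 h with h | h
      · exact absurd h hne
      · exact sub_eq_zero.1 h
    apply this
    linear_combination (norm := module) (u - (v - 1)) • e3 + (u - v) • e1 - e2 + e4 + e5



theorem R2mem (ht : RTT t) (k : I) (b : J) (B : List J) (u v : ℂ)
    (hd : ∀ j : ℕ, u - v + (j + 1) ≠ 0) (A : List I) (hk : k ∈ A) :
    (u - v - 1) • (t k b u * M t B v A)
      = (u - v) • (M t B v A * t k b u) - S t b (fun e => t k e u) B v A := by
  have h1 := R2 ht k b B u v hd A
  have h2 : Psi (fun i => t i b u) (M t B v) (k :: A) = 0 :=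
    ((M_alt_rows B v).psi _).mem k A hk
  rw [Psi_cons] at h2
  linear_combination (norm := module) h1 - h2

/-- the generating functions are quadratic with scalar leading term -/
def Quad (t : I → J → ℂ → R) (δ : I → J → ℂ) (T1 T2 : I → J → R) : Prop :=
  ∀ i j u, t i j u = u ^ 2 • (δ i j • (1 : R)) + u • T1 i j + T2 i j

variable {δ : I → J → ℂ} {T1 T2 : I → J → R}

theorem good_add (v : ℂ) (m : ℕ) (j : ℕ) : (v + m) - v + ((j : ℂ) + 1) ≠ 0 := by
  have : (v + m) - v + ((j : ℂ) + 1) = ((m + j + 1 : ℕ) : ℂ) := by push_cast; ring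
  rw [this]
  exact Nat.cast_ne_zero.2 (by omega)

theorem comm_gen (ht : RTT t) (hq : Quad t δ T1 T2) (k : I) (b : J) (B : List J) (u v : ℂ)
    (A : List I) (hk : k ∈ A) (hb : b ∈ B) :
    t k b u * M t B v A = M t B v A * t k b u := by
  have key : ∀ m : ℕ, t k b (v + (m + 2 : ℕ)) * M t B v A
      = M t B v A * t k b (v + (m + 2 : ℕ)) := by
    intro m
    have h := R2mem ht k b B (v + (m + 2 : ℕ)) v (good_add v _) A hk
    rw [S_mem ht _ b B hb] at h
    have hne : (v + (m + 2 : ℕ)) - v - 1 ≠ 0 := by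
      have : (v + (m + 2 : ℕ)) - v - 1 = ((m + 1 : ℕ) : ℂ) := by push_cast; ring
      rw [this]
      exact Nat.cast_ne_zero.2 (by omega)
    have h' : (v + (m + 2 : ℕ) - v - 1) • (t k b (v + (m + 2 : ℕ)) * M t B v A)
        = (v + (m + 2 : ℕ) - v - 1) • (M t B v A * t k b (v + (m + 2 : ℕ))) := by
      rw [h]; module
    exact smul_right_injective _ hne h'
  have k0 := key 0
  have k1 := key 1
  simp only [hq k b, add_mul, mul_add, smul_mul_assoc, mul_smul_comm, one_mul, mul_one] at k0 k1 ⊢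
  push_cast at k0 k1
  linear_combination (norm := (push_cast; module)) (u - v - 2) • k1 - (u - v - 3) • k0

theorem Psi_comm (τ : I → R) (F : List I → R) (A : List I) (Z : R)
    (hτ : ∀ i ∈ A, τ i * Z = Z * τ i) (hF : ∀ A', A' ⊆ A → F A' * Z = Z * F A') :
    Psi τ F A * Z = Z * Psi τ F A := by
  rw [← Psi_mul_right, ← Psi_left_mul,
    Psi_congr (fun i => Z * τ i) (fun i => τ i * Z) F F A (fun i hi => (hτ i hi).symm)
      (fun _ _ => rfl), Psi_mid]
  exact Psi_congr _ _ _ _ A (fun _ _ => rfl) hF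

theorem comm_M (ht : RTT t) (hq : Quad t δ T1 T2) (B C : List J) (u v : ℂ)
    (A A' : List I) (hA : A' ⊆ A) (hC : C ⊆ B) :
    M t C u A' * M t B v A = M t B v A * M t C u A' := by
  induction C generalizing u A' with
  | nil => cases A' <;> simp [M]
  | cons c C ih =>
    rw [M_cons]
    apply Psi_comm
    · intro i hi
      exact comm_gen ht hq i c B u v A (hA hi) (hC (by simp))
    · intro A'' hA''
      exact ih (u - 1) A'' (fun x hx => hA (hA'' hx)) (fun x hx => hC (by simp [hx]))

theorem main (ht : RTT t) (hq : Quad t δ T1 T2) (B C : List J) (q : J) (u v : ℂ)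
    (hd : ∀ j : ℕ, u - v + (j + 1) ≠ 0)
    (A A' : List I) (hA : A' ⊆ A) (hC : C ⊆ B) :
    (u - v - 1) • (M t (q :: C) u A' * M t B v A)
      = (u - v) • (M t B v A * M t (q :: C) u A')
        - S t q (fun e => M t (e :: C) u A') B v A := by
  have h1 : M t (q :: C) u A' * M t B v A
      = Psi (fun i => t i q u * M t B v A) (M t C (u - 1)) A' := by
    rw [M_cons, ← Psi_mul_right, Psi_mid]
    exact Psi_congr _ _ _ _ A' (fun _ _ => rfl)
      (fun A'' h => comm_M ht hq B C _ v A A'' (fun x hx => hA (h hx)) hC)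
  have h2 := S_psi (t := t) (fun i e => t i e u) (M t C (u - 1)) q B v A A'
  rw [h1, M_cons, ← Psi_left_mul, ← Psi_left_smul, ← Psi_left_smul]
  simp only [M_cons]
  rw [← h2, ← Psi_left_sub]
  exact Psi_congr _ _ _ _ A' (fun i hi => R2mem ht i q B u v hd A (hA hi)) (fun _ _ => rfl)

theorem xy_rel (ht : RTT t) (hq : Quad t δ T1 T2) (C : List J) (j k : J) (u v : ℂ)
    (hd : ∀ j : ℕ, u - v + (j + 1) ≠ 0) (A : List I) :
    (u - v - 1) • (M t (j :: C) u A * M t (k :: C) v A)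
      = (u - v) • (M t (k :: C) v A * M t (j :: C) u A)
        - M t (j :: C) v A * M t (k :: C) u A := by
  rw [main ht hq (k :: C) C j u v hd A A (fun _ h => h) (by simp), S_cons]
  have h : S t j (fun e => M t (e :: C) u A) C (v - 1) = fun _ : List I => 0 := by
    funext A'
    exact S_zero _ _ _ (fun e he => (M_alt_cols ht u A).mem e C he) _ _
  rw [h, Psi_zero, add_zero]

theorem part_two (ht : RTT t) (hq : Quad t δ T1 T2) (C : List J) (p q r : J) (u : ℂ)
    (A A' : List I) (hA : A' ⊆ A) :
    M t (p :: (C ++ [r])) u A * M t (C ++ [q]) u A'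
      = M t (p :: C) u A' * M t (C ++ [q, r]) u A
        + M t (p :: (C ++ [q])) u A * M t (C ++ [r]) u A' := by
  have h := main ht hq (q :: r :: C) C p u u (fun j => by
    have := good_add u 0 j; simpa using this) A A' hA (fun x hx => by simp [hx])
  have h0 : S t p (fun e => M t (e :: C) u A') C (u - 1 - 1) = fun _ : List I => 0 := by
    funext A''
    exact S_zero _ _ _ (fun e he => (M_alt_cols ht u A').mem e C he) _ _
  have hS : S t p (fun e => M t (e :: C) u A') (q :: r :: C) u A
      = M t (p :: r :: C) u A * M t (q :: C) u A'
        + M t (q :: p :: C) u A * M t (r :: C) u A' := by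
    rw [S_cons]
    have : S t p (fun e => M t (e :: C) u A') (r :: C) (u - 1)
        = fun A'' => M t (p :: C) (u - 1) A'' * M t (r :: C) u A' := by
      funext A''
      rw [S_cons, h0, Psi_zero, add_zero]
    rw [this, Psi_mul_right]
    rfl
  rw [hS, sub_self, zero_smul, zero_sub, zero_sub, neg_smul, one_smul] at h
  have a1 : ∀ x, M t (C ++ [x]) u A' = (-1) ^ C.length * M t (x :: C) u A' := by
    intro x
    simpa using (M_alt_cols ht u A').move x [] C []
  have a2 : ∀ x y, M t (y :: (C ++ [x])) u A = (-1) ^ C.length * M t (y :: x :: C) u A := by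
    intro x y
    simpa using (M_alt_cols ht u A).move x [y] C []
  have a3 : M t (C ++ [q, r]) u A = (-1) ^ C.length * M t (q :: (C ++ [r])) u A := by
    simpa using (M_alt_cols ht u A).move q [] C [r]
  have a4 : M t (p :: q :: C) u A = - M t (q :: p :: C) u A := M_alt_cols ht u A [] p q C
  rw [a1, a1, a2, a2, a3, a2, a4]
  rcases neg_one_pow_eq_or R C.length with hs | hs <;> rw [hs]
  · linear_combination (norm := noncomm_ring) h
  · linear_combination (norm := noncomm_ring) h

/-- the bracket with the first-order generator -/
theorem ad_E (ht : RTT t) (hq : Quad t δ T1 T2) (C : List J) (k : I) (k' b : J) (v : ℂ)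
    (A : List I) (hk : k ∈ A) (h1 : δ k k' = 1) (h0 : ∀ e ∈ C, δ k e = 0) (hb : δ k b = 0) :
    T1 k b * M t (k' :: C) v A - M t (k' :: C) v A * T1 k b = - M t (b :: C) v A := by
  have hS : ∀ u, S t b (fun e => t k e u) (k' :: C) v A
      = u ^ 2 • M t (b :: C) v A + u • S t b (T1 k) (k' :: C) v A
        + S t b (T2 k) (k' :: C) v A := by
    intro u
    have e1 : (fun e => t k e u)
        = fun e => (u ^ 2 • (δ k e • (1 : R)) + u • T1 k e) + T2 k e := by
      funext e; exact hq k e u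
    have e2 : S t b (fun e => δ k e • (1 : R)) (k' :: C) v A = M t (b :: C) v A := by
      have : S t b (fun e => δ k e • (1 : R)) C (v - 1) = fun _ : List I => 0 := by
        funext A'
        exact S_zero _ _ _ (fun e he => by simp [h0 e he]) _ _
      rw [S_cons, this, Psi_zero, h1]; simp
    rw [e1, S_add, S_add, S_smul, S_smul, e2]
  have key : ∀ m : ℕ, _ := fun m => R2mem ht k b (k' :: C) (v + (m : ℕ)) v (good_add v m) A hk
  have k0 := key 0
  have k1 := key 1
  have k2 := key 2
  rw [hS] at k0 k1 k2
  simp only [hq k b, hb, zero_smul, smul_zero, zero_add, add_mul, mul_add, smul_mul_assoc,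
    mul_smul_comm, one_mul, mul_one] at k0 k1 k2
  push_cast at k0 k1 k2
  linear_combination (norm := (push_cast; module))
    (2⁻¹ : ℂ) • k0 - k1 + (2⁻¹ : ℂ) • k2

end yang

section prods
variable {R : Type*} [Ring R] [Algebra ℂ R]

/-- `x(v+k-1)...x(v)` -/
def TT (x : ℂ → R) (v : ℂ) : ℕ → R
  | 0 => 1
  | k + 1 => x (v + k) * TT x v k

theorem TT_succ (x : ℂ → R) (v : ℂ) (k : ℕ) : TT x v (k + 1) = x (v + k) * TT x v k := rfl

theorem TT_succ' (x : ℂ → R) (v : ℂ) (k : ℕ) : TT x v (k + 1) = TT x (v + 1) k * x v := by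
  induction k with
  | zero => simp [TT]
  | succ k ih =>
    rw [TT_succ, ih, TT_succ x (v + 1) k, mul_assoc]
    congr 2
    push_cast; ring

theorem TT_comm (x : ℂ → R) (hx : ∀ u v, x u * x v = x v * x u) (u v : ℂ) (k : ℕ) :
    x u * TT x v k = TT x v k * x u := by
  induction k with
  | zero => simp [TT]
  | succ k ih => rw [TT_succ, ← mul_assoc, hx, mul_assoc, ih, mul_assoc]

theorem TT_push (x y : ℂ → R) (hx : ∀ u v, x u * x v = x v * x u)
    (h : ∀ (v : ℂ) (k : ℕ), (k : ℂ) • (y (v + k) * x v)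
      = ((k : ℂ) + 1) • (x v * y (v + k)) - x (v + k) * y v)
    (v : ℂ) (k : ℕ) :
    y (v + (k + 1 : ℕ)) * TT x v (k + 1) = ((k : ℂ) + 2) • (TT x v (k + 1) * y (v + (k + 1 : ℕ)))
      - ((k : ℂ) + 1) • (x (v + (k + 1 : ℕ)) * TT x v k * y (v + k)) := by
  induction k generalizing v with
  | zero =>
    have := h v 1
    simp only [TT, Nat.cast_zero, Nat.cast_one, zero_add, add_zero, mul_one] at this ⊢
    linear_combination (norm := module) this
  | succ k ih =>
    have e1 := ih (v + 1)
    have c1 : v + 1 + ((k + 1 : ℕ) : ℂ) = v + ((k + 1 + 1 : ℕ) : ℂ) := by push_cast; ring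
    have c2 : v + 1 + (k : ℂ) = v + ((k + 1 : ℕ) : ℂ) := by push_cast; ring
    rw [c1, c2] at e1
    have h1 := h v (k + 1 + 1)
    have h2 := h v (k + 1)
    have e3 : TT x v (k + 1 + 1) = TT x (v + 1) (k + 1) * x v := TT_succ' x v (k + 1)
    have e4 : TT x v (k + 1) = TT x (v + 1) k * x v := TT_succ' x v k
    have e5 : TT x (v + 1) (k + 1) = x (v + (k + 1 : ℕ)) * TT x (v + 1) k := by
      rw [TT_succ, c2]
    generalize hU : v + ((k + 1 + 1 : ℕ) : ℂ) = U at *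
    generalize hW : v + ((k + 1 : ℕ) : ℂ) = W at *
    have cU := TT_comm x hx U (v + 1) k
    have cW := TT_comm x hx W (v + 1) k
    have q1 := congrArg (fun z => z * x v) e1
    have q2 := congrArg (fun z => TT x (v + 1) (k + 1) * z) h1
    have q3 := congrArg (fun z => x U * TT x (v + 1) k * z) h2
    have q4 : TT x (v + 1) (k + 1) * (x U * y v) = x U * TT x (v + 1) k * (x W * y v) := by
      rw [← mul_assoc, ← TT_comm x hx U, e5, cW]; simp only [mul_assoc]
    simp only [sub_mul, mul_sub, smul_mul_assoc, mul_smul_comm, smul_sub] at q1 q2 q3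
    rw [e3, e4]
    simp only [mul_assoc] at q1 q2 q3 q4 ⊢
    push_cast at q1 q2 q3 ⊢
    linear_combination (norm := module) q1 + q2 - q3 - q4

theorem part_one (E : R) (x y : ℂ → R) (hx : ∀ u v, x u * x v = x v * x u)
    (h : ∀ (v : ℂ) (k : ℕ), (k : ℂ) • (y (v + k) * x v)
      = ((k : ℂ) + 1) • (x v * y (v + k)) - x (v + k) * y v)
    (hE : ∀ v, E * x v - x v * E = - y v) (v : ℂ) (k : ℕ) :
    E * TT x v (k + 1) - TT x v (k + 1) * E = -((k : ℂ) + 1) • (TT x v k * y (v + k)) := by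
  induction k with
  | zero => simp [TT, hE]
  | succ k ih =>
    have h1 := TT_push x y hx h v k
    have h2 := hE (v + (k + 1 : ℕ))
    rw [TT_succ x v (k + 1)]
    have q1 := congrArg (fun z => z * TT x v (k + 1)) h2
    have q2 := congrArg (fun z => x (v + (k + 1 : ℕ)) * z) ih
    simp only [sub_mul, mul_sub, neg_mul, smul_mul_assoc, mul_smul_comm, mul_assoc] at q1 q2 h1 ⊢
    push_cast at q1 q2 h1 ⊢
    linear_combination (norm := module) q1 + q2 - h1

theorem kxy (E : R) (x y : ℂ → R) (hx : ∀ u v, x u * x v = x v * x u)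
    (hE : ∀ v, E * x v - x v * E = - y v)
    (hd : ∀ (v : ℂ) (k : ℕ), ((v + k) - v - 1) • (y (v + k) * x v)
      = ((v + k) - v) • (x v * y (v + k)) - y v * x (v + k)) (v : ℂ) (k : ℕ) :
    (k : ℂ) • (y (v + k) * x v)
      = ((k : ℂ) + 1) • (x v * y (v + k)) - x (v + k) * y v := by
  have h1 := hd v k
  rw [add_sub_cancel_left] at h1
  generalize v + (k : ℂ) = w at *
  have q1 := congrArg (fun z => z * x v) (hE w)
  have q2 := congrArg (fun z => x w * z) (hE v)
  have q3 := congrArg (fun z => z * x w) (hE v)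
  have q4 := congrArg (fun z => x v * z) (hE w)
  have q5 := congrArg (fun z => E * z - z * E) (hx w v)
  simp only [sub_mul, mul_sub, neg_mul, mul_neg, mul_assoc] at q1 q2 q3 q4 q5
  linear_combination (norm := module) h1 + q1 + q2 - q3 - q4 - q5
end prods

section expand
variable {I J R : Type*} [Ring R] [Algebra ℂ R]

theorem Psi_ofFn (τ : I → R) (F : List I → R) (l : ℕ) (a : Fin (l + 1) → I) :
    Psi τ F (List.ofFn a)
      = ∑ i : Fin (l + 1), ((-1 : ℂ) ^ (i : ℕ)) •
          (τ (a i) * F (List.ofFn fun s => a (i.succAbove s))) := by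
  induction l generalizing F with
  | zero =>
    simp [Psi]
  | succ l ih =>
    rw [List.ofFn_succ, Psi_cons, ih, Fin.sum_univ_succ (n := l + 1), sub_eq_add_neg, ← Finset.sum_neg_distrib]
    congr 1
    · simp
    · refine Finset.sum_congr rfl fun i _ => ?_
      rw [List.ofFn_succ (f := fun s => a (i.succ.succAbove s))]
      simp [pow_succ]

theorem perm_aux (l : ℕ) (i : Fin (l + 1)) : ∃ ρ : Equiv.Perm (Fin l),
    (∀ j : Fin l, Equiv.swap 0 i j.succ = i.succAbove (ρ j)) ∧
    ∀ σ : Equiv.Perm (Fin l),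
      ((Equiv.Perm.sign (Equiv.Perm.decomposeFin.symm (i, σ)) : ℤ) : ℂ)
        = (-1) ^ (i : ℕ) * ((Equiv.Perm.sign (ρ * σ) : ℤ) : ℂ) := by
  refine Fin.cases ?_ (fun i => ?_) i
  · exact ⟨1, by simp, by intro σ; simp [Equiv.Perm.decomposeFin.symm_sign]⟩
  · cases l with
    | zero => exact i.elim0
    | succ l =>
    refine ⟨i.cycleRange, fun j => (Fin.succAbove_cycleRange i j).symm, fun σ => ?_⟩
    rw [Equiv.Perm.decomposeFin.symm_sign, if_neg (Fin.succ_ne_zero i)]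
    simp only [Equiv.Perm.sign_mul, Fin.sign_cycleRange, Fin.val_succ, pow_succ]
    push_cast
    have : ((-1 : ℂ) ^ (i : ℕ)) * (-1) ^ (i : ℕ) = 1 := by
      rw [← mul_pow]; simp
    linear_combination (((Equiv.Perm.sign σ : ℤ) : ℂ)) * this

theorem expand (t : I → J → ℂ → R) (l : ℕ) (a : Fin l → I) (b : Fin l → J) (u : ℂ) :
    ∑ σ : Equiv.Perm (Fin l), (((Equiv.Perm.sign σ : ℤ) : ℂ)) •
        (List.ofFn fun s : Fin l => t (a (σ s)) (b s) (u - ((s : ℕ) : ℂ))).prod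
      = M t (List.ofFn b) u (List.ofFn a) := by
  induction l generalizing u with
  | zero => simp [M]
  | succ l ih =>
    rw [List.ofFn_succ (f := b), M_cons, Psi_ofFn, Finset.univ_perm_fin_succ,
      ← Finset.univ_product_univ]
    simp only [Finset.sum_map, Equiv.toEmbedding_apply, Finset.sum_product]
    refine Finset.sum_congr rfl fun i _ => ?_
    obtain ⟨ρ, h1, h2⟩ := perm_aux l i
    rw [← ih (fun s => a (i.succAbove s)) (fun s => b s.succ) (u - 1), Finset.mul_sum,
      Finset.smul_sum]
    conv_rhs => rw [← Equiv.sum_comp (Equiv.mulLeft ρ)]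
    refine Finset.sum_congr rfl fun σ _ => ?_
    rw [h2, List.ofFn_succ, List.prod_cons]
    simp only [Equiv.Perm.decomposeFin_symm_apply_zero, Equiv.Perm.decomposeFin_symm_apply_succ,
      h1, Equiv.coe_mulLeft, Equiv.Perm.mul_apply, mul_smul_comm, smul_smul, Fin.val_zero,
      Nat.cast_zero, sub_zero, Fin.val_succ, Nat.cast_add, Nat.cast_one, sub_sub, add_comm]

end expand

section rep
variable {n : ℕ} {V : Type*} [AddCommGroup V] [Module ℂ V]
  (T : ℕ → Fin n → Fin n → (V →ₗ[ℂ] V))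

/-- the generating function, valued in the endomorphism ring -/
noncomputable def tt (i j : Fin n) (u : ℂ) : Module.End ℂ V := Tpoly T i j u

theorem qminor_eq (l : ℕ) (a b : Fin l → Fin n) (u : ℂ) :
    TqminorPoly T l a b u = M (tt T) (List.ofFn b) u (List.ofFn a) := by
  rw [← expand]
  rfl

theorem tt_quad : Quad (tt T) (fun i j => if i = j then 1 else 0) (T 1) (T 2) := by
  intro i j u
  unfold tt Tpoly
  by_cases h : i = j <;> simp [h, Module.End.one_eq_id]

theorem tt_rtt (hT : IsYangianRep n T)
    (hvan : ∀ r : ℕ, 3 ≤ r → ∀ i j : Fin n, T r i j = 0) : RTT (tt T) := by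
  intro i j k l u v
  have h0 : ∀ i j, (T 0 i j : Module.End ℂ V) = (if i = j then (1 : ℂ) else 0) • 1 := by
    intro i j
    rw [hT.1 i j]
    split_ifs <;> simp [Module.End.one_eq_id]
  have h3 : ∀ i j, (T 3 i j : Module.End ℂ V) = 0 := hvan 3 le_rfl
  have rel : ∀ r s : ℕ, ((T (r + 1) i j : Module.End ℂ V) * T s k l - T s k l * T (r + 1) i j)
      - (T r i j * T (s + 1) k l - T (s + 1) k l * T r i j)
    = T r k j * T s i l - T s k j * T r i l := fun r s => hT.2 r s i j k l
  have r00 := rel 0 0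
  have r01 := rel 0 1
  have r02 := rel 0 2
  have r10 := rel 1 0
  have r11 := rel 1 1
  have r12 := rel 1 2
  have r20 := rel 2 0
  have r21 := rel 2 1
  have r22 := rel 2 2
  simp only [zero_add, Nat.reduceAdd, h0, h3, zero_mul, mul_zero, smul_mul_assoc, mul_smul_comm,
    one_mul, mul_one] at r00 r01 r02 r10 r11 r12 r20 r21 r22
  simp only [tt_quad T _ _ _, add_mul, mul_add, smul_mul_assoc, mul_smul_comm, one_mul, mul_one]
  linear_combination (norm := module) (u ^ 2 * v ^ 2) • r00 + (u ^ 2 * v) • r01 + (u ^ 2) • r02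
    + (u * v ^ 2) • r10 + (u * v) • r11 + u • r12 + (v ^ 2) • r20 + v • r21 + r22

theorem seq_last {off l m : ℕ} (hl : l = m + 1) (h : off + l ≤ n) (r : Fin n)
    (hr : (r : ℕ) = off + m) :
    List.ofFn (idxSeq n off l h) = List.ofFn (idxSeq n off m (by omega)) ++ [r] := by
  subst hl
  rw [List.ofFn_succ_last]
  congr 2
  ext; simp [idxSeq, hr]

theorem seq_first {off l m : ℕ} (hl : l = m + 1) (h : off + l ≤ n) (r : Fin n)
    (hr : (r : ℕ) = off) (off' : ℕ) (ho : off' = off + 1) :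
    List.ofFn (idxSeq n off l h) = r :: List.ofFn (idxSeq n off' m (by omega)) := by
  subst hl ho
  rw [List.ofFn_succ]
  congr 1
  · ext; simp [idxSeq, hr]
  · congr 1
    funext s
    ext; simp [idxSeq]; omega

theorem seqLast_last {off l m : ℕ} (hl : l = m + 1) (h : off + l ≤ n) (hn : 1 ≤ n) (r : Fin n)
    (hr : (r : ℕ) = n - 1) :
    List.ofFn (idxSeqLast n off l h hn) = List.ofFn (idxSeq n off m (by omega)) ++ [r] := by
  subst hl
  rw [List.ofFn_succ_last]
  congr 2
  · funext s
    have := s.isLt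
    have hs : ¬ (s.castSucc : ℕ) = m + 1 - 1 := by simp; omega
    simp only [idxSeqLast, if_neg hs]
    rfl
  · ext; simp [idxSeqLast, hr]

theorem mem_seq {off l : ℕ} (h : off + l ≤ n) (r : Fin n) :
    r ∈ List.ofFn (idxSeq n off l h) ↔ off ≤ (r : ℕ) ∧ (r : ℕ) < off + l := by
  rw [List.mem_ofFn]
  constructor
  · rintro ⟨s, rfl⟩
    have := s.isLt
    simp [idxSeq]
  · rintro ⟨h1, h2⟩
    exact ⟨⟨r - off, by omega⟩, by ext; simp [idxSeq]; omega⟩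

theorem TT_eq (a r : ℕ) (ha : 1 ≤ a) (har : a < r) (hr : r ≤ n) (v : ℂ) (k : ℕ) :
    TTPoly T r a ha har hr v k
      = TT (R := Module.End ℂ V) (fun v => tauPoly T r a ha har hr v) v k := by
  induction k with
  | zero => rfl
  | succ k ih => rw [TTPoly, ih]; rfl

/-- part (i) with signs included -/
theorem part_one_list (hT : IsYangianRep n T)
    (hvan : ∀ r : ℕ, 3 ≤ r → ∀ i j : Fin n, T r i j = 0)
    (D : List (Fin n)) (q r : Fin n) (A : List (Fin n)) (hqA : q ∈ A) (hqD : q ∉ D)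
    (hqr : q ≠ r) (v : ℂ) (k : ℕ) :
    (T 1 q r : Module.End ℂ V) * TT (fun v => M (tt T) (D ++ [q]) v A) v (k + 1)
      - TT (fun v => M (tt T) (D ++ [q]) v A) v (k + 1) * T 1 q r
      = -((k : ℂ) + 1) • (TT (fun v => M (tt T) (D ++ [q]) v A) v k
          * M (tt T) (D ++ [r]) (v + k) A) := by
  have ht := tt_rtt T hT hvan
  have hq := tt_quad T
  have a1 : ∀ x v, M (tt T) (D ++ [x]) v A = (-1) ^ D.length * M (tt T) (x :: D) v A := by
    intro x v
    simpa using (M_alt_cols ht v A).move x [] D []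
  have hx : ∀ u v, M (tt T) (D ++ [q]) u A * M (tt T) (D ++ [q]) v A
      = M (tt T) (D ++ [q]) v A * M (tt T) (D ++ [q]) u A := fun u v =>
    comm_M ht hq _ _ u v A A (fun _ h => h) (fun _ h => h)
  have hE : ∀ v, (T 1 q r : Module.End ℂ V) * M (tt T) (D ++ [q]) v A
      - M (tt T) (D ++ [q]) v A * T 1 q r = - M (tt T) (D ++ [r]) v A := by
    intro v
    have h := ad_E ht hq D q q r v A hqA (by simp) (fun e he => by
      rw [if_neg]; rintro rfl; exact hqD he) (by simp [hqr])
    rw [a1, a1]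
    rcases neg_one_pow_eq_or (Module.End ℂ V) D.length with hs | hs <;> rw [hs]
    · simpa only [one_mul] using h
    · rw [neg_one_mul, neg_one_mul, ← h]; noncomm_ring
  have hd : ∀ (v : ℂ) (k : ℕ),
      ((v + k) - v - 1) • (M (tt T) (D ++ [r]) (v + k) A * M (tt T) (D ++ [q]) v A)
      = ((v + k) - v) • (M (tt T) (D ++ [q]) v A * M (tt T) (D ++ [r]) (v + k) A)
        - M (tt T) (D ++ [r]) v A * M (tt T) (D ++ [q]) (v + k) A := by
    intro v k
    have h := xy_rel ht hq D r q (v + k) v (good_add v k) A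
    simp only [a1]
    rcases neg_one_pow_eq_or (Module.End ℂ V) D.length with hs | hs <;> rw [hs]
    · simpa only [one_mul] using h
    · simpa only [neg_one_mul, neg_mul_neg] using h
  exact part_one _ _ (fun v => M (tt T) (D ++ [r]) v A) hx
    (kxy _ _ _ hx hE hd) hE v k

end rep
end QM

/-- In a representation of `Y(gl_n)` with `T^{(r)} = 0` for
`r ≥ 3`, for `1 ≤ a < n−1`:
(i) `[E_{n−1,n}, 𝒯_{na}(v,k)] = −k · 𝒯_{na}(v,k−1) · T^{a+1⋯n}_{a⋯n−2,n}(v+k−1)`;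
(ii) `T^{a+1⋯n}_{a⋯n−2,n}(u) T^{a+1⋯n−1}_{a+1⋯n−1}(u)
  = τ_{n−1,a}(u) T^{a+1⋯n}_{a+1⋯n}(u) + τ_{na}(u) T^{a+1⋯n−1}_{a+1⋯n−2,n}(u)`. -/
theorem lowering_operator_commutation_identities
    (n : ℕ) {V : Type*} [AddCommGroup V] [Module ℂ V]
    (T : ℕ → Fin n → Fin n → (V →ₗ[ℂ] V)) (hT : IsYangianRep n T)
    (hvan : ∀ r : ℕ, 3 ≤ r → ∀ i j : Fin n, T r i j = 0)
    (a : ℕ) (ha1 : 1 ≤ a) (ha2 : a < n - 1) :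
    (∀ k : ℕ, 1 ≤ k → ∀ v : ℂ,
      T 1 ⟨n - 2, by omega⟩ ⟨n - 1, by omega⟩ ∘ₗ TTPoly T n a ha1 (by omega) (by omega) v k
          - TTPoly T n a ha1 (by omega) (by omega) v k ∘ₗ T 1 ⟨n - 2, by omega⟩ ⟨n - 1, by omega⟩
        = (-(k : ℂ)) • (TTPoly T n a ha1 (by omega) (by omega) v (k - 1) ∘ₗ
            TqminorPoly T (n - a) (idxSeq n a (n - a) (by omega))
              (idxSeqLast n (a - 1) (n - a) (by omega) (by omega)) (v + (k : ℂ) - 1))) ∧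
    (∀ u : ℂ,
      TqminorPoly T (n - a) (idxSeq n a (n - a) (by omega))
            (idxSeqLast n (a - 1) (n - a) (by omega) (by omega)) u ∘ₗ
          TqminorPoly T (n - 1 - a) (idxSeq n a (n - 1 - a) (by omega))
            (idxSeq n a (n - 1 - a) (by omega)) u
        = tauPoly T (n - 1) a ha1 (by omega) (by omega) u ∘ₗ
            TqminorPoly T (n - a) (idxSeq n a (n - a) (by omega))
              (idxSeq n a (n - a) (by omega)) u
          + tauPoly T n a ha1 (by omega) (by omega) u ∘ₗ
            TqminorPoly T (n - 1 - a) (idxSeq n a (n - 1 - a) (by omega))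
              (idxSeqLast n a (n - 1 - a) (by omega) (by omega)) u) := by
  have hqn : n - 2 < n := by omega
  have hrn : n - 1 < n := by omega
  have hpn : a - 1 < n := by omega
  have c1 : List.ofFn (idxSeq n (a - 1) (n - a) (by omega))
      = ((⟨a - 1, hpn⟩ : Fin n) :: List.ofFn (idxSeq n a (n - a - 2) (by omega)))
        ++ [⟨n - 2, hqn⟩] := by
    rw [QM.seq_last (m := n - a - 1) (by omega) _ ⟨n - 2, hqn⟩ (by simp; omega),
      QM.seq_first (off := a - 1) (l := n - a - 1) (m := n - a - 2) (by omega) (by omega) ⟨a - 1, hpn⟩ rfl a (by omega)]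
  have c2 : List.ofFn (idxSeqLast n (a - 1) (n - a) (by omega) (by omega))
      = ((⟨a - 1, hpn⟩ : Fin n) :: List.ofFn (idxSeq n a (n - a - 2) (by omega)))
        ++ [⟨n - 1, hrn⟩] := by
    rw [QM.seqLast_last (m := n - a - 1) (by omega) _ _ ⟨n - 1, hrn⟩ rfl,
      QM.seq_first (off := a - 1) (l := n - a - 1) (m := n - a - 2) (by omega) (by omega) ⟨a - 1, hpn⟩ rfl a (by omega)]
  refine ⟨fun k hk v => ?_, fun u => ?_⟩
  · obtain ⟨k, rfl⟩ : ∃ m, k = m + 1 := ⟨k - 1, by omega⟩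
    have hx : (fun v => tauPoly T n a ha1 (by omega) (by omega) v)
        = fun v => QM.M (QM.tt T)
            (((⟨a - 1, hpn⟩ : Fin n) :: List.ofFn (idxSeq n a (n - a - 2) (by omega)))
              ++ [⟨n - 2, hqn⟩]) v (List.ofFn (idxSeq n a (n - a) (by omega))) := by
      funext v
      rw [tauPoly, QM.qminor_eq, c1]
    have hv : v + ((k + 1 : ℕ) : ℂ) - 1 = v + k := by push_cast; ring
    have hk' : -((k + 1 : ℕ) : ℂ) = -((k : ℂ) + 1) := by push_cast; ring
    rw [QM.TT_eq, QM.TT_eq, QM.qminor_eq, c2, hx, hv, hk']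
    refine QM.part_one_list T hT hvan _ _ _ _ ?_ ?_ ?_ v k
    · rw [QM.mem_seq]; simp; omega
    · rw [List.mem_cons, QM.mem_seq]; simp; omega
    · simp; omega
  · have c3 : List.ofFn (idxSeq n (a - 1) (n - 1 - a) (by omega))
        = (⟨a - 1, hpn⟩ : Fin n) :: List.ofFn (idxSeq n a (n - a - 2) (by omega)) :=
      QM.seq_first (off := a - 1) (m := n - a - 2) (by omega) (by omega) _ rfl a (by omega)
    have c4 : List.ofFn (idxSeq n a (n - 1 - a) (by omega))
        = List.ofFn (idxSeq n a (n - a - 2) (by omega)) ++ [(⟨n - 2, hqn⟩ : Fin n)] :=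
      QM.seq_last (by omega) _ _ (by simp; omega)
    have c5 : List.ofFn (idxSeq n a (n - a) (by omega))
        = List.ofFn (idxSeq n a (n - 1 - a) (by omega)) ++ [(⟨n - 1, hrn⟩ : Fin n)] :=
      QM.seq_last (by omega) _ _ (by simp; omega)
    have c6 : List.ofFn (idxSeqLast n a (n - 1 - a) (by omega) (by omega))
        = List.ofFn (idxSeq n a (n - a - 2) (by omega)) ++ [(⟨n - 1, hrn⟩ : Fin n)] :=
      QM.seqLast_last (by omega) _ _ _ rfl
    have h := QM.part_two (QM.tt_rtt T hT hvan) (QM.tt_quad T)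
      (List.ofFn (idxSeq n a (n - a - 2) (by omega))) ⟨a - 1, hpn⟩ ⟨n - 2, hqn⟩ ⟨n - 1, hrn⟩ u
      (List.ofFn (idxSeq n a (n - a) (by omega))) (List.ofFn (idxSeq n a (n - 1 - a) (by omega)))
      (by rw [c5]; exact List.subset_append_left _ _)
    simp only [tauPoly, QM.qminor_eq, c1, c2, c3, c6]
    simp only [c5, c4, List.append_assoc, List.cons_append, List.nil_append] at h ⊢
    exact h
end

section
/- Let V be a representation of the Yangian Y(gl_n) with T_{ij}^{(r)} = 0 for all r ≥ 3, and let ζ ∈ V satisfy T_{ij}(u)ζ = 0 for all 1 ≤ i < j ≤ n and T_{ii}(u)ζ = (u+λ_i)(u+μ_i)ζ for i = 1,…,n, for some complex numbers λ_1,…,λ_n, μ_1,…,μ_n; set l_j = λ_j − j + 1 and m_j = μ_j − j + 1, and write E_{in} := T_{in}^{(1)}. Then for every integer k ≥ 1, every complex v, and every 1 ≤ a ≤ n−1: (i) E_{in}·𝒯_{na}(v,k)ζ = 0 for i < a; (ii) for a < i ≤ n−1, E_{in}·𝒯_{na}(v,k)ζ = (−1)^{n−i} k · Π_{j=i+1}^n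 (v'+l_j)(v'+m_j) · τ_{ia}(v+k−1)·𝒯_{na}(v,k−1)ζ, where v' = v+a+k−1; and (iii) E_{an}·𝒯_{na}(v,k)ζ = (−1)^{n−a−1} k · ( 𝒯_{na}(v+1,k−1)·T^{a⋯n−1}_{a⋯n−1}(v) − 𝒯_{na}(v,k−1)·T^{a+1⋯n}_{a+1⋯n}(v+k−1) ) ζ. -/
structure FD (n : ℕ) (R : Type*) [Ring R] [Algebra ℂ R] where
  e : Fin n → R
  d : Fin n → R
  p : Fin n → Fin n → R
  q : Fin n → Fin n → R
  t : Fin n → Fin n → ℂ → R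
  t_eq : ∀ i j u, t i j u = u ^ 2 • (if i = j then (1 : R) else 0) + u • p i j + q i j
  ee : ∀ a b, e a * e b = - (e b * e a)
  dd : ∀ a b, d a * d b = - (d b * d a)
  de : ∀ k a, d k * e a = (if k = a then (1 : R) else 0) - e a * d k
  ep : ∀ a i j, p i j * e a = e a * p i j
  et : ∀ a i j u, t i j u * e a = e a * t i j u
  dt : ∀ a i j u, d a * t i j u = t i j u * d a
  dp : ∀ a i j, d a * p i j = p i j * d a
  rtt : ∀ i j k l u v, (u - v) • (t i j u * t k l v - t k l v * t i j u)
    = t k j u * t i l v - t k j v * t i l u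
  pt : ∀ i j k l u, p i j * t k l u - t k l u * p i j
    = (if k = j then t i l u else 0) - (if i = l then t k j u else 0)

namespace FD
variable {n : ℕ} {R : Type*} [Ring R] [Algebra ℂ R] (F : FD n R)

theorem eq_neg_self_zero {M : Type*} [AddCommGroup M] [Module ℂ M] {x : M} (h : x = -x) : x = 0 := by
  have h2 : (2 : ℂ) • x = 0 := by
    rw [two_smul]; nth_rewrite 1 [h]; simp
  simpa using h2

def x (b : Fin n) (u : ℂ) : R := ∑ a, F.e a * F.t a b u

def X : (r : ℕ) → (Fin r → Fin n) → ℂ → R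
  | 0, _, _ => 1
  | r + 1, b, u => F.x (b 0) u * X r (Fin.tail b) (u - 1)

def D (k : Fin n) : (r : ℕ) → (Fin r → Fin n) → ℂ → R
  | 0, _, _ => 0
  | r + 1, b, u => F.t k (b 0) u * F.X r (Fin.tail b) (u - 1)
      - F.x (b 0) u * D k r (Fin.tail b) (u - 1)

def S (k l : Fin n) (r : ℕ) (b : Fin r → Fin n) (v u : ℂ) : R :=
  ∑ i, F.X r (Function.update b i l) v * F.t k (b i) u

theorem S_succ (k l : Fin n) (r : ℕ) (b : Fin (r + 1) → Fin n) (v u : ℂ) :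
    F.S k l (r + 1) b v u = F.x l v * F.X r (Fin.tail b) (v - 1) * F.t k (b 0) u
      + F.x (b 0) v * F.S k l r (Fin.tail b) (v - 1) u := by
  unfold S
  rw [Fin.sum_univ_succ, Finset.mul_sum]
  congr 1
  · refine Finset.sum_congr rfl fun i _ => ?_
    simp only [X, Fin.tail_update_succ, mul_assoc]
    rw [Function.update_of_ne (Fin.succ_ne_zero i).symm]
    rfl

theorem x_mul_x (l b : Fin n) (u v : ℂ) :
    F.x l u * F.x b v = ∑ i, ∑ j, F.e i * F.e j * (F.t i l u * F.t j b v) := by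
  unfold x
  rw [Finset.sum_mul_sum]
  refine Finset.sum_congr rfl fun i _ => Finset.sum_congr rfl fun j _ => ?_
  rw [mul_assoc, ← mul_assoc (F.t i l u), F.et]; simp only [mul_assoc]

theorem x_mul_x' (l b : Fin n) (u v : ℂ) :
    F.x l u * F.x b v = - ∑ i, ∑ j, F.e i * F.e j * (F.t j l u * F.t i b v) := by
  rw [x_mul_x, Finset.sum_comm, ← Finset.sum_neg_distrib]
  refine Finset.sum_congr rfl fun i _ => ?_
  rw [← Finset.sum_neg_distrib]
  refine Finset.sum_congr rfl fun j _ => ?_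
  rw [F.ee j i, neg_mul]

theorem xx (l b : Fin n) (u v : ℂ) :
    (u - v) • (F.x l u * F.x b v + F.x b v * F.x l u) =
      F.x l v * F.x b u - F.x l u * F.x b v := by
  rw [F.x_mul_x' b l v u, F.x_mul_x l b u v]
  conv_rhs => rw [← F.x_mul_x, F.x_mul_x' l b u v, F.x_mul_x' l b v u]
  rw [← sub_eq_add_neg, neg_sub_neg]
  simp only [← Finset.sum_sub_distrib, Finset.smul_sum]
  refine Finset.sum_congr rfl fun i _ => Finset.sum_congr rfl fun j _ => ?_
  rw [← mul_sub, ← mul_sub, ← F.rtt, mul_smul_comm]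

theorem xx1 (l b : Fin n) (u : ℂ) :
    F.x l u * F.x b (u - 1) = - (F.x b u * F.x l (u - 1)) := by
  have h := F.xx l b (u - 1) u
  rw [show u - 1 - u = -1 by ring, neg_one_smul, neg_add] at h
  rw [eq_comm, ← sub_eq_zero] at h
  rw [← sub_eq_zero, ← h]
  abel

theorem tx (k l b : Fin n) (u v : ℂ) :
    (u - v) • (F.t k l u * F.x b v - F.x b v * F.t k l u) =
      F.x l u * F.t k b v - F.x l v * F.t k b u := by
  unfold x
  simp only [Finset.mul_sum, Finset.sum_mul, ← Finset.sum_sub_distrib, Finset.smul_sum]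
  refine Finset.sum_congr rfl fun i _ => ?_
  rw [← mul_assoc, F.et, mul_assoc, mul_assoc, mul_assoc, mul_assoc, ← mul_sub, ← mul_sub, ← F.rtt,
    mul_smul_comm]

theorem dx (k b : Fin n) (u : ℂ) : F.d k * F.x b u = F.t k b u - F.x b u * F.d k := by
  unfold x
  simp only [Finset.mul_sum, Finset.sum_mul, ← mul_assoc, F.de, sub_mul, Finset.sum_sub_distrib]
  congr 1
  · simp
  · refine Finset.sum_congr rfl fun i _ => ?_
    rw [mul_assoc, F.dt, mul_assoc]

theorem dX (k : Fin n) (r : ℕ) (b : Fin r → Fin n) (v : ℂ) :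
    F.d k * F.X r b v = F.D k r b v + ((-1 : ℂ) ^ r) • (F.X r b v * F.d k) := by
  induction r generalizing v with
  | zero => simp [X, D]
  | succ r ih =>
    simp only [X, D]
    rw [← mul_assoc, F.dx, sub_mul, mul_assoc (F.x _ _), ih, pow_succ, mul_add, mul_smul_comm,
      mul_assoc]
    module

/-- skew-symmetry for sums -/
theorem P (k l c : Fin n) (r : ℕ) (b : Fin r → Fin n) (v u : ℂ) :
    F.x c v * F.S k l r b (v - 1) u + F.x l v * F.S k c r b (v - 1) u = 0 := by
  induction r generalizing v with
  | zero => simp [S]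
  | succ r ih =>
    rw [S_succ, S_succ, mul_add, mul_add]
    simp only [← mul_assoc]
    rw [F.xx1 c l, F.xx1 c (b 0), F.xx1 l (b 0)]
    simp only [neg_mul]
    have h := congrArg (fun z => F.x (b 0) v * z) (ih (Fin.tail b) (v - 1))
    simp only [mul_add, mul_zero, ← mul_assoc] at h
    rw [← neg_eq_zero, ← h]
    abel

theorem main_aux (k l : Fin n) (r : ℕ) (b : Fin r → Fin n) (v u : ℂ)
    (hw : ∀ j : ℕ, u - v + (j + 1) ≠ 0) :
    (u - v) • (F.t k l u * F.X r b v - F.X r b v * F.t k l u) =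
      F.x l u * F.D k r b v - F.S k l r b v u := by
  induction r generalizing v l with
  | zero => simp [X, D, S]
  | succ r ih =>
    have hw' : ∀ j : ℕ, u - (v - 1) + (j + 1) ≠ 0 := by
      intro j
      have := hw (j + 1)
      push_cast at this
      intro h
      apply this
      rw [← h]; ring
    have ih1 := ih l (Fin.tail b) (v - 1) hw'
    have ih2 := ih (b 0) (Fin.tail b) (v - 1) hw'
    have hP := F.P k l (b 0) r (Fin.tail b) v u
    have hx := F.xx l (b 0) u v
    have ht := F.tx k l (b 0) u v
    rw [S_succ]
    simp only [X, D]
    set Y := F.X r (Fin.tail b) (v - 1)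
    set D' := F.D k r (Fin.tail b) (v - 1)
    set b0 := b 0
    have h0 : u - v + 1 ≠ 0 := by simpa using hw 0
    have e1 := congrArg (fun z => z * Y) ht
    have e2 := congrArg (fun z => F.x b0 v * z) ih1
    have e3 := congrArg (fun z => F.x l v * z) ih2
    have e4 := congrArg (fun z => z * D') hx
    simp only [mul_sub, sub_mul, add_mul, smul_mul_assoc, mul_smul_comm, smul_sub, smul_add,
      mul_assoc] at e1 e2 e3 e4 hP ⊢
    rw [← sub_eq_zero]
    apply (smul_eq_zero_iff_right h0).mp
    linear_combination (norm := module) (u - v + 1) • e1 + (u - v) • e2 - e3 + e4 + hP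

end FD

namespace FD
variable {n : ℕ} {R : Type*} [Ring R] [Algebra ℂ R] (F : FD n R)

theorem cubic_zero (f : ℂ → R) (c0 c1 c2 c3 : R) (v : ℂ)
    (hf : ∀ u, f u = c0 + u • c1 + u ^ 2 • c2 + u ^ 3 • c3)
    (h : ∀ j : ℕ, f (v + j) = 0) (u : ℂ) : f u = 0 := by
  have h0 := h 0
  have h1 := h 1
  have h2 := h 2
  have h3 := h 3
  rw [hf] at h0 h1 h2 h3 ⊢
  push_cast at h0 h1 h2 h3
  linear_combination (norm := skip) (-((u - v - 1) * (u - v - 2) * (u - v - 3)) / 6) • h0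
    + ((u - v) * (u - v - 2) * (u - v - 3) / 2) • h1
    - ((u - v) * (u - v - 1) * (u - v - 3) / 2) • h2
    + ((u - v) * (u - v - 1) * (u - v - 2) / 6) • h3
  module

theorem t_quad (i j : Fin n) (u : ℂ) :
    F.t i j u = F.q i j + u • F.p i j + u ^ 2 • (if i = j then (1 : R) else 0) := by
  rw [F.t_eq]; abel

theorem S_quad (k l : Fin n) (r : ℕ) (b : Fin r → Fin n) (v : ℂ) :
    ∃ s0 s1 s2, ∀ u, F.S k l r b v u = s0 + u • s1 + u ^ 2 • s2 := by
  refine ⟨∑ i, F.X r (Function.update b i l) v * F.q k (b i),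
    ∑ i, F.X r (Function.update b i l) v * F.p k (b i),
    ∑ i, F.X r (Function.update b i l) v * (if k = b i then (1 : R) else 0), fun u => ?_⟩
  simp only [S, t_quad, Finset.smul_sum, ← Finset.sum_add_distrib]
  refine Finset.sum_congr rfl fun i _ => ?_
  simp only [mul_add, mul_smul_comm]

theorem x_quad (l : Fin n) :
    ∃ s0 s1 s2, ∀ u, F.x l u = s0 + u • s1 + u ^ 2 • s2 := by
  refine ⟨∑ i, F.e i * F.q i l, ∑ i, F.e i * F.p i l,
    ∑ i, F.e i * (if i = l then (1 : R) else 0), fun u => ?_⟩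
  simp only [x, t_quad, Finset.smul_sum, ← Finset.sum_add_distrib]
  refine Finset.sum_congr rfl fun i _ => ?_
  simp only [mul_add, mul_smul_comm]

theorem main (k l : Fin n) (r : ℕ) (b : Fin r → Fin n) (v u : ℂ) :
    (u - v) • (F.t k l u * F.X r b v - F.X r b v * F.t k l u) =
      F.x l u * F.D k r b v - F.S k l r b v u := by
  obtain ⟨s0, s1, s2, hs⟩ := F.S_quad k l r b v
  obtain ⟨x0, x1, x2, hx⟩ := F.x_quad l
  rw [← sub_eq_zero]
  set Y := F.X r b v
  set Z := F.D k r b v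
  set q := F.q k l
  set p := F.p k l
  set o := if k = l then (1 : R) else 0
  refine cubic_zero (fun u => (u - v) • (F.t k l u * Y - Y * F.t k l u) - (F.x l u * Z - F.S k l r b v u))
    ((-v) • (q * Y - Y * q) - x0 * Z + s0)
    ((q * Y - Y * q) - v • (p * Y - Y * p) - x1 * Z + s1)
    ((p * Y - Y * p) - v • (o * Y - Y * o) - x2 * Z + s2) (o * Y - Y * o) v ?_ ?_ u
  · intro u
    simp only [hs, hx, F.t_quad]
    simp only [add_mul, mul_add, smul_mul_assoc, mul_smul_comm]
    module
  · intro j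
    rw [sub_eq_zero]
    apply F.main_aux
    intro i h
    have : ((j + i + 1 : ℕ) : ℂ) = 0 := by rw [← h]; push_cast; ring
    exact (Nat.cast_ne_zero.mpr (Nat.succ_ne_zero (j + i))) this

theorem X_remove (r : ℕ) (b : Fin (r + 1) → Fin n) (s : Fin (r + 1)) (u : ℂ) :
    F.X (r + 1) b u = ((-1 : ℂ) ^ (s : ℕ)) • (F.x (b s) u * F.X r (s.removeNth b) (u - 1)) := by
  induction r generalizing u with
  | zero =>
    have : s = 0 := by fin_cases s; rfl
    subst this
    simp [X]
  | succ r ih =>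
    refine Fin.cases ?_ (fun s => ?_) s
    · simp [X]
    · rw [show F.X (r + 1 + 1) b u = F.x (b 0) u * F.X (r + 1) (Fin.tail b) (u - 1) from rfl,
        ih _ s]
      have e : F.X (r + 1) (s.succ.removeNth b) (u - 1)
          = F.x (b 0) (u - 1) * F.X r (s.removeNth (Fin.tail b)) (u - 1 - 1) := by
        have h1 : (s.succ.removeNth b) 0 = b 0 := by simp [Fin.removeNth]
        have h2 : Fin.tail (s.succ.removeNth b) = s.removeNth (Fin.tail b) := by
          ext i; simp [Fin.removeNth, Fin.tail]
        rw [show F.X (r + 1) (s.succ.removeNth b) (u - 1) = F.x ((s.succ.removeNth b) 0) (u - 1) *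
          F.X r (Fin.tail (s.succ.removeNth b)) (u - 1 - 1) from rfl, h1, h2]
      rw [e, ← mul_assoc, F.xx1 (b s.succ) (b 0), mul_smul_comm, ← mul_assoc]
      simp only [Fin.tail, Fin.val_succ, pow_succ]
      simp

theorem X_rep (r : ℕ) (b : Fin r → Fin n) (u : ℂ) (i j : Fin r) (hij : i ≠ j) (h : b i = b j) :
    F.X r b u = 0 := by
  match r, b, i, j, hij, h with
  | 0, _, i, _, _, _ => exact i.elim0
  | 1, _, i, j, hij, _ => exact absurd (Subsingleton.elim i j) hij
  | r + 2, b, i, j, hij, h =>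
    obtain ⟨j', hj'⟩ := Fin.exists_succAbove_eq hij.symm
    rw [F.X_remove _ b i u, F.X_remove _ _ j']
    have : i.removeNth b j' = b i := by simp [Fin.removeNth, hj', h]
    rw [this, mul_smul_comm, ← mul_assoc]
    have h0 : F.x (b i) u * F.x (b i) (u - 1) = 0 := eq_neg_self_zero (F.xx1 _ _ _)
    rw [h0]; simp

theorem S_mem (k : Fin n) (r : ℕ) (b : Fin r → Fin n) (v u : ℂ) (i : Fin r) :
    F.S k (b i) r b v u = F.X r b v * F.t k (b i) u := by
  unfold S
  rw [Finset.sum_eq_single i]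
  · simp
  · intro j _ hj
    rw [F.X_rep r _ v i j hj.symm, zero_mul]
    simp [Function.update_of_ne hj.symm]
  · simp

def dA : (r : ℕ) → (Fin r → Fin n) → R
  | 0, _ => 1
  | r + 1, a => dA r (Fin.tail a) * F.d (a 0)

theorem dA_t (r : ℕ) (a : Fin r → Fin n) (k l : Fin n) (u : ℂ) :
    F.dA r a * F.t k l u = F.t k l u * F.dA r a := by
  induction r with
  | zero => simp [dA]
  | succ r ih => rw [dA, mul_assoc, F.dt, ← mul_assoc, ih, mul_assoc]

theorem dA_d_comm (r : ℕ) (a : Fin r → Fin n) (k : Fin n) :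
    F.d k * F.dA r a = ((-1 : ℂ) ^ r) • (F.dA r a * F.d k) := by
  induction r with
  | zero => simp [dA]
  | succ r ih =>
    rw [dA, ← mul_assoc, ih, smul_mul_assoc, mul_assoc, F.dd k, mul_assoc, pow_succ]
    simp

theorem dA_mem (r : ℕ) (a : Fin r → Fin n) (i : Fin r) : F.dA r a * F.d (a i) = 0 := by
  induction r with
  | zero => exact i.elim0
  | succ r ih =>
    rw [dA, mul_assoc]
    refine Fin.cases ?_ (fun i => ?_) i
    · rw [eq_neg_self_zero (F.dd (a 0) (a 0)), mul_zero]
    · rw [F.dd, mul_neg, ← mul_assoc]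
      have := ih (Fin.tail a) i
      simp only [Fin.tail] at this ⊢
      rw [this]; simp

theorem dA_snoc (r : ℕ) (a : Fin r → Fin n) (k : Fin n) :
    F.dA (r + 1) (Fin.snoc a k : Fin (r + 1) → Fin n) = F.d k * F.dA r a := by
  induction r with
  | zero => simp [dA]; rfl
  | succ r ih =>
    rw [dA]
    have h1 : Fin.tail (Fin.snoc a k : Fin (r + 1 + 1) → Fin n) = Fin.snoc (Fin.tail a) k := by
      ext i
      refine Fin.lastCases ?_ (fun i => ?_) i
      · rw [Fin.tail, Fin.succ_last, Fin.snoc_last, Fin.snoc_last]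
      · simp [Fin.tail, ← Fin.castSucc_succ]
    have h0 : (Fin.snoc a k : Fin (r + 1 + 1) → Fin n) 0 = a 0 := by
      rw [← Fin.castSucc_zero, Fin.snoc_castSucc]
    rw [h1, ih, h0, mul_assoc]
    rfl

theorem dA_x (r : ℕ) (a : Fin (r + 1) → Fin n) (l : Fin n) (u : ℂ) :
    F.dA (r + 1) a * F.x l u =
      (∑ s : Fin (r + 1), ((-1 : ℂ) ^ (s : ℕ)) • (F.t (a s) l u * F.dA r (s.removeNth a)))
      + ((-1 : ℂ) ^ (r + 1)) • (F.x l u * F.dA (r + 1) a) := by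
  induction r with
  | zero =>
    simp [dA, F.dx]
    abel
  | succ r ih =>
    rw [show F.dA (r + 1 + 1) a = F.dA (r + 1) (Fin.tail a) * F.d (a 0) from rfl, mul_assoc, F.dx,
      mul_sub, ← mul_assoc, ih, Fin.sum_univ_succ (n := r + 1), dA_t, add_mul, Finset.sum_mul]
    have : ∀ s : Fin (r + 1), ((-1 : ℂ) ^ (s : ℕ)) • (F.t (Fin.tail a s) l u *
        F.dA r (s.removeNth (Fin.tail a))) * F.d (a 0) =
        - (((-1 : ℂ) ^ ((s.succ : Fin (r + 2)) : ℕ)) • (F.t (a s.succ) l u *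
          F.dA (r + 1) (s.succ.removeNth a))) := by
      intro s
      have e : F.dA (r + 1) (s.succ.removeNth a) = F.dA r (s.removeNth (Fin.tail a)) * F.d (a 0) := by
        have h1 : (s.succ.removeNth a) 0 = a 0 := by simp [Fin.removeNth]
        have h2 : Fin.tail (s.succ.removeNth a) = s.removeNth (Fin.tail a) := by
          ext i; simp [Fin.removeNth, Fin.tail]
        rw [dA, h1, h2]
      rw [e, smul_mul_assoc, mul_assoc]
      simp [Fin.tail, pow_succ]
    rw [Finset.sum_congr rfl fun s _ => this s, Finset.sum_neg_distrib]
    have e0 : Fin.removeNth 0 a = Fin.tail a := rfl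
    rw [e0]
    simp only [Fin.val_zero, pow_zero, one_smul, smul_mul_assoc, mul_assoc]
    rw [pow_succ (-1 : ℂ) (r + 1)]
    module

theorem dA_e (r : ℕ) (a : Fin r → Fin n) (k : Fin n) (h : ∀ i, a i ≠ k) :
    F.dA r a * F.e k = ((-1 : ℂ) ^ r) • (F.e k * F.dA r a) := by
  induction r with
  | zero => simp [dA]
  | succ r ih =>
    rw [dA, mul_assoc, F.de, if_neg (h 0), zero_sub, mul_neg, ← mul_assoc, ih (Fin.tail a) (fun i => h i.succ),
      pow_succ, smul_mul_assoc, mul_assoc]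
    simp

theorem x_e (l k : Fin n) (u : ℂ) : F.x l u * F.e k = - (F.e k * F.x l u) := by
  unfold x
  rw [Finset.mul_sum, Finset.sum_mul, ← Finset.sum_neg_distrib]
  refine Finset.sum_congr rfl fun i _ => ?_
  rw [mul_assoc, F.et, ← mul_assoc, F.ee, neg_mul, mul_assoc]

theorem X_e (r : ℕ) (b : Fin r → Fin n) (k : Fin n) (u : ℂ) :
    F.X r b u * F.e k = ((-1 : ℂ) ^ r) • (F.e k * F.X r b u) := by
  induction r generalizing u with
  | zero => simp [X]
  | succ r ih =>
    rw [X, mul_assoc, ih, pow_succ, mul_smul_comm, ← mul_assoc, F.x_e, neg_mul, mul_assoc]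
    simp

theorem px (k l b : Fin n) (u : ℂ) :
    F.p k l * F.x b u - F.x b u * F.p k l =
      F.e l * F.t k b u - if k = b then F.x l u else 0 := by
  have : ∀ i, F.p k l * (F.e i * F.t i b u) - F.e i * F.t i b u * F.p k l =
      (if i = l then F.e i * F.t k b u else 0) - (if k = b then F.e i * F.t i l u else 0) := by
    intro i
    rw [← mul_assoc, F.ep, mul_assoc, mul_assoc, ← mul_sub, F.pt, mul_sub]
    simp only [mul_ite, mul_zero]
  unfold x
  rw [Finset.mul_sum, Finset.sum_mul, ← Finset.sum_sub_distrib, Finset.sum_congr rfl fun i _ => this i,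
    Finset.sum_sub_distrib]
  congr 1
  · simp
  · split_ifs <;> simp

theorem pX (k l : Fin n) (r : ℕ) (b : Fin r → Fin n) (v : ℂ) :
    F.p k l * F.X r b v - F.X r b v * F.p k l =
      F.e l * F.D k r b v - ∑ i, if k = b i then F.X r (Function.update b i l) v else 0 := by
  induction r generalizing v with
  | zero => simp [X, D]
  | succ r ih =>
    have h1 := congrArg (fun z => z * F.X r (Fin.tail b) (v - 1)) (F.px k l (b 0) v)
    have h2 := congrArg (fun z => F.x (b 0) v * z) (ih (Fin.tail b) (v - 1))
    have h3 : ∀ i : Fin r, (if k = b i.succ then F.X (r + 1) (Function.update b i.succ l) v else 0)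
        = F.x (b 0) v * (if k = Fin.tail b i then F.X r (Function.update (Fin.tail b) i l) (v - 1) else 0) := by
      intro i
      rw [X, Fin.tail_update_succ, Function.update_of_ne (Fin.succ_ne_zero i).symm]
      rw [mul_ite, mul_zero]; rfl
    have h4 : (if k = b 0 then F.X (r + 1) (Function.update b 0 l) v else 0)
        = (if k = b 0 then F.x l v else 0) * F.X r (Fin.tail b) (v - 1) := by
      rw [X, Fin.tail_update_zero]; simp
    rw [Fin.sum_univ_succ, Finset.sum_congr rfl fun i _ => h3 i, ← Finset.mul_sum, h4]
    simp only [X, D, mul_sub, sub_mul, ← mul_assoc, F.x_e] at h1 h2 ⊢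
    linear_combination (norm := skip) h1 + h2
    simp only [neg_mul]
    abel

end FD

open scoped TensorProduct

structure FK {n : ℕ} {V : Type*} [AddCommGroup V] [Module ℂ V]
    (T : ℕ → Fin n → Fin n → (V →ₗ[ℂ] V)) (W : Type*) [AddCommGroup W] [Module ℂ W]
    extends FD n (Module.End ℂ W) where
  ket : V →ₗ[ℂ] W
  ket_inj : Function.Injective ket
  d_ket : ∀ a v, d a (ket v) = 0
  t_ket : ∀ i j u v, t i j u (ket v) = ket (Tpoly T i j u v)
  p_ket : ∀ i j v, p i j (ket v) = ket (T 1 i j v)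

theorem Tpoly_rtt {n : ℕ} {V : Type*} [AddCommGroup V] [Module ℂ V]
    (T : ℕ → Fin n → Fin n → (V →ₗ[ℂ] V)) (hT : IsYangianRep n T)
    (hvan : ∀ r : ℕ, 3 ≤ r → ∀ i j : Fin n, T r i j = 0) (i j k l : Fin n) (u v : ℂ) :
    (u - v) • (Tpoly T i j u ∘ₗ Tpoly T k l v - Tpoly T k l v ∘ₗ Tpoly T i j u)
    = Tpoly T k j u ∘ₗ Tpoly T i l v - Tpoly T k j v ∘ₗ Tpoly T i l u := by
  obtain ⟨h0, h⟩ := hT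
  have e : ∀ i j u, Tpoly T i j u = u ^ 2 • T 0 i j + u • T 1 i j + T 2 i j := by
    intro i j u; rw [Tpoly, h0]
  have h3 : ∀ i j, T 3 i j = 0 := hvan 3 (le_refl _)
  have a00 := h 0 0 i j k l
  have a01 := h 0 1 i j k l
  have a02 := h 0 2 i j k l
  have a10 := h 1 0 i j k l
  have a11 := h 1 1 i j k l
  have a12 := h 1 2 i j k l
  have a20 := h 2 0 i j k l
  have a21 := h 2 1 i j k l
  have a22 := h 2 2 i j k l
  have c : ∀ s, T 0 i j ∘ₗ T s k l = T s k l ∘ₗ T 0 i j := by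
    intro s; rw [h0]; split_ifs <;> simp
  have c' : ∀ s, T s i j ∘ₗ T 0 k l = T 0 k l ∘ₗ T s i j := by
    intro s; rw [h0]; split_ifs <;> simp
  simp only [zero_add, Nat.reduceAdd, h3, LinearMap.zero_comp, LinearMap.comp_zero, c, c'] at a00 a01 a02 a10 a11 a12 a20 a21 a22
  simp only [e, LinearMap.comp_add, LinearMap.add_comp, LinearMap.smul_comp, LinearMap.comp_smul, c, c']
  linear_combination (norm := module) (u ^ 2 * v ^ 2) • a00 + (u ^ 2 * v) • a01 + (u ^ 2) • a02
    + (u * v ^ 2) • a10 + (u * v) • a11 + u • a12 + v ^ 2 • a20 + v • a21 + a22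

theorem Tpoly_E {n : ℕ} {V : Type*} [AddCommGroup V] [Module ℂ V]
    (T : ℕ → Fin n → Fin n → (V →ₗ[ℂ] V)) (hT : IsYangianRep n T)
    (hvan : ∀ r : ℕ, 3 ≤ r → ∀ i j : Fin n, T r i j = 0) (i j k l : Fin n) (u : ℂ) :
    T 1 i j ∘ₗ Tpoly T k l u - Tpoly T k l u ∘ₗ T 1 i j
    = (if k = j then Tpoly T i l u else 0) - (if i = l then Tpoly T k j u else 0) := by
  obtain ⟨h0, h⟩ := hT
  have e : ∀ i j u, Tpoly T i j u = u ^ 2 • T 0 i j + u • T 1 i j + T 2 i j := by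
    intro i j u; rw [Tpoly, h0]
  have h3 : ∀ i j, T 3 i j = 0 := hvan 3 (le_refl _)
  have a00 := h 0 0 i j k l
  have a01 := h 0 1 i j k l
  have a02 := h 0 2 i j k l
  have c : ∀ s, T 0 i j ∘ₗ T s k l = T s k l ∘ₗ T 0 i j := by
    intro s; rw [h0]; split_ifs <;> simp
  have c1 : ∀ s, T 0 k j ∘ₗ T s i l = if k = j then T s i l else 0 := by
    intro s; rw [h0]; split_ifs <;> simp
  have c2 : ∀ s, T s k j ∘ₗ T 0 i l = if i = l then T s k j else 0 := by
    intro s; rw [h0 i l]; split_ifs <;> simp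
  simp only [zero_add, Nat.reduceAdd, c, c1, c2, sub_self, sub_zero] at a00 a01 a02
  have e1 : ∀ P : Prop, ∀ [Decidable P], (if P then Tpoly T i l u else 0) = u ^ 2 • (if P then T 0 i l else 0)
      + u • (if P then T 1 i l else 0) + (if P then T 2 i l else 0) := by
    intro P _; split_ifs <;> simp [e]
  have e2 : ∀ P : Prop, ∀ [Decidable P], (if P then Tpoly T k j u else 0) = u ^ 2 • (if P then T 0 k j else 0)
      + u • (if P then T 1 k j else 0) + (if P then T 2 k j else 0) := by
    intro P _; split_ifs <;> simp [e]
  rw [e1, e2, e]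
  simp only [LinearMap.comp_add, LinearMap.add_comp, LinearMap.smul_comp, LinearMap.comp_smul]
  have c12 : (if k = j then T 0 i l else 0) = (if i = l then T 0 k j else 0) :=
    (c1 0).symm.trans (c2 0)
  linear_combination (norm := module) (u ^ 2) • a00 + u • a01 + a02 - (u ^ 2) • c12

noncomputable def fock {n : ℕ} {V : Type*} [AddCommGroup V] [Module ℂ V]
    (T : ℕ → Fin n → Fin n → (V →ₗ[ℂ] V)) (hT : IsYangianRep n T)
    (hvan : ∀ r : ℕ, 3 ≤ r → ∀ i j : Fin n, T r i j = 0) :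
    FK T (ExteriorAlgebra ℂ (Fin n → ℂ) ⊗[ℂ] V) where
  e a := LinearMap.rTensor V (LinearMap.mulLeft ℂ (ExteriorAlgebra.ι ℂ (Pi.single a (1 : ℂ))))
  d a := LinearMap.rTensor V (CliffordAlgebra.contractLeft (Q := (0 : QuadraticForm ℂ (Fin n → ℂ)))
    (LinearMap.proj a))
  p i j := LinearMap.lTensor _ (T 1 i j)
  q i j := LinearMap.lTensor _ (T 2 i j)
  t i j u := LinearMap.lTensor _ (Tpoly T i j u)
  t_eq i j u := by
    rw [Tpoly, LinearMap.lTensor_add, LinearMap.lTensor_add, LinearMap.lTensor_smul,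
      LinearMap.lTensor_smul]
    congr 3
    split_ifs
    · exact LinearMap.lTensor_id _ _
    · exact LinearMap.lTensor_zero _
  ee a b := by
    rw [← LinearMap.rTensor_mul, ← LinearMap.rTensor_mul, ← LinearMap.rTensor_neg]
    congr 1
    refine LinearMap.ext fun (z : ExteriorAlgebra ℂ (Fin n → ℂ)) => ?_
    change ExteriorAlgebra.ι ℂ _ * (ExteriorAlgebra.ι ℂ _ * z) =
      -(ExteriorAlgebra.ι ℂ _ * (ExteriorAlgebra.ι ℂ _ * z))
    rw [← mul_assoc, ← mul_assoc, ← neg_mul]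
    congr 1
    exact eq_neg_of_add_eq_zero_left (ExteriorAlgebra.ι_add_mul_swap _ _)
  dd a b := by
    rw [← LinearMap.rTensor_mul, ← LinearMap.rTensor_mul, ← LinearMap.rTensor_neg]
    congr 1
    ext z
    exact CliffordAlgebra.contractLeft_comm _ _ _
  de k a := by
    rw [← LinearMap.rTensor_mul, ← LinearMap.rTensor_mul]
    have : (if k = a then (1 : Module.End ℂ (ExteriorAlgebra ℂ (Fin n → ℂ) ⊗[ℂ] V)) else 0)
        = LinearMap.rTensor V (if k = a then (1 : Module.End ℂ (ExteriorAlgebra ℂ (Fin n → ℂ))) else 0) := by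
      split_ifs
      · exact (LinearMap.rTensor_id _ _).symm
      · exact (LinearMap.rTensor_zero _).symm
    rw [this, ← LinearMap.rTensor_sub]
    congr 1
    ext z
    refine (CliffordAlgebra.contractLeft_ι_mul _ _ _).trans ?_
    simp only [LinearMap.sub_apply]
    congr 1
    by_cases h : k = a
    · simp [h]
    · simp [h, Pi.single_apply]
  ep a i j := by
    apply TensorProduct.ext'
    intro z v
    simp
  et a i j u := by
    apply TensorProduct.ext'
    intro z v
    simp
  dt a i j u := by
    apply TensorProduct.ext'
    intro z v
    simp
  dp a i j := by
    apply TensorProduct.ext'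
    intro z v
    simp
  rtt i j k l u v := by
    simp only [← LinearMap.lTensor_mul, ← LinearMap.lTensor_sub, ← LinearMap.lTensor_smul]
    congr 1
    exact Tpoly_rtt T hT hvan i j k l u v
  pt i j k l u := by
    have : ∀ (P : Prop) [Decidable P] (f : V →ₗ[ℂ] V), (if P then
        (LinearMap.lTensor (ExteriorAlgebra ℂ (Fin n → ℂ)) f : Module.End ℂ _) else 0)
        = LinearMap.lTensor _ (if P then f else 0) := by
      intro P _ f
      split_ifs
      · rfl
      · exact (LinearMap.lTensor_zero _).symm
    rw [this, this]
    simp only [← LinearMap.lTensor_mul, ← LinearMap.lTensor_sub]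
    congr 1
    exact Tpoly_E T hT hvan i j k l u
  ket := TensorProduct.mk ℂ _ V 1
  ket_inj := by
    have : Function.LeftInverse ((TensorProduct.lid ℂ V) ∘
      (LinearMap.rTensor V (ExteriorAlgebra.algebraMapInv (R := ℂ) (M := Fin n → ℂ)).toLinearMap))
      (TensorProduct.mk ℂ (ExteriorAlgebra ℂ (Fin n → ℂ)) V 1) := by
      intro v
      simp
    exact this.injective
  d_ket a v := by
    simp [LinearMap.rTensor_tmul, CliffordAlgebra.contractLeft_one]
  t_ket i j u v := by simp
  p_ket i j v := by simp


theorem Tq_lap {n : ℕ} {V : Type*} [AddCommGroup V] [Module ℂ V]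
    (T : ℕ → Fin n → Fin n → (V →ₗ[ℂ] V)) (r : ℕ) (a b : Fin (r + 1) → Fin n) (u : ℂ) :
    TqminorPoly T (r + 1) a b u = ∑ s : Fin (r + 1), ((-1 : ℂ) ^ (s : ℕ)) •
      (Tpoly T (a s) (b 0) u ∘ₗ TqminorPoly T r (s.removeNth a) (Fin.tail b) (u - 1)) := by
  have key : ∀ s : Fin (r + 1), ∃ τ : Equiv.Perm (Fin r),
      (Equiv.Perm.sign τ : ℤ) = (-1) ^ (s : ℕ) * (if s = 0 then 1 else -1) ∧
      ∀ x : Fin r, Equiv.swap 0 s x.succ = s.succAbove (τ x) := by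
    intro s
    refine Fin.cases ⟨1, by simp, by simp⟩ (fun s => ?_) s
    match r, s with
    | r + 1, s =>
      refine ⟨s.cycleRange, ?_, ?_⟩
      · rw [Fin.sign_cycleRange, if_neg (Fin.succ_ne_zero s)]
        simp [pow_succ]
      · intro x
        rw [Fin.succAbove_cycleRange]
  unfold TqminorPoly
  rw [Finset.univ_perm_fin_succ, ← Finset.univ_product_univ]
  simp only [Finset.sum_map, Equiv.toEmbedding_apply, Finset.sum_product]
  refine Finset.sum_congr rfl fun s _ => ?_
  obtain ⟨τ, hτ, hs⟩ := key s
  have e : ∀ f : Equiv.Perm (Fin r) → (V →ₗ[ℂ] V), ∑ σ, f σ = ∑ σ, f (τ⁻¹ * σ) :=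
    fun f => (Equiv.sum_comp (Equiv.mulLeft τ⁻¹) f).symm
  rw [e, ← Module.End.mul_eq_comp, Finset.mul_sum, Finset.smul_sum]
  refine Finset.sum_congr rfl fun σ _ => ?_
  rw [Equiv.Perm.decomposeFin.symm_sign, List.ofFn_succ, List.foldr_cons]
  simp only [Equiv.Perm.decomposeFin_symm_apply_zero, Equiv.Perm.decomposeFin_symm_apply_succ, hs]
  rw [Module.End.mul_eq_comp, LinearMap.comp_smul, smul_smul]
  congr 1
  · rw [Equiv.Perm.sign_mul, Equiv.Perm.sign_inv]
    push_cast
    have h2 : ((Equiv.Perm.sign τ : ℤ) : ℂ) = (-1) ^ (s : ℕ) * (if s = 0 then 1 else -1) := by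
      rw [hτ]; push_cast; split_ifs <;> simp
    rw [h2]
    split_ifs <;> simp
  · simp [Fin.removeNth, Fin.tail, sub_sub, add_comm (1 : ℂ)]

namespace FK
variable {n : ℕ} {V : Type*} [AddCommGroup V] [Module ℂ V]
  {T : ℕ → Fin n → Fin n → (V →ₗ[ℂ] V)} {W : Type*} [AddCommGroup W] [Module ℂ W] (K : FK T W)

theorem dA_xX (r : ℕ) (a : Fin (r + 1) → Fin n) (l : Fin n) (w : W) (u : ℂ) :
    K.dA (r + 1) a (K.x l u w) = ∑ s : Fin (r + 1), ((-1 : ℂ) ^ (s : ℕ)) •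
      (K.t (a s) l u (K.dA r (s.removeNth a) w)) + ((-1 : ℂ) ^ (r + 1)) • K.x l u (K.dA (r + 1) a w) := by
  have h := congrArg (fun f : Module.End ℂ W => f w) (K.toFD.dA_x r a l u)
  simpa [LinearMap.sum_apply] using h

theorem deg (r r' : ℕ) (h : r' ≤ r) (a : Fin (r + 1) → Fin n) (b : Fin r' → Fin n) (u : ℂ) (v : V) :
    K.dA (r + 1) a (K.X r' b u (K.ket v)) = 0 := by
  induction r' generalizing r u with
  | zero => simp [FD.X, FD.dA, K.d_ket]
  | succ r' ih =>
    obtain ⟨r, rfl⟩ : ∃ r1, r = r1 + 1 := ⟨r - 1, by omega⟩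
    simp only [FD.X, Module.End.mul_apply]
    rw [K.dA_xX, ih _ (by omega)]
    simp [ih r (by omega)]

theorem link (r : ℕ) (a b : Fin r → Fin n) (u : ℂ) (v : V) :
    K.dA r a (K.X r b u (K.ket v)) = K.ket (TqminorPoly T r a b u v) := by
  induction r generalizing u with
  | zero => simp [FD.X, FD.dA, TqminorPoly]
  | succ r ih =>
    simp only [FD.X, Module.End.mul_apply]
    rw [K.dA_xX, K.deg _ _ (le_refl _), Tq_lap]
    simp only [ih, K.t_ket, map_zero, smul_zero, add_zero, LinearMap.sum_apply, map_sum,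
      LinearMap.smul_apply, LinearMap.comp_apply, map_smul]

theorem D_ket (k : Fin n) (r : ℕ) (b : Fin r → Fin n) (u : ℂ) (v : V) :
    K.D k r b u (K.ket v) = K.d k (K.X r b u (K.ket v)) := by
  have h := congrArg (fun f : Module.End ℂ W => f (K.ket v)) (K.toFD.dX k r b u)
  simp [K.d_ket] at h
  exact h.symm

theorem main_ket (k l : Fin n) (r : ℕ) (b : Fin r → Fin n) (u v : ℂ) (z : V) :
    (u - v) • (K.t k l u (K.X r b v (K.ket z)) - K.X r b v (K.ket (Tpoly T k l u z)))
      = K.x l u (K.d k (K.X r b v (K.ket z))) - ∑ i, K.X r (Function.update b i l) v (K.ket (Tpoly T k (b i) u z)) := by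
  have h := congrArg (fun f : Module.End ℂ W => f (K.ket z)) (K.toFD.main k l r b v u)
  simpa [FD.S, LinearMap.sum_apply, K.t_ket, K.D_ket] using h

theorem dAt (r : ℕ) (a : Fin r → Fin n) (k l : Fin n) (u : ℂ) (w : W) :
    K.dA r a (K.t k l u w) = K.t k l u (K.dA r a w) :=
  congrArg (fun f : Module.End ℂ W => f w) (K.toFD.dA_t r a k l u)

/-- `dA a * x l u * d k = t k l u * dA a` for `k` among the rows -/
theorem dA_x_d (r : ℕ) (a : Fin r → Fin n) (i : Fin r) (l : Fin n) (u : ℂ) (w : W) :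
    K.dA r a (K.x l u (K.d (a i) w)) = K.t (a i) l u (K.dA r a w) := by
  have h1 : K.x l u * K.d (a i) = K.t (a i) l u - K.d (a i) * K.x l u := by
    rw [K.toFD.dx]; abel
  have h2 := congrArg (fun f : Module.End ℂ W => f w) h1
  simp only [Module.End.mul_apply, LinearMap.sub_apply] at h2
  have h3 := congrArg (fun f : Module.End ℂ W => f (K.x l u w)) (K.toFD.dA_mem r a i)
  simp only [Module.End.mul_apply] at h3
  rw [h2, map_sub, h3, K.dAt]
  simp

theorem key_row (K : FK T W) (r : ℕ) (a b : Fin r → Fin n) (i : Fin r) (l : Fin n) (u v : ℂ) (z : V) :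
    (u - v) • (Tpoly T (a i) l u (TqminorPoly T r a b v z) - TqminorPoly T r a b v (Tpoly T (a i) l u z))
     = Tpoly T (a i) l u (TqminorPoly T r a b v z)
       - ∑ j, TqminorPoly T r a (Function.update b j l) v (Tpoly T (a i) (b j) u z) := by
  apply K.ket_inj
  have h := congrArg (K.dA r a) (K.main_ket (a i) l r b u v z)
  simpa [K.dAt, K.link, K.dA_x_d, K.t_ket] using h

theorem M_rep (K : FK T W) (r : ℕ) (a b : Fin r → Fin n) (u : ℂ) (i j : Fin r) (hij : i ≠ j) (h : b i = b j) :
    TqminorPoly T r a b u = 0 := by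
  ext z
  apply K.ket_inj
  rw [← K.link, K.toFD.X_rep r b u i j hij h]
  simp

theorem comm_t (K : FK T W) (r : ℕ) (a b : Fin r → Fin n) (i j : Fin r) (u v : ℂ) (z : V) :
    Tpoly T (a i) (b j) u (TqminorPoly T r a b v z) = TqminorPoly T r a b v (Tpoly T (a i) (b j) u z) := by
  have h : ∀ u, u - v ≠ 1 → Tpoly T (a i) (b j) u (TqminorPoly T r a b v z)
      - TqminorPoly T r a b v (Tpoly T (a i) (b j) u z) = 0 := by
    intro u hu
    have h := K.key_row r a b i (b j) u v z
    rw [Finset.sum_eq_single j] at h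
    · rw [Function.update_eq_self] at h
      have : (u - v - 1) • (Tpoly T (a i) (b j) u (TqminorPoly T r a b v z)
        - TqminorPoly T r a b v (Tpoly T (a i) (b j) u z)) = 0 := by
        rw [sub_smul, h]; module
      exact (smul_eq_zero.mp this).resolve_left (sub_ne_zero.mpr hu)
    · intro s _ hs
      rw [K.M_rep r a _ v s j hs]
      · simp
      · simp [Function.update_of_ne hs.symm]
    · simp
  rw [← sub_eq_zero]
  by_cases hu : u - v = 1
  · have h1 := h (u + 1) (by rw [show u + 1 - v = u - v + 1 by ring, hu]; norm_num)
    have h2 := h (u + 2) (by rw [show u + 2 - v = u - v + 2 by ring, hu]; norm_num)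
    have e : ∀ w, Tpoly T (a i) (b j) w (TqminorPoly T r a b v z)
      - TqminorPoly T r a b v (Tpoly T (a i) (b j) w z) =
      w • (T 1 (a i) (b j) (TqminorPoly T r a b v z) - TqminorPoly T r a b v (T 1 (a i) (b j) z))
      + (T 2 (a i) (b j) (TqminorPoly T r a b v z) - TqminorPoly T r a b v (T 2 (a i) (b j) z)) := by
      intro w
      unfold Tpoly
      simp only [LinearMap.add_apply, LinearMap.smul_apply, map_add, map_smul]
      split_ifs
      · simp only [LinearMap.id_apply]; module
      · simp only [LinearMap.zero_apply, map_zero]; module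
    rw [e] at h1 h2 ⊢
    linear_combination (norm := module) (2 : ℂ) • h1 - h2
  · exact h u hu

/-- an operator commuting with all entries commutes with the minor -/
theorem _root_.comm_M (N : V →ₗ[ℂ] V) (r : ℕ) (a b : Fin r → Fin n)
    (h : ∀ i j u z, N (Tpoly T (a i) (b j) u z) = Tpoly T (a i) (b j) u (N z)) (u : ℂ) (z : V) :
    N (TqminorPoly T r a b u z) = TqminorPoly T r a b u (N z) := by
  induction r generalizing u with
  | zero => simp [TqminorPoly]
  | succ r ih =>
    rw [Tq_lap]
    simp only [LinearMap.sum_apply, map_sum, LinearMap.smul_apply, LinearMap.comp_apply, map_smul]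
    refine Finset.sum_congr rfl fun s _ => ?_
    rw [h, ih]
    exact fun i j u z => h _ _ _ _

theorem comm_MM (K : FK T W) (r r' : ℕ) (a b : Fin r → Fin n) (a' b' : Fin r' → Fin n)
    (ha : ∀ i, ∃ j, a' i = a j) (hb : ∀ i, ∃ j, b' i = b j) (u v : ℂ) (z : V) :
    TqminorPoly T r a b v (TqminorPoly T r' a' b' u z) = TqminorPoly T r' a' b' u (TqminorPoly T r a b v z) := by
  apply comm_M
  intro i j u z
  obtain ⟨i', hi⟩ := ha i
  obtain ⟨j', hj⟩ := hb j
  rw [hi, hj, K.comm_t]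

end FK

namespace FK
variable {n : ℕ} {V : Type*} [AddCommGroup V] [Module ℂ V]
  {T : ℕ → Fin n → Fin n → (V →ₗ[ℂ] V)} {W : Type*} [AddCommGroup W] [Module ℂ W]

theorem col_rel (K : FK T W) (r : ℕ) (a : Fin (r + 1) → Fin n) (B : Fin r → Fin n) (l j : Fin n)
    (x y : ℂ) (z : V) :
    (x - y) • (TqminorPoly T (r + 1) a (Fin.cons l B) x (TqminorPoly T (r + 1) a (Fin.cons j B) y z)
      - TqminorPoly T (r + 1) a (Fin.cons j B) y (TqminorPoly T (r + 1) a (Fin.cons l B) x z))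
    = TqminorPoly T (r + 1) a (Fin.cons l B) x (TqminorPoly T (r + 1) a (Fin.cons j B) y z)
      - TqminorPoly T (r + 1) a (Fin.cons l B) y (TqminorPoly T (r + 1) a (Fin.cons j B) x z) := by
  have lap : ∀ c z, TqminorPoly T (r + 1) a (Fin.cons c B) x z = ∑ s : Fin (r + 1), ((-1 : ℂ) ^ (s : ℕ)) •
      (Tpoly T (a s) c x (TqminorPoly T r (s.removeNth a) B (x - 1) z)) := by
    intro c z
    rw [Tq_lap]
    simp [LinearMap.sum_apply]
  have cm : ∀ s : Fin (r + 1), ∀ z, TqminorPoly T r (s.removeNth a) B (x - 1)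
      (TqminorPoly T (r + 1) a (Fin.cons j B) y z) = TqminorPoly T (r + 1) a (Fin.cons j B) y
      (TqminorPoly T r (s.removeNth a) B (x - 1) z) := by
    intro s z
    symm
    apply K.comm_MM
    · exact fun i => ⟨_, rfl⟩
    · exact fun i => ⟨i.succ, by simp⟩
  have h1 : TqminorPoly T (r + 1) a (Fin.cons l B) y (TqminorPoly T (r + 1) a (Fin.cons j B) x z)
      = ∑ s : Fin (r + 1), ((-1 : ℂ) ^ (s : ℕ)) • ∑ i, TqminorPoly T (r + 1) a
        (Function.update (Fin.cons j B) i l) y (Tpoly T (a s) ((Fin.cons j B : Fin (r + 1) → Fin n) i) x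
          (TqminorPoly T r (s.removeNth a) B (x - 1) z)) := by
    simp only [Finset.smul_sum]
    rw [Finset.sum_comm, Fin.sum_univ_succ]
    have : ∀ i : Fin (r + 1), ∑ s : Fin (r + 1), (-1 : ℂ) ^ (s : ℕ) • TqminorPoly T (r + 1) a
        (Function.update (Fin.cons j B) i l) y (Tpoly T (a s) ((Fin.cons j B : Fin (r + 1) → Fin n) i) x
          (TqminorPoly T r (s.removeNth a) B (x - 1) z)) = TqminorPoly T (r + 1) a
        (Function.update (Fin.cons j B) i l) y (TqminorPoly T (r + 1) a
          (Fin.cons ((Fin.cons j B : Fin (r + 1) → Fin n) i) B) x z) := by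
      intro i
      rw [lap]
      simp [map_sum]
    simp only [this]
    rw [Finset.sum_eq_zero, add_zero, Fin.update_cons_zero, Fin.cons_zero]
    intro i _
    rw [K.M_rep (r + 1) a (Fin.cons _ B) x 0 i.succ (Fin.succ_ne_zero i).symm (by simp)]
    simp
  rw [h1, lap l, lap l, map_sum, ← Finset.sum_sub_distrib, ← Finset.sum_sub_distrib, Finset.smul_sum]
  refine Finset.sum_congr rfl fun s _ => ?_
  rw [cm, map_smul, ← smul_sub, smul_comm, K.key_row, smul_sub]

theorem link_cons (K : FK T W) (r : ℕ) (C : Fin r → Fin n) (k : Fin n) (b : Fin (r + 1) → Fin n)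
    (u : ℂ) (v : V) :
    K.dA r C (K.d k (K.X (r + 1) b u (K.ket v))) = K.ket (TqminorPoly T (r + 1) (Fin.cons k C) b u v) := by
  rw [← K.link]
  simp [FD.dA, Fin.tail_cons]

theorem row_lap (K : FK T W) (r : ℕ) (C : Fin r → Fin n) (b : Fin (r + 1) → Fin n) (x : ℂ) :
    ∃ Lf : Fin (r + 1) → (V →ₗ[ℂ] V), ∀ k z, TqminorPoly T (r + 1) (Fin.cons k C) b x z
      = ∑ j, Lf j (Tpoly T k (b j) x z) := by
  refine ⟨Fin.cons (TqminorPoly T r C (Fin.tail b) (x - 1))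
    (fun j => - TqminorPoly T r C (Function.update (Fin.tail b) j (b 0)) (x - 1)), fun k z => ?_⟩
  apply K.ket_inj
  rw [← K.link_cons, ← K.D_ket]
  have h := K.main_ket k (b 0) r (Fin.tail b) x (x - 1) z
  rw [show x - (x - 1) = 1 by ring, one_smul, ← K.D_ket] at h
  have h2 : K.D k (r + 1) b x (K.ket z) = K.X r (Fin.tail b) (x - 1) (K.ket (Tpoly T k (b 0) x z))
    - ∑ i, K.X r (Function.update (Fin.tail b) i (b 0)) (x - 1) (K.ket (Tpoly T k (Fin.tail b i) x z)) := by
    simp only [FD.D, LinearMap.sub_apply, Module.End.mul_apply]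
    linear_combination (norm := module) h
  rw [h2, map_sub, map_sum, Fin.sum_univ_succ]
  simp only [K.link, map_add, map_sum, Fin.cons_zero, Fin.cons_succ, LinearMap.neg_apply, map_neg,
    Finset.sum_neg_distrib, sub_eq_add_neg]
  rfl

theorem M_rep_row (K : FK T W) (r : ℕ) (C : Fin r → Fin n) (s : Fin r) (b : Fin (r + 1) → Fin n) (x : ℂ)
    (z : V) : TqminorPoly T (r + 1) (Fin.cons (C s) C) b x z = 0 := by
  apply K.ket_inj
  rw [← K.link_cons]
  have h := congrArg (fun f : Module.End ℂ W => f (K.X (r + 1) b x (K.ket z))) (K.toFD.dA_mem r C s)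
  simpa using h

theorem row_rest (K : FK T W) (r : ℕ) (C : Fin r → Fin n) (b : Fin (r + 1) → Fin n) (i N : Fin n) (y : ℂ)
    (z : V) : ∃ m : Fin r → V, ∀ l x, K.dA r C (K.x l x (K.d N (K.d i (K.X (r + 1) b y (K.ket z)))))
      = ∑ s, K.ket (Tpoly T (C s) l x (m s)) := by
  match r, C, b with
  | 0, C, b =>
    refine ⟨fun _ => 0, fun l x => ?_⟩
    have : K.d N (K.d i (K.X 1 b y (K.ket z))) = 0 := by
      have h := K.deg 1 1 (le_refl _) (Fin.cons i (Fin.cons N C)) b y z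
      simpa [FD.dA, Fin.tail_cons] using h
    rw [this]; simp
  | r + 1, C, b =>
    refine ⟨fun s => ((-1 : ℂ) ^ (s : ℕ)) • TqminorPoly T (r + 2)
      (Fin.cons i (Fin.cons N (s.removeNth C))) b y z, fun l x => ?_⟩
    rw [K.dA_xX]
    have h0 : K.dA (r + 1) C (K.d N (K.d i (K.X (r + 2) b y (K.ket z)))) = 0 := by
      have h := K.deg (r + 2) (r + 2) (le_refl _) (Fin.cons i (Fin.cons N C)) b y z
      simpa [FD.dA, Fin.tail_cons] using h
    rw [h0, map_zero, smul_zero, add_zero]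
    refine Finset.sum_congr rfl fun s _ => ?_
    rw [map_smul, map_smul]
    congr 1
    rw [← K.t_ket, ← K.link_cons]
    simp [FD.dA, Fin.tail_cons]

theorem row_rel (K : FK T W) (r : ℕ) (C : Fin r → Fin n) (b : Fin (r + 1) → Fin n) (i N : Fin n) (x : ℂ)
    (z : V) : TqminorPoly T (r + 1) (Fin.cons i C) b x (TqminorPoly T (r + 1) (Fin.cons N C) b (x - 1) z)
     = TqminorPoly T (r + 1) (Fin.cons N C) b x (TqminorPoly T (r + 1) (Fin.cons i C) b (x - 1) z) := by
  obtain ⟨Lf, hL⟩ := K.row_lap r C b x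
  obtain ⟨m, hm⟩ := K.row_rest r C b i N (x - 1) z
  have key : ∀ j, Tpoly T i (b j) x (TqminorPoly T (r + 1) (Fin.cons N C) b (x - 1) z)
      = Tpoly T N (b j) x (TqminorPoly T (r + 1) (Fin.cons i C) b (x - 1) z)
        - ∑ s, Tpoly T (C s) (b j) x (m s) := by
    intro j
    apply K.ket_inj
    have h := K.main_ket i (b j) (r + 1) b x (x - 1) z
    have hS := congrArg (fun f : Module.End ℂ W => f (K.ket z)) (K.toFD.S_mem i (r + 1) b (x - 1) x j)
    simp only [FD.S, LinearMap.sum_apply, Module.End.mul_apply, K.t_ket] at hS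
    rw [hS, show x - (x - 1) = 1 by ring, one_smul] at h
    have h := sub_left_inj.mp h
    rw [map_sub, map_sum, ← hm, ← K.t_ket, ← K.t_ket, ← K.link_cons, ← K.link_cons, ← K.dAt, ← K.dAt]
    have h3 : ∀ w, K.t N (b j) x w = K.d N (K.x (b j) x w) + K.x (b j) x (K.d N w) := by
      intro w
      have h := congrArg (fun f : Module.End ℂ W => f w) (K.toFD.dx N (b j) x)
      simp only [Module.End.mul_apply, LinearMap.sub_apply] at h
      rw [h]; abel
    have h4 : ∀ w, K.t i (b j) x (K.d N w) = K.d N (K.t i (b j) x w) := by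
      intro w
      exact (congrArg (fun f : Module.End ℂ W => f w) (K.toFD.dt N i (b j) x)).symm
    rw [h4, h, h3, map_add]
    abel
  rw [hL, hL]
  simp only [key, map_sub, map_sum, Finset.sum_sub_distrib]
  rw [Finset.sum_comm, sub_eq_self]
  refine Finset.sum_eq_zero fun s _ => ?_
  rw [← hL, K.M_rep_row]

end FK

theorem FD.X_last {n : ℕ} {R : Type*} [Ring R] [Algebra ℂ R] (F : FD n R) (r : ℕ)
    (b : Fin (r + 1) → Fin n) (u : ℂ) :
    F.X (r + 1) b u = F.X r (Fin.init b) u * F.x (b (Fin.last r)) (u - r) := by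
  induction r generalizing u with
  | zero => simp [FD.X]
  | succ r ih =>
    rw [FD.X, ih, FD.X, mul_assoc]
    have h1 : Fin.init (Fin.tail b) = Fin.tail (Fin.init b) := rfl
    have h2 : Fin.tail b (Fin.last r) = b (Fin.last (r + 1)) := rfl
    have h3 : (Fin.init b : Fin (r + 1) → Fin n) 0 = b 0 := rfl
    rw [h1, h2, h3, show u - 1 - (r : ℂ) = u - ((r + 1 : ℕ) : ℂ) by push_cast; ring]

theorem FD.dA_p {n : ℕ} {R : Type*} [Ring R] [Algebra ℂ R] (F : FD n R) (r : ℕ) (a : Fin r → Fin n)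
    (k l : Fin n) : F.dA r a * F.p k l = F.p k l * F.dA r a := by
  induction r with
  | zero => simp [FD.dA]
  | succ r ih => rw [FD.dA, mul_assoc, F.dp, ← mul_assoc, ih, mul_assoc]

namespace FK
variable {n : ℕ} {V : Type*} [AddCommGroup V] [Module ℂ V]
  {T : ℕ → Fin n → Fin n → (V →ₗ[ℂ] V)} {W : Type*} [AddCommGroup W] [Module ℂ W]

theorem E_act (K : FK T W) (r : ℕ) (C : Fin r → Fin n) (b : Fin (r + 1) → Fin n) (k N : Fin n)
    (hN : ∀ s, C s ≠ N) (v : ℂ) (z : V) :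
    T 1 k N (TqminorPoly T (r + 1) (Fin.cons N C) b v z)
      = TqminorPoly T (r + 1) (Fin.cons N C) b v (T 1 k N z)
        + TqminorPoly T (r + 1) (Fin.cons k C) b v z
        - ∑ i, if k = b i then TqminorPoly T (r + 1) (Fin.cons N C) (Function.update b i N) v z else 0 := by
  apply K.ket_inj
  have h := congrArg (fun f : Module.End ℂ W => K.dA (r + 1) (Fin.cons N C) (f (K.ket z)))
    (K.toFD.pX k N (r + 1) b v)
  simp only [LinearMap.sub_apply, Module.End.mul_apply, LinearMap.sum_apply, map_sub, map_sum, K.p_ket,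
    K.D_ket, K.link] at h
  have hp : ∀ w, K.dA (r + 1) (Fin.cons N C) (K.p k N w) = K.p k N (K.dA (r + 1) (Fin.cons N C) w) :=
    fun w => congrArg (fun f : Module.End ℂ W => f w) (K.toFD.dA_p (r + 1) (Fin.cons N C) k N)
  have he : ∀ w, K.dA r C (K.e N w) = ((-1 : ℂ) ^ r) • K.e N (K.dA r C w) := by
    intro w
    have := congrArg (fun f : Module.End ℂ W => f w) (K.toFD.dA_e r C N hN)
    simpa using this
  have hde : ∀ w, K.d N (K.e N w) = w - K.e N (K.d N w) := by
    intro w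
    have := congrArg (fun f : Module.End ℂ W => f w) (K.toFD.de N N)
    simpa using this
  have h1 : ∀ w, K.dA (r + 1) (Fin.cons N C) w = K.dA r C (K.d N w) := by
    intro w; simp [FD.dA, Fin.tail_cons]
  have h0 : K.dA r C (K.d N (K.d k (K.X (r + 1) b v (K.ket z)))) = 0 := by
    have h := K.deg (r + 1) (r + 1) (le_refl _) (Fin.cons k (Fin.cons N C)) b v z
    simpa [FD.dA, Fin.tail_cons] using h
  rw [hp, K.link, K.p_ket, h1 (K.e N _), hde, map_sub, he, h0, K.link_cons] at h
  have h2 : ∀ i, K.dA (r + 1) (Fin.cons N C) ((if k = b i then K.X (r + 1) (Function.update b i N) v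
      else 0 : Module.End ℂ W) (K.ket z)) = K.ket (if k = b i then
        TqminorPoly T (r + 1) (Fin.cons N C) (Function.update b i N) v z else 0) := by
    intro i
    split_ifs
    · rw [K.link]
    · simp
  simp only [h2, map_zero, smul_zero, sub_zero] at h
  rw [map_sub, map_add, map_sum]
  linear_combination (norm := module) h

theorem M_row (K : FK T W) (r : ℕ) (C : Fin r → Fin n) (b : Fin (r + 1) → Fin n) (N : Fin n) (v : ℂ) :
    TqminorPoly T (r + 1) (Fin.snoc C N : Fin (r + 1) → Fin n) b v
      = ((-1 : ℂ) ^ r) • TqminorPoly T (r + 1) (Fin.cons N C) b v := by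
  ext z
  apply K.ket_inj
  rw [LinearMap.smul_apply, map_smul, ← K.link, ← K.link_cons, K.toFD.dA_snoc, K.toFD.dA_d_comm]
  simp

theorem M_col (K : FK T W) (r : ℕ) (a : Fin (r + 1) → Fin n) (b : Fin (r + 1) → Fin n)
    (s : Fin (r + 1)) (v : ℂ) :
    TqminorPoly T (r + 1) a b v
      = ((-1 : ℂ) ^ (s : ℕ)) • TqminorPoly T (r + 1) a (Fin.cons (b s) (s.removeNth b)) v := by
  ext z
  apply K.ket_inj
  rw [LinearMap.smul_apply, map_smul, ← K.link, ← K.link, K.toFD.X_remove r b s]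
  simp [FD.X]

theorem peel (K : FK T W) (r : ℕ) (a b : Fin (r + 1) → Fin n) (q : Fin n) (ha : a (Fin.last r) = q)
    (hb : b (Fin.last r) = q) (hlt : ∀ s : Fin r, a s.castSucc < q) (u c : ℂ) (ζ : V)
    (hupper : ∀ i : Fin n, i < q → Tpoly T i q (u - r) ζ = 0)
    (hdiag : Tpoly T q q (u - r) ζ = c • ζ) :
    TqminorPoly T (r + 1) a b u ζ = c • TqminorPoly T r (Fin.init a) (Fin.init b) u ζ := by
  apply K.ket_inj
  rw [map_smul, ← K.link, ← K.link, K.toFD.X_last, hb]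
  have hx : K.x q (u - r) (K.ket ζ) = ∑ p, K.e p (K.ket (Tpoly T p q (u - r) ζ)) := by
    simp [FD.x, LinearMap.sum_apply, K.t_ket]
  have hXe : ∀ p w, K.X r (Fin.init b) u (K.e p w) = ((-1 : ℂ) ^ r) • K.e p (K.X r (Fin.init b) u w) := by
    intro p w
    have := congrArg (fun f : Module.End ℂ W => f w) (K.toFD.X_e r (Fin.init b) p u)
    simpa using this
  rw [Module.End.mul_apply, hx, map_sum, map_sum, Finset.sum_eq_single q]
  · rw [hdiag, map_smul, map_smul, map_smul, map_smul, hXe]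
    congr 1
    have hs : a = (Fin.snoc (Fin.init a) q : Fin (r + 1) → Fin n) := by
      rw [← ha, Fin.snoc_init_self]
    have he : ∀ w, K.dA r (Fin.init a) (K.e q w) = ((-1 : ℂ) ^ r) • K.e q (K.dA r (Fin.init a) w) := by
      intro w
      have := congrArg (fun f : Module.End ℂ W => f w) (K.toFD.dA_e r (Fin.init a) q (fun i => (hlt i).ne))
      simpa using this
    have hde : ∀ w, K.d q (K.e q w) = w - K.e q (K.d q w) := by
      intro w
      have := congrArg (fun f : Module.End ℂ W => f w) (K.toFD.de q q)
      simpa using this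
    have h1 : ∀ w, K.dA (r + 1) a w = K.d q (K.dA r (Fin.init a) w) := by
      intro w
      conv_lhs => rw [hs]
      rw [K.toFD.dA_snoc]; rfl
    rw [h1, map_smul, map_smul, he, map_smul, hde, ← h1, K.deg _ _ (le_refl _), map_zero, sub_zero, smul_smul,
      ← mul_pow]
    simp
  · intro p _ hp
    rcases lt_or_gt_of_ne hp with h | h
    · rw [hupper p h]; simp
    · rw [hXe, map_smul]
      have := congrArg (fun f : Module.End ℂ W => f (K.X r (Fin.init b) u (K.ket (Tpoly T p q (u - r) ζ))))
        (K.toFD.dA_e (r + 1) a p (by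
          intro i
          refine Fin.lastCases ?_ (fun i => ?_) i
          · rw [ha]; exact h.ne
          · exact ((hlt i).trans h).ne))
      simp only [Module.End.mul_apply, LinearMap.smul_apply] at this
      rw [this, K.deg _ _ (le_refl _)]
      simp
  · simp

theorem peel_many (K : FK T W) (m p : ℕ) (a b : Fin (m + p) → Fin n) (ha : StrictMono a)
    (hab : ∀ s : Fin p, b (Fin.natAdd m s) = a (Fin.natAdd m s)) (u : ℂ) (lam mu : Fin n → ℂ) (ζ : V)
    (hupper : ∀ u : ℂ, ∀ i j : Fin n, i < j → Tpoly T i j u ζ = 0)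
    (hdiag : ∀ u : ℂ, ∀ i : Fin n, Tpoly T i i u ζ = ((u + lam i) * (u + mu i)) • ζ) :
    TqminorPoly T (m + p) a b u ζ = (∏ s : Fin p, ((u - (m + (s : ℕ) : ℕ) + lam (a (Fin.natAdd m s)))
      * (u - (m + (s : ℕ) : ℕ) + mu (a (Fin.natAdd m s))))) •
      TqminorPoly T m (fun s => a (Fin.castAdd p s)) (fun s => b (Fin.castAdd p s)) u ζ := by
  induction p with
  | zero => simp
  | succ p ih =>
    have h := K.peel (m + p) a b (a (Fin.last _)) rfl (hab (Fin.last p)) (fun s => ha (Fin.castSucc_lt_last s)) u _ ζ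
      (fun i hi => hupper _ _ _ hi) (hdiag _ _)
    refine h.trans ?_
    rw [ih (Fin.init a) (Fin.init b) (fun i j hij => ha (by simpa using hij)) (fun s => hab s.castSucc), smul_smul,
      Fin.prod_univ_castSucc, mul_comm]
    rfl

end FK

section absLemma
variable {V : Type*} [AddCommGroup V] [Module ℂ V]

/-- abstract version of the product of lowering operators -/
def absTT (τ : ℂ → (V →ₗ[ℂ] V)) (v : ℂ) : ℕ → (V →ₗ[ℂ] V)
  | 0 => LinearMap.id
  | k + 1 => τ (v + (k : ℂ)) ∘ₗ absTT τ v k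

theorem absTT_G (τ D : ℂ → (V →ₗ[ℂ] V)) (hc : ∀ x y z, τ x (τ y z) = τ y (τ x z))
    (hD : ∀ x y z, (x - y) • D x (τ y z) = (x - y + 1) • τ y (D x z) - τ x (D y z)) (v : ℂ) (ζ : V)
    (j : ℕ) (x : ℂ) :
    (x - v - j + 1) • D x (absTT τ v j ζ) = (x - v + 1) • absTT τ v j (D x ζ)
      - (j : ℂ) • τ x (absTT τ v (j - 1) (D (v + j - 1) ζ)) := by
  induction j generalizing x with
  | zero => simp [absTT]
  | succ j ih =>
    have h1 := hD x (v + j) (absTT τ v j ζ)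
    have h2 := congrArg (τ (v + j)) (ih x)
    have h3 := congrArg (τ x) (ih (v + j))
    simp only [map_sub, map_smul] at h2 h3
    simp only [absTT, LinearMap.comp_apply, Nat.add_sub_cancel]
    have h5 : ∀ w, τ x (τ (v + j) w) = τ (v + j) (τ x w) := fun w => hc _ _ _
    rw [h5] at h3
    have h6 : v + ((j + 1 : ℕ) : ℂ) - 1 = v + j := by push_cast; ring
    rw [h6]
    have e1 : x - v - ((j + 1 : ℕ) : ℂ) + 1 = x - (v + j) := by push_cast; ring
    rw [e1, h1]
    have e2 : x - (v + j) + 1 = x - v - j + 1 := by ring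
    have e3 : v + j - v - (j : ℂ) + 1 = 1 := by ring
    have e4 : v + j - v + 1 = ((j + 1 : ℕ) : ℂ) := by push_cast; ring
    rw [e3, one_smul, e4] at h3
    rw [e2, h2, h3]
    abel

theorem absTT_A (τ A : ℂ → (V →ₗ[ℂ] V)) 
    (hA : ∀ x z, A x (τ (x - 1) z) = τ x (A (x - 1) z)) (v : ℂ) (ζ : V) (j : ℕ) :
    A (v + j) (absTT τ v j ζ) = absTT τ (v + 1) j (A v ζ) := by
  induction j with
  | zero => simp [absTT]
  | succ j ih =>
    simp only [absTT, LinearMap.comp_apply]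
    have h := hA (v + ((j + 1 : ℕ) : ℂ)) (absTT τ v j ζ)
    have e : v + ((j + 1 : ℕ) : ℂ) - 1 = v + j := by push_cast; ring
    rw [e] at h
    rw [h, ih, show v + ((j + 1 : ℕ) : ℂ) = v + 1 + j by push_cast; ring]

theorem absTT_E (τ A D : ℂ → (V →ₗ[ℂ] V)) (E : V →ₗ[ℂ] V)
    (hc : ∀ x y z, τ x (τ y z) = τ y (τ x z))
    (hD : ∀ x y z, (x - y) • D x (τ y z) = (x - y + 1) • τ y (D x z) - τ x (D y z))
    (hA : ∀ x z, A x (τ (x - 1) z) = τ x (A (x - 1) z))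
    (hE : ∀ x z, E (τ x z) = τ x (E z) + A x z + D x z)
    (v : ℂ) (ζ : V) (hζ : E ζ = 0) (k : ℕ) :
    E (absTT τ v k ζ) = (k : ℂ) • (absTT τ (v + 1) (k - 1) (A v ζ)
      + absTT τ v (k - 1) (D (v + k - 1) ζ)) := by
  induction k with
  | zero => simp [absTT, hζ]
  | succ k ih =>
    rw [absTT, LinearMap.comp_apply, hE, ih, absTT_A τ A hA]
    have h := absTT_G τ D hc hD v ζ k (v + k)
    have e3 : v + k - v - (k : ℂ) + 1 = 1 := by ring
    have e4 : v + k - v + 1 = ((k + 1 : ℕ) : ℂ) := by push_cast; ring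
    rw [e3, one_smul, e4] at h
    rw [h]
    have e5 : v + ((k + 1 : ℕ) : ℂ) - 1 = v + k := by push_cast; ring
    rw [e5, Nat.add_sub_cancel, map_smul, map_add]
    rcases k with _ | k
    · simp
    · have e6 : τ (v + ((k + 1 : ℕ) : ℂ)) (absTT τ (v + 1) (k + 1 - 1) (A v ζ))
        = absTT τ (v + 1) (k + 1) (A v ζ) := by
        rw [Nat.add_sub_cancel, absTT, LinearMap.comp_apply,
          show v + ((k + 1 : ℕ) : ℂ) = v + 1 + k by push_cast; ring]
      rw [e6]
      push_cast
      module

end absLemma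

namespace FK
variable {n : ℕ} {V : Type*} [AddCommGroup V] [Module ℂ V]
  {T : ℕ → Fin n → Fin n → (V →ₗ[ℂ] V)} {W : Type*} [AddCommGroup W] [Module ℂ W]

theorem E_act_snoc (K : FK T W) (r : ℕ) (C : Fin r → Fin n) (b : Fin (r + 1) → Fin n) (k N : Fin n)
    (hN : ∀ s, C s ≠ N) (v : ℂ) (z : V) :
    T 1 k N (TqminorPoly T (r + 1) (Fin.snoc C N : Fin (r + 1) → Fin n) b v z)
      = TqminorPoly T (r + 1) (Fin.snoc C N : Fin (r + 1) → Fin n) b v (T 1 k N z)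
        + ((-1 : ℂ) ^ r) • TqminorPoly T (r + 1) (Fin.cons k C) b v z
        - ∑ i, if k = b i then TqminorPoly T (r + 1) (Fin.snoc C N : Fin (r + 1) → Fin n)
            (Function.update b i N) v z else 0 := by
  simp only [K.M_row, LinearMap.smul_apply, map_smul]
  rw [K.E_act r C b k N hN, smul_sub, smul_add, Finset.smul_sum]
  congr 1
  refine Finset.sum_congr rfl fun i _ => ?_
  split_ifs <;> simp

theorem D_rel (K : FK T W) (r : ℕ) (a b : Fin (r + 1) → Fin n) (s : Fin (r + 1)) (N : Fin n) (x y : ℂ) (z : V) :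
    (x - y) • TqminorPoly T (r + 1) a (Function.update b s N) x (TqminorPoly T (r + 1) a b y z)
      = (x - y + 1) • TqminorPoly T (r + 1) a b y (TqminorPoly T (r + 1) a (Function.update b s N) x z)
       - TqminorPoly T (r + 1) a b x (TqminorPoly T (r + 1) a (Function.update b s N) y z) := by
  have h := K.col_rel r a (s.removeNth b) (b s) N y x z
  simp only [K.M_col r a b s, K.M_col r a (Function.update b s N) s, Function.update_self, Fin.removeNth_update,
    LinearMap.smul_apply, map_smul]
  linear_combination (norm := module) ((-1 : ℂ) ^ (s : ℕ) * (-1 : ℂ) ^ (s : ℕ)) • h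

theorem A_rel (K : FK T W) (r : ℕ) (C : Fin r → Fin n) (b : Fin (r + 1) → Fin n) (i N : Fin n) (x : ℂ)
    (z : V) : TqminorPoly T (r + 1) (Fin.cons i C) b x
      (TqminorPoly T (r + 1) (Fin.snoc C N : Fin (r + 1) → Fin n) b (x - 1) z)
     = TqminorPoly T (r + 1) (Fin.snoc C N : Fin (r + 1) → Fin n) b x
      (TqminorPoly T (r + 1) (Fin.cons i C) b (x - 1) z) := by
  simp only [K.M_row, LinearMap.smul_apply, map_smul]
  rw [K.row_rel]

theorem M_col_last (K : FK T W) (r : ℕ) (a : Fin (r + 1) → Fin n) (B : Fin r → Fin n) (N : Fin n) (v : ℂ) :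
    TqminorPoly T (r + 1) a (Fin.snoc B N : Fin (r + 1) → Fin n) v
      = ((-1 : ℂ) ^ r) • TqminorPoly T (r + 1) a (Fin.cons N B) v := by
  rw [K.M_col r a _ (Fin.last r)]
  simp [Fin.removeNth_last]

/-- `E` acting on a product of lowering operators: generic form -/
theorem E_TT (K : FK T W) (m : ℕ) (C : Fin m → Fin n) (B : Fin (m + 1) → Fin n) (k N : Fin n)
    (hN : ∀ s, C s ≠ N) (D : ℂ → (V →ₗ[ℂ] V))
    (hD : (D = 0 ∧ ∀ s, k ≠ B s) ∨
      ∃ s, D = (fun x => - TqminorPoly T (m + 1) (Fin.snoc C N : Fin (m + 1) → Fin n) (Function.update B s N) x)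
        ∧ ∀ s', k = B s' ↔ s' = s)
    (v : ℂ) (ζ : V) (hζ : T 1 k N ζ = 0) (j : ℕ) :
    T 1 k N (absTT (TqminorPoly T (m + 1) (Fin.snoc C N : Fin (m + 1) → Fin n) B) v j ζ)
     = (j : ℂ) • (((-1 : ℂ) ^ m) • absTT (TqminorPoly T (m + 1) (Fin.snoc C N : Fin (m + 1) → Fin n) B) (v + 1) (j - 1)
       (TqminorPoly T (m + 1) (Fin.cons k C) B v ζ)
      + absTT (TqminorPoly T (m + 1) (Fin.snoc C N : Fin (m + 1) → Fin n) B) v (j - 1) (D (v + j - 1) ζ)) := by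
  have h := absTT_E (TqminorPoly T (m + 1) (Fin.snoc C N : Fin (m + 1) → Fin n) B)
    (fun x => ((-1 : ℂ) ^ m) • TqminorPoly T (m + 1) (Fin.cons k C) B x) D (T 1 k N)
    (fun x y z => K.comm_MM _ _ _ _ _ _ (fun i => ⟨i, rfl⟩) (fun i => ⟨i, rfl⟩) _ _ _) ?_ ?_ ?_ v ζ hζ j
  · rw [h]; simp
  · intro x y z
    rcases hD with ⟨rfl, _⟩ | ⟨s, rfl, _⟩
    · simp
    · have := K.D_rel m (Fin.snoc C N : Fin (m + 1) → Fin n) B s N x y z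
      simp only [LinearMap.neg_apply, map_neg, smul_neg]
      rw [this]; abel
  · intro x z
    simp only [LinearMap.smul_apply, map_smul]
    rw [K.A_rel]
  · intro x z
    rw [K.E_act_snoc m C B k N hN]
    simp only [LinearMap.smul_apply]
    rw [sub_eq_add_neg]
    congr 1
    rcases hD with ⟨rfl, hs⟩ | ⟨s, rfl, hs⟩
    · simp [hs]
    · simp [hs]

end FK

theorem M_idx_congr {n : ℕ} {V : Type*} [AddCommGroup V] [Module ℂ V]
    (T : ℕ → Fin n → Fin n → (V →ₗ[ℂ] V)) {p q : ℕ} (h : p = q) (o1 o2 : ℕ) (h1 : o1 + p ≤ n)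
    (h2 : o2 + p ≤ n) (v : ℂ) :
    TqminorPoly T p (idxSeq n o1 p h1) (idxSeq n o2 p h2) v
      = TqminorPoly T q (idxSeq n o1 q (h ▸ h1)) (idxSeq n o2 q (h ▸ h2)) v := by
  subst h; rfl

theorem idx_snoc (n o m : ℕ) (h : o + (m + 1) ≤ n) (hn : o + m = n - 1) :
    idxSeq n o (m + 1) h = (Fin.snoc (idxSeq n o m (by omega)) ⟨n - 1, by omega⟩ : Fin (m + 1) → Fin n) := by
  funext s
  refine Fin.lastCases ?_ (fun s => ?_) s
  · simp [idxSeq, hn]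
  · simp [idxSeq]

theorem idx_cons (n o m : ℕ) (h : o + (m + 1) ≤ n) (o' : ℕ) (ho : o + 1 = o') :
    idxSeq n o (m + 1) h = Fin.cons ⟨o, by omega⟩ (idxSeq n o' m (by omega)) := by
  subst ho
  funext s
  refine Fin.cases ?_ (fun s => ?_) s
  · simp [idxSeq]
  · simp [idxSeq]; omega

theorem absTT_comm {V : Type*} [AddCommGroup V] [Module ℂ V] (τ : ℂ → (V →ₗ[ℂ] V)) (F : V →ₗ[ℂ] V)
    (h : ∀ x z, F (τ x z) = τ x (F z)) (v : ℂ) (j : ℕ) (z : V) :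
    F (absTT τ v j z) = absTT τ v j (F z) := by
  induction j with
  | zero => rfl
  | succ j ih => simp only [absTT, LinearMap.comp_apply]; rw [h, ih]

theorem idx_strictMono (n o m : ℕ) (h : o + m ≤ n) : StrictMono (idxSeq n o m h) := by
  intro i j hij
  simp only [idxSeq, Fin.mk_lt_mk]
  have : (i : ℕ) < j := hij
  omega

theorem prod_shift (n i p : ℕ) (h : i + p = n) (f : Fin n → ℂ) :
    ∏ j ∈ Finset.filter (fun j : Fin n => i ≤ (j : ℕ)) Finset.univ, f j
      = ∏ s : Fin p, f ⟨i + s, by have := s.isLt; omega⟩ := by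
  symm
  refine Finset.prod_bij (fun s _ => ⟨i + s, by have := s.isLt; omega⟩) ?_ ?_ ?_ ?_
  · intro s _; simp
  · intro s _ s' _ hs
    simp only [Fin.mk.injEq] at hs
    apply Fin.ext; omega
  · intro j hj
    simp only [Finset.mem_filter, Finset.mem_univ, true_and] at hj
    have := j.isLt
    exact ⟨⟨j - i, by omega⟩, Finset.mem_univ _, by apply Fin.ext; simp; omega⟩
  · intro s _; rfl

/-- the minor occurring in part (ii), evaluated on the highest vector -/
theorem FK.part_ii {n : ℕ} {V : Type*} [AddCommGroup V] [Module ℂ V]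
    {T : ℕ → Fin n → Fin n → (V →ₗ[ℂ] V)} {W : Type*} [AddCommGroup W] [Module ℂ W] (K : FK T W)
    (lam mu : Fin n → ℂ) (ζ : V)
    (hupper : ∀ u : ℂ, ∀ i j : Fin n, i < j → Tpoly T i j u ζ = 0)
    (hdiag : ∀ u : ℂ, ∀ i : Fin n, Tpoly T i i u ζ = ((u + lam i) * (u + mu i)) • ζ)
    (a q p : ℕ) (ha : 1 ≤ a) (hn : a + q + (p + 1) = n) (w : ℂ) :
    TqminorPoly T (q + p + 1) (idxSeq n a (q + p + 1) (by omega))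
      (Function.update (idxSeq n (a - 1) (q + p + 1) (by omega)) ⟨q, by omega⟩ ⟨n - 1, by omega⟩) w ζ
     = ((-1 : ℂ) ^ p * ∏ j ∈ Finset.filter (fun j : Fin n => a + q ≤ (j : ℕ)) Finset.univ,
                ((w + (a : ℂ) + (lam j - ((j : ℕ) : ℂ))) * (w + (a : ℂ) + (mu j - ((j : ℕ) : ℂ))))) •
       TqminorPoly T q (idxSeq n a q (by omega)) (idxSeq n (a - 1) q (by omega)) w ζ := by
  have h1 := K.M_col (q + p) (idxSeq n a (q + p + 1) (by omega)) (Function.update (idxSeq n (a - 1) (q + p + 1) (by omega))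
    ⟨q, by omega⟩ ⟨n - 1, by omega⟩) ⟨q, by omega⟩ w
  rw [Function.update_self, Fin.removeNth_update] at h1
  have h2 := K.M_col_last (q + p) (idxSeq n a (q + p + 1) (by omega))
    ((⟨q, by omega⟩ : Fin (q + p + 1)).removeNth (idxSeq n (a - 1) (q + p + 1) (by omega))) ⟨n - 1, by omega⟩ w
  have h3 : TqminorPoly T (q + p + 1) (idxSeq n a (q + p + 1) (by omega))
      (Function.update (idxSeq n (a - 1) (q + p + 1) (by omega)) ⟨q, by omega⟩ ⟨n - 1, by omega⟩) w
      = ((-1 : ℂ) ^ p) • TqminorPoly T (q + p + 1) (idxSeq n a (q + p + 1) (by omega))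
      (Fin.snoc ((⟨q, by omega⟩ : Fin (q + p + 1)).removeNth (idxSeq n (a - 1) (q + p + 1) (by omega)))
        ⟨n - 1, by omega⟩ : Fin (q + p + 1) → Fin n) w := by
    rw [h1, h2, smul_smul]
    congr 1
    rw [← pow_add, show p + (q + p) = q + 2 * p by ring, pow_add, pow_mul]
    simp
  rw [h3, LinearMap.smul_apply, mul_smul]
  congr 1
  have h4 := K.peel_many q (p + 1) (idxSeq n a (q + p + 1) (by omega))
    (Fin.snoc ((⟨q, by omega⟩ : Fin (q + p + 1)).removeNth (idxSeq n (a - 1) (q + p + 1) (by omega)))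
        ⟨n - 1, by omega⟩ : Fin (q + p + 1) → Fin n) (idx_strictMono _ _ _ _) (by
      intro s
      refine Fin.lastCases ?_ (fun s => ?_) s
      · have : Fin.natAdd q (Fin.last p) = Fin.last (q + p) := rfl
        rw [this, Fin.snoc_last]
        apply Fin.ext
        simp [idxSeq]
        omega
      · have : Fin.natAdd q (Fin.castSucc s) = Fin.castSucc (Fin.natAdd q s) := rfl
        rw [this, Fin.snoc_castSucc]
        apply Fin.ext
        have : (⟨q, by omega⟩ : Fin (q + p + 1)).succAbove (Fin.natAdd q s) = (Fin.natAdd q s).succ := by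
          apply Fin.succAbove_of_le_castSucc
          simp [Fin.le_def]
        simp only [Fin.removeNth]
        rw [this]
        simp [idxSeq]
        omega) w lam mu ζ hupper hdiag
  refine h4.trans ?_
  rw [prod_shift n (a + q) (p + 1) hn]
  congr 1
  · refine Finset.prod_congr rfl fun s _ => ?_
    have e : idxSeq n a (q + p + 1) (by omega) (Fin.natAdd q s) = ⟨a + q + s, by have := s.isLt; omega⟩ := by
      apply Fin.ext
      simp [idxSeq]
      omega
    rw [e]
    push_cast
    ring
  · congr 1
    congr 1
    funext s
    have : Fin.castAdd (p + 1) s = Fin.castSucc (Fin.castAdd p s) := rfl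
    rw [this, Fin.snoc_castSucc]
    have : (⟨q, by omega⟩ : Fin (q + p + 1)).succAbove (Fin.castAdd p s) = (Fin.castAdd p s).castSucc := by
      apply Fin.succAbove_of_castSucc_lt
      simp [Fin.lt_def]
    simp only [Fin.removeNth]
    rw [this]
    rfl
/-- Let `ζ` satisfy `T_{ij}(u)ζ = 0` for `i < j` and
`T_{ii}(u)ζ = (u+λ_i)(u+μ_i)ζ`; set `l_j = λ_j − j + 1`, `m_j = μ_j − j + 1`
and `E_{in} := T^{(1)}_{in}`.  Then, for every `k ≥ 1`, `v ∈ ℂ` and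
`1 ≤ a ≤ n−1` (indices `a`, `i` as in the paper, i.e. running over `1, …, n`):
(i) `E_{in} 𝒯_{na}(v,k)ζ = 0` for `i < a`;
(ii) for `a < i ≤ n−1`,
`E_{in} 𝒯_{na}(v,k)ζ = (−1)^{n−i} k Π_{j=i+1}^n (v'+l_j)(v'+m_j) ·
τ_{ia}(v+k−1) 𝒯_{na}(v,k−1)ζ` with `v' = v+a+k−1`;
(iii) `E_{an} 𝒯_{na}(v,k)ζ = (−1)^{n−a−1} k (𝒯_{na}(v+1,k−1) T^{a⋯n−1}_{a⋯n−1}(v)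
  − 𝒯_{na}(v,k−1) T^{a+1⋯n}_{a+1⋯n}(v+k−1)) ζ`. -/
theorem lowering_operator_action_on_highest
    (n : ℕ) {V : Type*} [AddCommGroup V] [Module ℂ V]
    (T : ℕ → Fin n → Fin n → (V →ₗ[ℂ] V)) (hT : IsYangianRep n T)
    (hvan : ∀ r : ℕ, 3 ≤ r → ∀ i j : Fin n, T r i j = 0)
    (lam mu : Fin n → ℂ) (ζ : V)
    (hupper : ∀ u : ℂ, ∀ i j : Fin n, i < j → Tpoly T i j u ζ = 0)
    (hdiag : ∀ u : ℂ, ∀ i : Fin n, Tpoly T i i u ζ = ((u + lam i) * (u + mu i)) • ζ)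
    (k : ℕ) (hk : 1 ≤ k) (v : ℂ) (a : ℕ) (ha1 : 1 ≤ a) (ha2 : a ≤ n - 1) :
    (∀ i : ℕ, ∀ hi1 : 1 ≤ i, ∀ hia : i < a,
      T 1 ⟨i - 1, by omega⟩ ⟨n - 1, by omega⟩
        (TTPoly T n a ha1 (by omega) (by omega) v k ζ) = 0) ∧
    (∀ i : ℕ, ∀ hia : a < i, ∀ hin : i ≤ n - 1,
      T 1 ⟨i - 1, by omega⟩ ⟨n - 1, by omega⟩
          (TTPoly T n a ha1 (by omega) (by omega) v k ζ)
        = ((-1 : ℂ) ^ (n - i) * (k : ℂ) *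
              ∏ j ∈ Finset.filter (fun j : Fin n => i ≤ (j : ℕ)) Finset.univ,
                ((v + (a : ℂ) + (k : ℂ) - 1 + (lam j - ((j : ℕ) : ℂ))) *
                  (v + (a : ℂ) + (k : ℂ) - 1 + (mu j - ((j : ℕ) : ℂ)))))
            • tauPoly T i a ha1 hia (by omega) (v + (k : ℂ) - 1)
                (TTPoly T n a ha1 (by omega) (by omega) v (k - 1) ζ)) ∧
    (T 1 ⟨a - 1, by omega⟩ ⟨n - 1, by omega⟩
        (TTPoly T n a ha1 (by omega) (by omega) v k ζ)
      = ((-1 : ℂ) ^ (n - a - 1) * (k : ℂ)) •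
          (TTPoly T n a ha1 (by omega) (by omega) (v + 1) (k - 1)
              (TqminorPoly T (n - a) (idxSeq n (a - 1) (n - a) (by omega))
                (idxSeq n (a - 1) (n - a) (by omega)) v ζ)
            - TTPoly T n a ha1 (by omega) (by omega) v (k - 1)
              (TqminorPoly T (n - a) (idxSeq n a (n - a) (by omega))
                (idxSeq n a (n - a) (by omega)) (v + (k : ℂ) - 1) ζ))) := by
  have K := fock T hT hvan
  obtain ⟨m, hm⟩ : ∃ m, n - a = m + 1 := ⟨n - a - 1, by omega⟩
  set N : Fin n := ⟨n - 1, by omega⟩ with hNdef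
  set C : Fin m → Fin n := idxSeq n a m (by omega) with hC
  set B : Fin (m + 1) → Fin n := idxSeq n (a - 1) (m + 1) (by omega) with hB
  have hA : idxSeq n a (m + 1) (by omega) = (Fin.snoc C N : Fin (m + 1) → Fin n) :=
    idx_snoc n a m (by omega) (by omega)
  have hBc : B = Fin.cons ⟨a - 1, by omega⟩ C := idx_cons n (a - 1) m (by omega) a (by omega)
  have htau : ∀ v, tauPoly T n a ha1 (by omega) (by omega) v
      = TqminorPoly T (m + 1) (Fin.snoc C N : Fin (m + 1) → Fin n) B v := by
    intro v
    rw [tauPoly, M_idx_congr T hm, hA]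
  have hTT : ∀ v k, TTPoly T n a ha1 (by omega) (by omega) v k
      = absTT (TqminorPoly T (m + 1) (Fin.snoc C N : Fin (m + 1) → Fin n) B) v k := by
    intro v k
    induction k with
    | zero => rfl
    | succ k ih => rw [TTPoly, absTT, ih, htau]
  have hCN : ∀ s, C s ≠ N := by
    intro s h
    have := congrArg Fin.val h
    have := s.isLt
    simp [hC, hNdef, idxSeq] at *
    omega
  have hE0 : ∀ i : Fin n, i < N → T 1 i N ζ = 0 := by
    intro i hi
    have h1 := hupper 1 i N hi
    have h0 := hupper 0 i N hi
    simp only [Tpoly, if_neg hi.ne, LinearMap.add_apply, LinearMap.smul_apply, smul_zero,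
      LinearMap.zero_apply, one_smul, zero_smul, zero_add] at h1 h0
    rwa [h0, add_zero] at h1
  refine ⟨?_, ?_, ?_⟩
  · intro i hi1 hia
    rw [hTT, K.E_TT m C B _ N hCN 0 (Or.inl ⟨rfl, ?_⟩) v ζ (hE0 _ ?_) k]
    · have : TqminorPoly T (m + 1) (Fin.cons ⟨i - 1, by omega⟩ C) B v ζ = 0 := by
        rw [hBc]
        have hz : TqminorPoly T (1 + m) (fun s => (Fin.cons ⟨i - 1, by omega⟩ C : Fin (m + 1) → Fin n) (Fin.cast (by omega) s))
          (fun s => (Fin.cons ⟨a - 1, by omega⟩ C : Fin (m + 1) → Fin n) (Fin.cast (by omega) s)) v ζ = 0 := by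
          rw [K.peel_many 1 m _ _ ?_ ?_ v lam mu ζ hupper hdiag]
          · rw [Tq_lap]
            simp only [LinearMap.sum_apply, LinearMap.smul_apply, LinearMap.comp_apply]
            simp [TqminorPoly]
            right
            apply hupper
            change (Fin.cons _ C : Fin (m + 1) → Fin n) 0 < (Fin.cons _ C : Fin (m + 1) → Fin n) 0
            simp
            omega
          · have hmono : StrictMono (Fin.cons ⟨i - 1, by omega⟩ C : Fin (m + 1) → Fin n) := by
              intro s s' hs
              have hs' : (s : ℕ) < s' := hs
              obtain ⟨t', rfl⟩ := Fin.exists_succ_eq.mpr (show s' ≠ 0 by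
                intro h; rw [h] at hs'; simp at hs')
              rcases Fin.eq_zero_or_eq_succ s with rfl | ⟨t, rfl⟩
              · simp only [Fin.cons_zero, Fin.cons_succ, hC, idxSeq, Fin.mk_lt_mk]
                omega
              · simp only [Fin.val_succ] at hs'
                simp only [Fin.cons_succ, hC, idxSeq, Fin.mk_lt_mk]
                omega
            intro s s' hs
            exact hmono (by simpa using hs)
          · intro s
            have : Fin.cast (by omega) (Fin.natAdd 1 s) = (Fin.succ s : Fin (m + 1)) := by
              apply Fin.ext; simp [add_comm]
            simp only [this, Fin.cons_succ]
        have hgen : ∀ (p q : ℕ) (h : p = q) (a b : Fin q → Fin n),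
            TqminorPoly T p (fun s => a (Fin.cast h s)) (fun s => b (Fin.cast h s)) v
            = TqminorPoly T q a b v := by
          intro p q h a b; subst h; rfl
        rw [hgen _ _ (by omega)] at hz
        exact hz
      rw [this]
      simp
    · intro s h
      have := congrArg Fin.val h
      simp [hB, idxSeq] at this
      omega
    · simp [hNdef]; omega
  · intro i hia hin
    obtain ⟨q, rfl⟩ : ∃ q, i = a + q := ⟨i - a, by omega⟩
    obtain ⟨p, hp⟩ : ∃ p, n = a + q + (p + 1) := ⟨n - (a + q) - 1, by omega⟩
    obtain rfl : m = q + p := by omega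
    have hq : q < q + p + 1 := by omega
    rw [hTT, hTT, K.E_TT (q + p) C B _ N hCN _ (Or.inr ⟨⟨q, hq⟩, rfl, ?_⟩) v ζ (hE0 _ ?_) k]
    · have h0 : (⟨a + q - 1, by omega⟩ : Fin n) = C ⟨q - 1, by omega⟩ := by
        apply Fin.ext
        simp [hC, idxSeq]
        omega
      rw [h0, K.M_rep_row, map_zero, smul_zero, zero_add]
      have h2 := K.part_ii lam mu ζ hupper hdiag a q p ha1 hp.symm (v + k - 1)
      rw [hA] at h2
      rw [LinearMap.neg_apply, h2, tauPoly, M_idx_congr T (show a + q - a = q by omega), absTT_comm]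
      · rw [map_neg, map_smul, smul_neg, smul_smul, ← neg_smul]
        congr 1
        have e : n - (a + q) = p + 1 := by omega
        rw [e, pow_succ]
        have e2 : v + (k : ℂ) - 1 + a = v + a + k - 1 := by ring
        rw [e2]
        ring
      · intro x z
        symm
        apply K.comm_MM
        · intro s
          rw [← hA]
          exact ⟨Fin.castLE (by omega) s, rfl⟩
        · intro s
          exact ⟨Fin.castLE (by omega) s, rfl⟩
    · intro s'
      simp only [hB, idxSeq, Fin.ext_iff]
      omega
    · simp [hNdef, Fin.lt_def]; omega
  · rw [hTT, hTT, hTT, K.E_TT m C B _ N hCN _ (Or.inr ⟨0, rfl, ?_⟩) v ζ (hE0 _ ?_) k]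
    · rw [M_idx_congr T hm, M_idx_congr T hm, hA, K.M_col_last]
      have h1 : Function.update B 0 N = Fin.cons N C := by
        rw [hBc, Fin.update_cons_zero]
      rw [h1, ← hBc]
      have e : n - a - 1 = m := by omega
      rw [e]
      simp only [LinearMap.neg_apply, LinearMap.smul_apply, map_neg, map_smul]
      have hs : ((-1 : ℂ) ^ m) * ((-1 : ℂ) ^ m) = 1 := by
        rw [← mul_pow]; simp
      rw [smul_sub, smul_smul, mul_right_comm, hs]
      module
    · intro s'
      simp only [hB, idxSeq, Fin.ext_iff]
      simp
    · simp [hNdef, Fin.lt_def]; omega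
end
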